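/- Let G = ⟨a, b; [a,b]ⁿ⟩ with n > 1. Then every automorphism of the free group F(a,b) induces an automorphism of G, and Out(G) ≅ Out(F(a,b)) ≅ GL(2,ℤ). -/

import Mathlib

def innAut (G : Type*) [Group G] : Subgroup (MulAut G) := (MulAut.conj : G →* MulAut G).range

instance innAut_normal (G : Type*) [Group G] : (innAut G).Normal := by
  constructor
  rintro x ⟨g, rfl⟩ f
  refine ⟨f g, ?_⟩
  ext h
  simp [MulAut.conj_apply, MulAut.mul_apply, mul_assoc]

abbrev Out (G : Type*) [Group G] := MulAut G ⧸ innAut G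

def ResiduallyFinite (G : Type*) [Group G] : Prop :=
  ∀ g : G, g ≠ 1 → ∃ N : Subgroup G, N.Normal ∧ Finite (G ⧸ N) ∧ g ∉ N

noncomputable def expSum (i : Fin 2) : FreeGroup (Fin 2) →* Multiplicative ℤ :=
  FreeGroup.lift (fun j => Multiplicative.ofAdd (if j = i then (1 : ℤ) else 0))

noncomputable def σ (i : Fin 2) (w : FreeGroup (Fin 2)) : ℤ :=
  Multiplicative.toAdd (expSum i w)

def NielsenEquiv {G : Type*} [Group G] {n : ℕ} (Y Z : Fin n → G) : Prop :=
  ∃ φ : FreeGroup (Fin n) ≃* FreeGroup (Fin n),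
    ∀ i, FreeGroup.lift Y (φ (FreeGroup.of i)) = Z i

def SameTSystem {G : Type*} [Group G] {n : ℕ} (Y Z : Fin n → G) : Prop :=
  ∃ ψ : G ≃* G, NielsenEquiv (fun i => ψ (Y i)) Z

namespace TorusGroup

open Matrix

section PingPong

/-- `β` if the sign is `true`, and `β⁻¹` otherwise. -/
def letter {Γ : Type*} [Group Γ] (β : Γ) (ε : Bool) : Γ := if ε then β else β⁻¹

/-- The coordinate expanded by `dil τ ε`. -/
def ix (ε : Bool) : Fin 2 := if ε then 0 else 1

/-- The diagonal matrix `diag(τ, τ⁻¹)` or its inverse, according to the sign. -/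
def dil {K : Type*} [Field K] (τ : K) (ε : Bool) : Matrix (Fin 2) (Fin 2) K :=
  if ε then !![τ, 0; 0, τ⁻¹] else !![τ⁻¹, 0; 0, τ]

/-- The underlying matrix, as a monoid homomorphism. -/
def mat {K : Type*} [Field K] :
    Matrix.SpecialLinearGroup (Fin 2) K →* Matrix (Fin 2) (Fin 2) K where
  toFun M := M
  map_one' := Matrix.SpecialLinearGroup.coe_one
  map_mul' := Matrix.SpecialLinearGroup.coe_mul

lemma mat_inj {K : Type*} [Field K] {M N : Matrix.SpecialLinearGroup (Fin 2) K} :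
    mat M = mat N ↔ M = N := Subtype.ext_iff.symm

lemma mat_inv {K : Type*} [Field K] (M : Matrix.SpecialLinearGroup (Fin 2) K) :
    mat M⁻¹ = !![mat M 1 1, -mat M 0 1; -mat M 1 0, mat M 0 0] := by
  rw [← adjugate_fin_two]
  exact Matrix.SpecialLinearGroup.coe_inv M

lemma mat_det {K : Type*} [Field K] (M : Matrix.SpecialLinearGroup (Fin 2) K) :
    mat M 0 0 * mat M 1 1 - mat M 0 1 * mat M 1 0 = 1 := by
  rw [← det_fin_two]
  exact M.2

lemma letter_not {Γ : Type*} [Group Γ] (β : Γ) (ε : Bool) : letter β (!ε) = (letter β ε)⁻¹ := by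
  cases ε <;> simp [letter]

lemma eq_ix_or (ε : Bool) (i : Fin 2) : i = ix ε ∨ i = ix (!ε) := by
  cases ε <;> fin_cases i <;> simp [ix]

lemma dil_mul_ix {K : Type*} [Field K] (τ : K) (ε : Bool) (M : Matrix (Fin 2) (Fin 2) K)
    (j : Fin 2) : (dil τ ε * M) (ix ε) j = τ * M (ix ε) j := by
  cases ε <;> simp [ix, dil, Matrix.mul_apply]

lemma dil_mul_ix_not {K : Type*} [Field K] (τ : K) (ε : Bool) (M : Matrix (Fin 2) (Fin 2) K)
    (j : Fin 2) : (dil τ ε * M) (ix (!ε)) j = τ⁻¹ * M (ix (!ε)) j := by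
  cases ε <;> simp [ix, dil, Matrix.mul_apply]

lemma mul_apply_ix {K : Type*} [Field K] (ε : Bool) (M N : Matrix (Fin 2) (Fin 2) K)
    (i j : Fin 2) :
    (M * N) i j = M i (ix ε) * N (ix ε) j + M i (ix (!ε)) * N (ix (!ε)) j := by
  cases ε <;> simp [ix, Matrix.mul_apply, add_comm]

lemma trace_eq_ix {K : Type*} [Field K] (ε : Bool) (M : Matrix (Fin 2) (Fin 2) K) :
    M.trace = M (ix ε) (ix ε) + M (ix (!ε)) (ix (!ε)) := by
  cases ε <;> simp [ix, Matrix.trace_fin_two, add_comm]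

variable {Γ K Γ₀ : Type*} [Group Γ] [Field K] [LinearOrderedCommGroupWithZero Γ₀]

/-- All entries of `M` have valuation at most `r`. -/
def Bounded (v : Valuation K Γ₀) (r : Γ₀) (M : Matrix (Fin 2) (Fin 2) K) : Prop :=
  ∀ i j, v (M i j) ≤ r

lemma Bounded.mul {v : Valuation K Γ₀} {r s : Γ₀} {M N : Matrix (Fin 2) (Fin 2) K}
    (hM : Bounded v r M) (hN : Bounded v s N) : Bounded v (r * s) (M * N) := by
  intro i j
  rw [mul_apply_ix true]
  refine (v.map_add _ _).trans (max_le ?_ ?_) <;> rw [map_mul] <;>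
    exact mul_le_mul' (hM _ _) (hN _ _)

lemma Bounded.inv {v : Valuation K Γ₀} {r : Γ₀} {M : Matrix.SpecialLinearGroup (Fin 2) K}
    (hM : Bounded v r (mat M)) : Bounded v r (mat (M⁻¹)) := by
  intro i j
  rw [mat_inv]
  fin_cases i <;> fin_cases j <;> simp [hM _ _]

/-- The data for a ping-pong argument with vertex group `V`, edge groups `E ε` and stable
letter `β` on the valued field `K`: the stable letter expands by `τ`, up to the integral changes
of frame `P` and `P'`, and the vertex group is integral. -/
structure PingPong (v : Valuation K Γ₀) (ρ : Γ →* Matrix.SpecialLinearGroup (Fin 2) K)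
    (V : Subgroup Γ) (E : Bool → Subgroup Γ) (β : Γ) (τ : K)
    (P P' : Bool → Matrix.SpecialLinearGroup (Fin 2) K) :
    Prop where
  one_lt : 1 < v τ
  edge_le : ∀ ε, E ε ≤ V
  edge_conj : ∀ ε, ∀ e ∈ E ε, letter β (!ε) * e * letter β ε ∈ E (!ε)
  closure_eq : Subgroup.closure (V ∪ {β} : Set Γ) = ⊤
  bounded_vertex : ∀ h ∈ V, Bounded v 1 (mat (ρ h))
  bounded_left : ∀ ε, Bounded v 1 (mat (P ε))
  bounded_right : ∀ ε, Bounded v 1 (mat (P' ε))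
  letter_eq : ∀ ε, (mat (P ε)) * (mat (ρ (letter β ε))) = dil τ ε * (mat (P' ε))
  unit : ∀ ε ε', ∀ h ∈ V, ¬(ε' = !ε ∧ h ∈ E ε') →
    v ((mat (P' ε * ρ h * (P ε')⁻¹)) (ix ε) (ix ε')) = 1

/-- `Red V E β ε g ε' m`: `g` is a reduced word with `m` stable letters, the first of sign `ε`,
which stays reduced when followed by a stable letter of sign `ε'`. -/
inductive Red (V : Subgroup Γ) (E : Bool → Subgroup Γ) (β : Γ) : Bool → Γ → Bool → ℕ → Prop
  | nil (ε) : Red V E β ε 1 ε 0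
  | cons {ε ε' ε'' : Bool} {h g : Γ} {m : ℕ} (hV : h ∈ V) (hE : ¬(ε' = !ε ∧ h ∈ E ε'))
      (hg : Red V E β ε' g ε'' m) : Red V E β ε (letter β ε * h * g) ε'' (m + 1)

variable {V : Subgroup Γ} {E : Bool → Subgroup Γ} {β : Γ}

lemma Red.single {ε ε' : Bool} {h : Γ} (hV : h ∈ V) (hE : ¬(ε' = !ε ∧ h ∈ E ε')) :
    Red V E β ε (letter β ε * h) ε' 1 := by
  simpa using Red.cons hV hE (Red.nil ε')

lemma Red.mul {ε ε' ε'' : Bool} {g g' : Γ} {m m' : ℕ} (hg : Red V E β ε g ε' m)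
    (hg' : Red V E β ε' g' ε'' m') : Red V E β ε (g * g') ε'' (m + m') := by
  induction hg with
  | nil => simpa using hg'
  | cons hV hE _ ih =>
    have := Red.cons hV hE (ih hg')
    rw [mul_assoc, add_right_comm]
    exact this

lemma Red.inv {ε ε' : Bool} {g : Γ} {m : ℕ} (hg : Red V E β ε g ε' m) :
    Red V E β (!ε') (letter β (!ε') * g⁻¹ * letter β ε) (!ε) m := by
  induction hg with
  | nil ε =>
    rw [letter_not]
    simpa using Red.nil (!ε)
  | @cons ε ε' ε'' h g m hV hE _ ih =>
    have h1 : Red V E β (!ε') (letter β (!ε') * h⁻¹) (!ε) 1 := by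
      refine Red.single (inv_mem hV) fun hh => hE ?_
      rw [inv_mem_iff] at hh
      obtain ⟨h1, h2⟩ := hh
      have : ε' = !ε := by revert h1; cases ε <;> cases ε' <;> simp
      subst this
      exact ⟨rfl, h2⟩
    convert ih.mul h1 using 1
    simp only [letter_not]
    group

lemma Red.unroll {ε ε' : Bool} {g : Γ} {m : ℕ} (hg : Red V E β ε g ε' (m + 1)) :
    ∃ δ g' h, g = g' * (letter β δ * h) ∧ Red V E β ε g' δ m ∧ h ∈ V ∧
      ¬(ε' = !δ ∧ h ∈ E ε') := by
  generalize hk : m + 1 = k at hg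
  induction hg generalizing m with
  | nil => omega
  | @cons ε ε' ε'' h g k hV hE hg ih =>
    obtain rfl : m = k := by omega
    rcases m with - | m
    · cases hg
      exact ⟨ε, 1, h, by simp, Red.nil _, hV, hE⟩
    · obtain ⟨δ, g', h', rfl, h1, h2, h3⟩ := ih rfl
      exact ⟨δ, letter β ε * h * g', h', by simp only [mul_assoc], Red.cons hV hE h1, h2, h3⟩

namespace PingPong

variable {v : Valuation K Γ₀} {ρ : Γ →* Matrix.SpecialLinearGroup (Fin 2) K} {τ : K}
  {P P' : Bool → Matrix.SpecialLinearGroup (Fin 2) K}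

lemma inv_lt (H : PingPong v ρ V E β τ P P') : v τ⁻¹ < 1 := by
  rw [map_inv₀]
  exact inv_lt_one_of_one_lt₀ H.one_lt

lemma frame_cons (H : PingPong v ρ V E β τ P P') (ε ε' ε'' : Bool) (h g : Γ) :
    (mat (P ε * ρ (letter β ε * h * g) * (P ε'')⁻¹)) =
      dil τ ε * ((mat (P' ε * ρ h * (P ε')⁻¹)) * (mat (P ε' * ρ g * (P ε'')⁻¹))) := by
  rw [← map_mul, show P' ε * ρ h * (P ε')⁻¹ * (P ε' * ρ g * (P ε'')⁻¹) =
    P' ε * (ρ h * ρ g * (P ε'')⁻¹) by group, map_mul mat (P' ε), ← mul_assoc,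
    ← H.letter_eq]
  simp only [map_mul, map_mul, mul_assoc]

lemma growth (H : PingPong v ρ V E β τ P P') {ε ε' : Bool} {g : Γ} {m : ℕ}
    (hg : Red V E β ε g ε' m) :
    v ((mat (P ε * ρ g * (P ε')⁻¹)) (ix ε) (ix ε')) = v τ ^ m ∧
    v ((mat (P ε * ρ g * (P ε')⁻¹)) (ix (!ε)) (ix ε')) < v τ ^ m ∧
    Bounded v (v τ ^ m) (mat (P ε * ρ g * (P ε')⁻¹)) ∧
    (0 < m → ∀ j, v ((mat (P ε * ρ g * (P ε')⁻¹)) (ix (!ε)) j) < v τ ^ m) := by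
  have hτ := H.one_lt
  induction hg with
  | nil ε =>
    have : P ε * ρ 1 * (P ε)⁻¹ = 1 := by simp
    rw [this]
    refine ⟨?_, ?_, ?_, by simp⟩
    · simp
    · cases ε <;> simp [ix]
    · intro i j
      fin_cases i <;> fin_cases j <;> simp
  | @cons ε ε' ε'' h g m hV hE hg ih =>
    obtain ⟨i1, i2, i3, -⟩ := ih
    rw [H.frame_cons ε ε' ε'']
    have hM : Bounded v 1 (mat (P' ε * ρ h * (P ε')⁻¹)) := by
      have := ((H.bounded_right ε).mul (H.bounded_vertex h hV)).mul (H.bounded_left ε').inv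
      simpa using this
    have hu := H.unit ε ε' h hV hE
    generalize (mat (P' ε * ρ h * (P ε')⁻¹)) = M at *
    generalize (mat (P ε' * ρ g * (P ε'')⁻¹)) = G at *
    have hMG : Bounded v (v τ ^ m) (M * G) := by simpa using hM.mul i3
    have key : ∀ j, v ((dil τ ε * (M * G)) (ix (!ε)) j) < v τ ^ (m + 1) := by
      intro j
      rw [dil_mul_ix_not, map_mul]
      have h0 : 0 < v τ ^ m := pow_pos (zero_lt_one.trans hτ) m
      calc v τ⁻¹ * v ((M * G) (ix (!ε)) j) ≤ 1 * v τ ^ m := mul_le_mul' H.inv_lt.le (hMG _ _)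
        _ < v τ ^ (m + 1) := by
          rw [one_mul]
          exact pow_lt_pow_right₀ hτ (Nat.lt_succ_self m)
    refine ⟨?_, key _, ?_, fun _ => key⟩
    · rw [dil_mul_ix, map_mul, mul_apply_ix ε', v.map_add_eq_of_lt_left, map_mul, hu, one_mul, i1,
        pow_succ']
      rw [map_mul, map_mul, hu, one_mul, i1]
      exact (mul_le_mul' (hM _ _) le_rfl).trans_lt (by rwa [one_mul])
    · intro i j
      rcases eq_ix_or ε i with rfl | rfl
      · rw [dil_mul_ix, map_mul, pow_succ']
        exact mul_le_mul' le_rfl (hMG _ _)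
      · exact (key j).le

lemma trace_eq (H : PingPong v ρ V E β τ P P') {ε : Bool} {g : Γ} {m : ℕ}
    (hg : Red V E β ε g ε m) (hm : 0 < m) : v (mat (ρ g)).trace = v τ ^ m := by
  obtain ⟨h1, -, -, h4⟩ := H.growth hg
  have : (mat (ρ g)).trace = (mat (P ε * ρ g * (P ε)⁻¹)).trace := by
    rw [map_mul, trace_mul_comm, ← map_mul]
    simp [← mul_assoc]
  rw [this, trace_eq_ix ε, v.map_add_eq_of_lt_left, h1]
  rw [h1]
  exact h4 hm _

lemma frame_letter (H : PingPong v ρ V E β τ P P') (ε : Bool) :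
    Bounded v (v τ) (mat (ρ (letter β ε))) := by
  have h1 : (mat (ρ (letter β ε))) = (mat ((P ε)⁻¹)) * (dil τ ε * (mat (P' ε))) := by
    rw [← H.letter_eq, ← mul_assoc, ← map_mul]
    simp
  have h2 : Bounded v (v τ) (dil τ ε) := by
    have := H.inv_lt.le.trans H.one_lt.le
    intro i j
    cases ε <;> fin_cases i <;> fin_cases j <;> simp [dil] <;> simpa using this
  rw [h1]
  simpa using (H.bounded_left ε).inv.mul (h2.mul (H.bounded_right ε))

/-- A reduced word is at least as large as its number of stable letters. -/
lemma pow_le (H : PingPong v ρ V E β τ P P') {ε ε' : Bool} {g : Γ} {m : ℕ} {r : Γ₀}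
    (hg : Red V E β ε g ε' m) (hr : Bounded v r (mat (ρ g))) : v τ ^ m ≤ r := by
  obtain ⟨h1, -⟩ := H.growth hg
  rw [← h1]
  have := ((H.bounded_left ε).mul hr).mul (H.bounded_left ε').inv
  simpa using this (ix ε) (ix ε')

lemma conj_edge (H : PingPong v ρ V E β τ P P') {ε : Bool} {e : Γ} (he : e ∈ E ε) :
    letter β (!ε) * e * letter β ε ∈ V := H.edge_le _ (H.edge_conj ε e he)

lemma exists_red (H : PingPong v ρ V E β τ P P') (g : Γ) :
    ∃ h ∈ V, ∃ ε g' ε' m, Red V E β ε g' ε' m ∧ g = h * g' := by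
  have hl : ∀ δ : Bool, ∀ g : Γ, (∃ h ∈ V, ∃ ε g' ε' m, Red V E β ε g' ε' m ∧ g = h * g') →
      ∃ h ∈ V, ∃ ε g' ε' m, Red V E β ε g' ε' m ∧ letter β δ * g = h * g' := by
    rintro δ _ ⟨h, hh, ε, g', ε', m, hr, rfl⟩
    by_cases hp : ε = !δ ∧ h ∈ E ε
    · obtain ⟨rfl, he⟩ := hp
      cases hr with
      | nil => exact ⟨1, one_mem _, δ, _, δ, _, Red.single hh (by simp), by simp⟩
      | @cons _ ε1 _ h1 g1 m hV hE hr =>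
        refine ⟨_, mul_mem (H.conj_edge he) hV, _, _, _, _, hr, ?_⟩
        simp only [mul_assoc, Bool.not_not]
    · exact ⟨1, one_mem _, _, _, _, _, Red.cons hh hp hr, by simp [mul_assoc]⟩
  have hg : g ∈ Subgroup.closure (V ∪ {β} : Set Γ) := by rw [H.closure_eq]; trivial
  induction hg using Subgroup.closure_induction_left with
  | one => exact ⟨1, one_mem _, true, 1, true, 0, Red.nil _, by simp⟩
  | mul_left x hx y _ ih =>
    rcases hx with hx | rfl
    · obtain ⟨h, hh, ε, g', ε', m, hr, rfl⟩ := ih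
      exact ⟨x * h, mul_mem hx hh, ε, g', ε', m, hr, by rw [mul_assoc]⟩
    · exact hl true y ih
  | inv_mul_cancel x hx y _ ih =>
    rcases hx with hx | rfl
    · obtain ⟨h, hh, ε, g', ε', m, hr, rfl⟩ := ih
      exact ⟨x⁻¹ * h, mul_mem (inv_mem hx) hh, ε, g', ε', m, hr, by rw [mul_assoc]⟩
    · exact hl false y ih

lemma conj_or_cyclic_aux (H : PingPong v ρ V E β τ P P') (m : ℕ) : ∀ h ∈ V, ∀ ε g ε',
    Red V E β ε g ε' m → (∃ x, x * (h * g) * x⁻¹ ∈ V) ∨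
      ∃ x δ k, Red V E β δ (x * (h * g) * x⁻¹) δ k ∧ 0 < k := by
  induction m using Nat.strong_induction_on with
  | _ m ih =>
  intro h hh ε g ε' hr
  rcases m with - | m
  · cases hr
    exact Or.inl ⟨1, by simpa using hh⟩
  obtain ⟨δ, g', k, rfl, hr', hk, -⟩ := hr.unroll
  by_cases hp : ε = !δ ∧ k * h ∈ E ε
  · obtain ⟨hε, he⟩ := hp
    cases hr' with
    | nil => simp at hε
    | @cons _ ε1 _ h1 g1 m hV hE hr1 =>
      subst hε
      have e1 : letter β δ * (k * h) * letter β (!δ) ∈ V := by simpa using H.conj_edge he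
      have key : ∀ x, x * ((letter β δ * (k * h) * letter β (!δ) * h1) * g1) * x⁻¹ =
          (x * letter β δ * k) * (h * (letter β (!δ) * h1 * g1 * (letter β δ * k))) *
            (x * letter β δ * k)⁻¹ := fun x => by group
      rcases ih m (by omega) _ (mul_mem e1 hV) _ _ _ hr1 with ⟨x, hx⟩ | ⟨x, δ', k', hx, hk'⟩
      · exact Or.inl ⟨_, by rwa [key] at hx⟩
      · exact Or.inr ⟨_, δ', k', by rwa [key] at hx, hk'⟩
  · refine Or.inr ⟨h⁻¹, ε, m + 1, ?_, m.succ_pos⟩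
    convert hr'.mul (Red.single (mul_mem hk hh) hp) using 1
    group

/-- Every element is conjugate into the vertex group or to a cyclically reduced word. -/
lemma conj_or_cyclic (H : PingPong v ρ V E β τ P P') (g : Γ) : (∃ x, x * g * x⁻¹ ∈ V) ∨
      ∃ x δ k, Red V E β δ (x * g * x⁻¹) δ k ∧ 0 < k := by
  obtain ⟨h, hh, ε, g', ε', m, hr, rfl⟩ := H.exists_red g
  exact H.conj_or_cyclic_aux m h hh ε g' ε' hr

lemma trace_conj (ρ : Γ →* Matrix.SpecialLinearGroup (Fin 2) K) (x g : Γ) :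
    (mat (ρ (x * g * x⁻¹))).trace = (mat (ρ g)).trace := by
  rw [map_mul, map_mul, trace_mul_comm, ← map_mul,
    ← map_mul]
  simp

lemma Bounded.trace {v : Valuation K Γ₀} {r : Γ₀} {M : Matrix (Fin 2) (Fin 2) K}
    (hM : Bounded v r M) : v M.trace ≤ r := by
  rw [trace_fin_two]
  exact (v.map_add _ _).trans (max_le (hM _ _) (hM _ _))

lemma exists_trace_eq (H : PingPong v ρ V E β τ P P') (g : Γ) :
    ∃ k : ℕ, (k = 0 → v (mat (ρ g)).trace ≤ 1) ∧ (0 < k → v (mat (ρ g)).trace = v τ ^ k) := by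
  rcases H.conj_or_cyclic g with ⟨x, hx⟩ | ⟨x, δ, k, hr, hk⟩
  · refine ⟨0, fun _ => ?_, by simp⟩
    rw [← trace_conj ρ x]
    exact Bounded.trace (H.bounded_vertex _ hx)
  · refine ⟨k, by omega, fun _ => ?_⟩
    rw [← trace_conj ρ x]
    exact H.trace_eq hr hk

lemma exists_conj_mem (H : PingPong v ρ V E β τ P P') {g : Γ} (hg : v (mat (ρ g)).trace ≤ 1) :
    ∃ x, x * g * x⁻¹ ∈ V := by
  rcases H.conj_or_cyclic g with h | ⟨x, δ, k, hr, hk⟩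
  · exact h
  · rw [← trace_conj ρ x, H.trace_eq hr hk] at hg
    exact absurd hg (one_lt_pow₀ H.one_lt hk.ne').not_ge

lemma mem_vertex_aux (H : PingPong v ρ V E β τ P P') {c : Γ} (hc : c ∈ V)
    (hcE : ∀ k ∈ V, ∀ ε, k⁻¹ * c * k ∉ E ε) (m : ℕ) : ∀ h₀ ∈ V, ∀ h ∈ V, ∀ ε g ε',
    Red V E β ε g ε' m → v (mat (ρ (h₀ * g * h * (h₀ * g)⁻¹ * c))).trace ≤ 1 →
    h₀ * g * h * (h₀ * g)⁻¹ ∈ V := by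
  induction m with
  | zero =>
    intro h₀ hh₀ h hh ε g ε' hr _
    cases hr
    simpa using mul_mem (mul_mem hh₀ hh) (inv_mem hh₀)
  | succ m ih =>
    intro h₀ hh₀ h hh ε g ε' hr ht
    obtain ⟨δ, g', k, rfl, hr', hk, -⟩ := hr.unroll
    have hkh : k * h * k⁻¹ ∈ V := mul_mem (mul_mem hk hh) (inv_mem hk)
    by_cases hp : k * h * k⁻¹ ∈ E (!δ)
    · have e1 : letter β δ * (k * h * k⁻¹) * letter β (!δ) ∈ V := by simpa using H.conj_edge hp
      have key : h₀ * (g' * (letter β δ * k)) * h * (h₀ * (g' * (letter β δ * k)))⁻¹ =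
          h₀ * g' * (letter β δ * (k * h * k⁻¹) * letter β (!δ)) * (h₀ * g')⁻¹ := by
        rw [letter_not]
        group
      rw [key] at ht ⊢
      exact ih h₀ hh₀ _ e1 _ _ _ hr' ht
    · exfalso
      have hr2 : Red V E β δ (letter β δ * (k * h * k⁻¹)) (!δ) 1 :=
        Red.single hkh fun hh => hp hh.2
      have hr3 : Red V E β (!ε) (letter β (!ε) * (h₀⁻¹ * c * h₀)) ε 1 :=
        Red.single (mul_mem (mul_mem (inv_mem hh₀) hc) hh₀) fun hh => hcE h₀ hh₀ _ hh.2
      have hr4 := H.trace_eq (((hr'.mul hr2).mul hr'.inv).mul hr3) (by omega)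
      have key : g' * (letter β δ * (k * h * k⁻¹)) * (letter β (!δ) * g'⁻¹ * letter β ε) *
          (letter β (!ε) * (h₀⁻¹ * c * h₀)) = h₀⁻¹ *
          (h₀ * (g' * (letter β δ * k)) * h * (h₀ * (g' * (letter β δ * k)))⁻¹ * c) *
            h₀⁻¹⁻¹ := by
        simp only [letter_not]
        group
      rw [key, trace_conj] at hr4
      rw [hr4] at ht
      exact absurd ht (one_lt_pow₀ H.one_lt (by omega)).not_ge

/-- If `X` is elliptic and its product with an element `c`, fixing only the base vertex, is
elliptic, then `X` fixes the base vertex. -/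
lemma mem_vertex (H : PingPong v ρ V E β τ P P') {c X : Γ} (hc : c ∈ V)
    (hcE : ∀ k ∈ V, ∀ ε, k⁻¹ * c * k ∉ E ε) (hX : v (mat (ρ X)).trace ≤ 1)
    (hXc : v (mat (ρ (X * c))).trace ≤ 1) : X ∈ V := by
  obtain ⟨x, hx⟩ := H.exists_conj_mem hX
  obtain ⟨h, hh, ε, g', ε', m, hr, hg⟩ := H.exists_red x⁻¹
  have key : X = h * g' * (x * X * x⁻¹) * (h * g')⁻¹ := by
    rw [← hg]
    group
  rw [key]
  refine H.mem_vertex_aux hc hcE m h hh _ hx _ _ _ hr ?_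
  rwa [← key]

/-- If conjugation by a reduced word with at least one stable letter carries the vertex element
`X` to a vertex element, then `X` lies in the edge group of the first letter. -/
lemma mem_edge (H : PingPong v ρ V E β τ P P') {ε δ : Bool} {X g : Γ} {m : ℕ} (hX : X ∈ V)
    (hr : Red V E β ε g δ (m + 1)) (hg : g⁻¹ * X * g ∈ V) : X ∈ E ε := by
  by_contra hE
  have hr2 : Red V E β (!ε) (letter β (!ε) * X) ε 1 := Red.single hX fun hh => hE hh.2
  have hr3 := (hr.inv.mul hr2).mul hr
  have key : letter β (!δ) * g⁻¹ * letter β ε * (letter β (!ε) * X) * g =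
      letter β (!δ) * (g⁻¹ * X * g) := by
    simp only [letter_not]
    group
  have hb : Bounded v (v τ) (mat (ρ (letter β (!δ) * (g⁻¹ * X * g)))) := by
    rw [map_mul]
    simpa using (H.frame_letter (!δ)).mul (H.bounded_vertex _ hg)
  rw [key] at hr3
  have := H.pow_le hr3 hb
  exact absurd this (lt_self_pow₀ H.one_lt (by omega)).not_ge

end PingPong

end PingPong

section Diagonal

variable {Γ K Γ₀ : Type*} [Group Γ] [Field K] [LinearOrderedCommGroupWithZero Γ₀]

/-- A ping-pong situation in which the edge groups are a single normal subgroup acting by signs,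
and the stable letter is diagonal. -/
structure DiagPong (v : Valuation K Γ₀) (ρ : Γ →* Matrix.SpecialLinearGroup (Fin 2) K)
    (V E : Subgroup Γ) (α : Γ) (s : K) : Prop where
  one_lt : 1 < v s
  normal : E.Normal
  le : E ≤ V
  closure_eq : Subgroup.closure (V ∪ {α} : Set Γ) = ⊤
  sign : ∀ e ∈ E, mat (ρ e) = 1 ∨ mat (ρ e) = -1
  diag : ∀ h ∈ V, ∀ i, v (mat (ρ h) i i) = 1
  entry : ∀ h ∈ V, h ∉ E → ∀ i j, v (mat (ρ h) i j) = 1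
  letter_eq : mat (ρ α) = !![s, 0; 0, s⁻¹]

variable {V E : Subgroup Γ} {α : Γ} {v : Valuation K Γ₀}
  {ρ : Γ →* Matrix.SpecialLinearGroup (Fin 2) K} {s : K}

lemma letter_mem_zpowers {Γ : Type*} [Group Γ] (β : Γ) (ε : Bool) :
    letter β ε = β ^ (if ε then (1 : ℤ) else -1) := by
  cases ε <;> simp [letter]

namespace DiagPong

lemma letter_dil (H : DiagPong v ρ V E α s) (ε : Bool) : mat (ρ (letter α ε)) = dil s ε := by
  cases ε
  · rw [letter]
    simp only [Bool.false_eq_true, if_false, map_inv, mat_inv, H.letter_eq, dil]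
    simp
  · simp [letter, dil, H.letter_eq]

lemma pingPong (H : DiagPong v ρ V E α s) :
    PingPong v ρ V (fun _ => E) α s (fun _ => 1) (fun _ => 1) where
  one_lt := H.one_lt
  edge_le _ := H.le
  edge_conj ε e he := by
    have := H.normal.conj_mem e he (letter α (!ε))
    rwa [letter_not, inv_inv, ← letter_not] at this
  closure_eq := H.closure_eq
  bounded_vertex h hh i j := by
    by_cases hE : h ∈ E
    · rcases H.sign h hE with h | h <;> rw [h] <;> fin_cases i <;> fin_cases j <;> simp
    · exact (H.entry h hh hE i j).le
  bounded_left _ i j := by fin_cases i <;> fin_cases j <;> simp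
  bounded_right _ i j := by fin_cases i <;> fin_cases j <;> simp
  letter_eq ε := by simp [H.letter_dil]
  unit ε ε' h hh hE := by
    rw [one_mul, inv_one, mul_one]
    by_cases hE' : h ∈ E
    · have : ε' = ε := by
        have : ¬ ε' = !ε := fun h => hE ⟨h, hE'⟩
        revert this
        cases ε <;> cases ε' <;> simp
      subst this
      exact H.diag h hh _
    · exact H.entry h hh hE' _ _

lemma apply_sign_mul (H : DiagPong v ρ V E α s) {e : Γ} (he : e ∈ E) (g : Γ) (i j : Fin 2) :
    mat (ρ (e * g)) i j = 0 ↔ mat (ρ g) i j = 0 := by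
  rw [map_mul, map_mul]
  rcases H.sign e he with h | h <;> simp [h]

lemma apply_mul_sign (H : DiagPong v ρ V E α s) {e : Γ} (he : e ∈ E) (g : Γ) (i j : Fin 2) :
    mat (ρ (g * e)) i j = 0 ↔ mat (ρ g) i j = 0 := by
  rw [map_mul, map_mul]
  rcases H.sign e he with h | h <;> simp [h]

lemma ne_zero (H : DiagPong v ρ V E α s) : s ≠ 0 := by
  rintro rfl
  simpa using H.one_lt

lemma apply_letter_mul (H : DiagPong v ρ V E α s) (δ : Bool) (g : Γ) (i j : Fin 2) :
    mat (ρ (letter α δ * g)) i j = 0 ↔ mat (ρ g) i j = 0 := by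
  have := H.ne_zero
  rw [map_mul, map_mul, H.letter_dil]
  cases δ <;> fin_cases i <;> fin_cases j <;> simp [dil, Matrix.mul_apply, this]

lemma apply_mul_letter (H : DiagPong v ρ V E α s) (δ : Bool) (g : Γ) (i j : Fin 2) :
    mat (ρ (g * letter α δ)) i j = 0 ↔ mat (ρ g) i j = 0 := by
  have := H.ne_zero
  rw [map_mul, map_mul, H.letter_dil]
  cases δ <;> fin_cases i <;> fin_cases j <;> simp [dil, Matrix.mul_apply, this]

lemma eq_of_apply_eq_zero_aux (H : DiagPong v ρ V E α s) {i j : Fin 2} (hij : i ≠ j) (m : ℕ) :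
    ∀ h ∈ V, ∀ δ g δ', Red V (fun _ => E) α δ g δ' m → mat (ρ (h * g)) i j = 0 →
      ∃ k : ℤ, ∃ e ∈ E, h * g = α ^ k * e := by
  induction m with
  | zero =>
    intro h hh δ g δ' hr h0
    cases hr
    rw [mul_one] at h0 ⊢
    by_cases hE : h ∈ E
    · exact ⟨0, h, hE, by simp⟩
    · have := H.entry h hh hE i j
      simp [h0] at this
  | succ m ih =>
    intro h hh δ g δ' hr h0
    by_cases hE : h ∈ E
    · cases hr with
      | @cons _ δ1 _ h1 g1 _ hV _ hr1 =>
      rw [H.apply_sign_mul hE, mul_assoc, H.apply_letter_mul] at h0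
      obtain ⟨k, e, he, h2⟩ := ih h1 hV _ _ _ hr1 h0
      refine ⟨(if δ then 1 else -1) + k, (α ^ ((if δ then (1 : ℤ) else -1) + k))⁻¹ * h *
        (α ^ ((if δ then (1 : ℤ) else -1) + k))⁻¹⁻¹ * e, mul_mem (H.normal.conj_mem _ hE _) he, ?_⟩
      rw [mul_assoc (letter α δ), h2, letter_mem_zpowers, _root_.zpow_add]
      group
    · obtain ⟨δ1, g', k, rfl, hr', hk, -⟩ := hr.unroll
      by_cases hkE : k ∈ E
      · have e1 : h * (g' * (letter α δ1 * k)) = h * g' * letter α δ1 * k := by group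
        rw [e1, H.apply_mul_sign hkE, H.apply_mul_letter] at h0
        obtain ⟨l, e, he, h2⟩ := ih h hh _ _ _ hr' h0
        refine ⟨l + (if δ1 then 1 else -1), (letter α δ1)⁻¹ * e * (letter α δ1)⁻¹⁻¹ * k,
          mul_mem (H.normal.conj_mem _ he _) hkE, ?_⟩
        rw [e1, h2, letter_mem_zpowers, _root_.zpow_add]
        group
      · exfalso
        obtain ⟨ε, rfl⟩ : ∃ ε, j = ix ε := by
          fin_cases j
          · exact ⟨true, rfl⟩
          · exact ⟨false, rfl⟩
        obtain ⟨h1, h2, -, -⟩ := H.pingPong.growth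
          (hr'.mul (Red.single (ε' := ε) hk fun hh => hkE hh.2))
        rw [one_mul, inv_one, mul_one] at h1 h2
        rw [map_mul, map_mul, mul_apply_ix δ] at h0
        have h3 := H.entry h hh hE
        have : v (mat (ρ h) i (ix δ) * mat (ρ (g' * (letter α δ1 * k))) (ix δ) (ix ε) +
            mat (ρ h) i (ix (!δ)) * mat (ρ (g' * (letter α δ1 * k))) (ix (!δ)) (ix ε)) =
            v s ^ (m + 1) := by
          rw [v.map_add_eq_of_lt_left, map_mul v, h3, h1, one_mul]
          rw [map_mul v, map_mul v, h3, h3, one_mul, one_mul, h1]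
          exact h2
        rw [h0, map_zero] at this
        exact (pow_pos (zero_lt_one.trans H.one_lt) (m + 1)).ne this

/-- An element with a vanishing off-diagonal entry is a power of the stable letter, up to the edge
group. -/
lemma eq_of_apply_eq_zero (H : DiagPong v ρ V E α s) {i j : Fin 2} (hij : i ≠ j) {w : Γ}
    (hw : mat (ρ w) i j = 0) : ∃ k : ℤ, ∃ e ∈ E, w = α ^ k * e := by
  obtain ⟨h, hh, ε, g', ε', m, hr, rfl⟩ := H.pingPong.exists_red w
  exact H.eq_of_apply_eq_zero_aux hij m h hh _ _ _ hr hw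

lemma trace_letter_aux (H : DiagPong v ρ V E α s) {δ : Bool} {c : Γ} (hc : c ∈ V) (hcE : c ∉ E)
    (m : ℕ) : ∀ h ∈ V, ∀ ε g ε', Red V (fun _ => E) α ε g ε' m →
      v (mat (ρ ((h * g) * letter α δ * (h * g)⁻¹ * c))).trace ≤ v s →
      ∃ h' ∈ V, ∃ k : ℤ, ∃ e ∈ E, h * g = h' * α ^ k * e := by
  induction m with
  | zero =>
    intro h hh ε g ε' hr _
    cases hr
    exact ⟨h, hh, 0, 1, one_mem _, by simp⟩
  | succ m ih =>
    intro h hh ε g ε' hr ht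
    obtain ⟨δ1, g', k, rfl, hr', hk, -⟩ := hr.unroll
    by_cases hkE : k ∈ E
    · have h1 : ρ (h * (g' * (letter α δ1 * k)) * letter α δ * (h * (g' * (letter α δ1 * k)))⁻¹ *
          c) = ρ (h * g' * letter α δ * (h * g')⁻¹ * c) := by
        have e1 : h * (g' * (letter α δ1 * k)) * letter α δ * (h * (g' * (letter α δ1 * k)))⁻¹ *
          c = (h * g') * (letter α δ1 * (k * letter α δ * k⁻¹) * (letter α δ1)⁻¹) * (h * g')⁻¹ *
            c := by group
        have e2 : ρ (k * letter α δ * k⁻¹) = ρ (letter α δ) := by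
          rw [map_mul, map_mul, map_inv, mul_inv_eq_iff_eq_mul, ← mat_inj, map_mul, map_mul]
          rcases H.sign k hkE with h | h <;> simp [h]
        have e3 : letter α δ1 * letter α δ * (letter α δ1)⁻¹ = letter α δ := by
          rw [letter_mem_zpowers, letter_mem_zpowers]
          group
        rw [e1, map_mul, map_mul, map_mul, map_mul ρ _ (letter α δ1)⁻¹, map_mul ρ (letter α δ1),
          e2, ← map_mul ρ (letter α δ1), ← map_mul, e3]
        simp only [map_mul]
      rw [h1] at ht
      obtain ⟨h', hh', l, e, he, h2⟩ := ih h hh _ _ _ hr' ht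
      refine ⟨h', hh', l + (if δ1 then 1 else -1), (letter α δ1)⁻¹ * e * (letter α δ1)⁻¹⁻¹ * k,
        mul_mem (H.normal.conj_mem _ he _) hkE, ?_⟩
      rw [show h * (g' * (letter α δ1 * k)) = h * g' * letter α δ1 * k by group, h2,
        letter_mem_zpowers, _root_.zpow_add]
      group
    · exfalso
      have hw := ((((hr'.mul (Red.single (ε' := δ) hk fun hh => hkE hh.2)).mul
        (Red.single (ε' := !δ1) (inv_mem hk) fun hh => hkE (inv_mem_iff.1 hh.2))).mul
          hr'.inv).mul (Red.single (ε' := ε) (h := h⁻¹ * c * h)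
            (mul_mem (mul_mem (inv_mem hh) hc) hh) fun hh => hcE <| by
              simpa [mul_assoc] using H.normal.conj_mem _ hh.2 h))
      have h1 := H.pingPong.trace_eq hw (by omega)
      have key : g' * (letter α δ1 * k) * (letter α δ * k⁻¹) *
          (letter α (!δ1) * g'⁻¹ * letter α ε) * (letter α (!ε) * (h⁻¹ * c * h)) =
          h⁻¹ * (h * (g' * (letter α δ1 * k)) * letter α δ * (h * (g' * (letter α δ1 * k)))⁻¹ *
          c) * h⁻¹⁻¹ := by
        simp only [letter_not]
        group
      rw [key, PingPong.trace_conj] at h1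
      rw [h1] at ht
      exact absurd ht (lt_self_pow₀ H.one_lt (by omega)).not_ge

lemma eq_of_trace_letter (H : DiagPong v ρ V E α s) {δ : Bool} {c u : Γ} (hc : c ∈ V)
    (hcE : c ∉ E) (ht : v (mat (ρ (u * letter α δ * u⁻¹ * c))).trace ≤ v s) :
    ∃ h ∈ V, ∃ k : ℤ, ∃ e ∈ E, u = h * α ^ k * e := by
  obtain ⟨h, hh, ε, g', ε', m, hr, rfl⟩ := H.pingPong.exists_red u
  exact H.trace_letter_aux hc hcE m h hh _ _ _ hr ht

end DiagPong

end Diagonal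

section Exponents

lemma σ_mul (i : Fin 2) (x y : FreeGroup (Fin 2)) : σ i (x * y) = σ i x + σ i y := by simp [σ]

lemma σ_inv (i : Fin 2) (x : FreeGroup (Fin 2)) : σ i x⁻¹ = -σ i x := by simp [σ]

lemma σ_one (i : Fin 2) : σ i 1 = 0 := by simp [σ]

lemma σ_zpow (i : Fin 2) (x : FreeGroup (Fin 2)) (k : ℤ) : σ i (x ^ k) = k * σ i x := by
  simp [σ]

lemma σ_pow (i : Fin 2) (x : FreeGroup (Fin 2)) (k : ℕ) : σ i (x ^ k) = k * σ i x := by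
  simp [σ]

/-- The first generator of the free group. -/
abbrev xa : FreeGroup (Fin 2) := FreeGroup.of 0

/-- The second generator of the free group. -/
abbrev xb : FreeGroup (Fin 2) := FreeGroup.of 1

/-- The commutator of the generators. -/
def xc : FreeGroup (Fin 2) := xa⁻¹ * xb⁻¹ * xa * xb

lemma σ_xa (i : Fin 2) : σ i xa = if i = 0 then 1 else 0 := by
  fin_cases i <;> simp [σ, expSum, xa]

lemma σ_xb (i : Fin 2) : σ i xb = if i = 1 then 1 else 0 := by
  fin_cases i <;> simp [σ, expSum, xb]

lemma σ_xc (i : Fin 2) : σ i xc = 0 := by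
  simp only [xc, σ_mul, σ_inv]
  ring

lemma xa_mul_xc : xa * xc = xb⁻¹ * xa * xb := by
  rw [xc]
  group

/-- The homomorphism with image generated by `xa` and `xc`. -/
def incl : FreeGroup (Fin 2) →* FreeGroup (Fin 2) := FreeGroup.lift ![xa, xc]

/-- The homomorphism with image generated by `xa * xc` and `xc`. -/
def incl' : FreeGroup (Fin 2) →* FreeGroup (Fin 2) := FreeGroup.lift ![xa * xc, xc]

@[simp] lemma incl_xa : incl xa = xa := by simp [incl]
@[simp] lemma incl_xb : incl xb = xc := by simp [incl]
@[simp] lemma incl'_xa : incl' xa = xa * xc := by simp [incl']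
@[simp] lemma incl'_xb : incl' xb = xc := by simp [incl']

lemma incl'_eq (w : FreeGroup (Fin 2)) :
    incl' w = incl (FreeGroup.lift ![xa * xb, xb] w) := by
  have : incl' = incl.comp (FreeGroup.lift ![xa * xb, xb]) := by
    ext i
    fin_cases i <;> simp [incl', incl]
  exact DFunLike.congr_fun this w

lemma incl_eq (w : FreeGroup (Fin 2)) :
    incl w = incl' (FreeGroup.lift ![xa * xb⁻¹, xb] w) := by
  have : incl = incl'.comp (FreeGroup.lift ![xa * xb⁻¹, xb]) := by
    ext i
    fin_cases i <;> simp [incl', incl]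
  exact DFunLike.congr_fun this w

end Exponents

section Representation

variable {Q K₀ K Γ₀ Γ₁ : Type*} [Group Q] [Field K₀] [Field K]
  [LinearOrderedCommGroupWithZero Γ₀] [LinearOrderedCommGroupWithZero Γ₁]

/-- Equality of matrices up to sign. -/
def Same {R : Type*} [Ring R] (M N : Matrix (Fin 2) (Fin 2) R) : Prop := M = N ∨ M = -N

/-- The representation of the free group on matrices of determinant one. -/
def rep (A C : Matrix.SpecialLinearGroup (Fin 2) K₀) :
    FreeGroup (Fin 2) →* Matrix.SpecialLinearGroup (Fin 2) K₀ := FreeGroup.lift ![A, C]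

@[simp] lemma rep_xa (A C : Matrix.SpecialLinearGroup (Fin 2) K₀) : rep A C xa = A := by
  simp [rep]

@[simp] lemma rep_xb (A C : Matrix.SpecialLinearGroup (Fin 2) K₀) : rep A C xb = C := by
  simp [rep]

/-- The extension of scalars of special linear groups. -/
abbrev scal (f : K₀ →+* K) :
    Matrix.SpecialLinearGroup (Fin 2) K₀ →* Matrix.SpecialLinearGroup (Fin 2) K :=
  Matrix.SpecialLinearGroup.map f

lemma mat_scal (f : K₀ →+* K) (M : Matrix.SpecialLinearGroup (Fin 2) K₀) (i j : Fin 2) :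
    mat (scal f M) i j = f (mat M i j) := rfl

lemma trace_scal (f : K₀ →+* K) (M : Matrix.SpecialLinearGroup (Fin 2) K₀) :
    (mat (scal f M)).trace = f (mat M).trace := by
  simp [trace_fin_two, mat_scal]

/-- A representation of the free group, trivial up to sign on the kernel of `π`, with the
valuations that exhibit the splittings of the image of `π` used below. -/
structure TorusRep (π : FreeGroup (Fin 2) →* Q) (v₀ : Valuation K₀ Γ₀) (v : Valuation K Γ₁)
    (f : K₀ →+* K) (s : K₀) (t : K) (A C B₀ : Matrix.SpecialLinearGroup (Fin 2) K₀)
    (ρ : FreeGroup (Fin 2) →* Matrix.SpecialLinearGroup (Fin 2) K) : Prop where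
  pong : DiagPong v₀ (rep A C) (Subgroup.zpowers xb ⊔ (π.comp incl).ker) (π.comp incl).ker xa s
  pong' : DiagPong v₀ (rep A (B₀ * C * B₀⁻¹)) (Subgroup.zpowers xb ⊔ (π.comp incl').ker)
    (π.comp incl').ker xa s
  conj : B₀⁻¹ * A * B₀ = A * C
  map_xa : ρ xa = scal f A
  map_xb : mat (ρ xb) = !![t, 0; 0, t⁻¹] * mat (scal f B₀)
  sign : ∀ e ∈ π.ker, mat (ρ e) = 1 ∨ mat (ρ e) = -1
  val_map : ∀ x ≠ 0, v (f x) = 1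
  one_lt : 1 < v t
  surj : Function.Surjective π
  exp : ∀ e ∈ π.ker, ∀ i, σ i e = 0
  ne_one : π xc ≠ 1
  trace_eq : ∀ j : ℤ, (mat (A * C ^ j)).trace = (mat A).trace ∨
    (mat (A * C ^ j)).trace = -(mat A).trace → π xc ^ j = 1 ∨ π xc ^ j = π xc

/-- The vertex group of the splitting with stable letter `xb`. -/
def vertex (π : FreeGroup (Fin 2) →* Q) : Subgroup (FreeGroup (Fin 2)) :=
  (π.comp incl).range.comap π

/-- The edge groups of the splitting with stable letter `xb`. -/
def edge (π : FreeGroup (Fin 2) →* Q) (ε : Bool) : Subgroup (FreeGroup (Fin 2)) :=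
  (Subgroup.zpowers (π (if ε then xa else xa * xc))).comap π

lemma mem_vertex_iff {π : FreeGroup (Fin 2) →* Q} {h : FreeGroup (Fin 2)} :
    h ∈ vertex π ↔ ∃ w, π h = π (incl w) := by
  simp [vertex, eq_comm]

lemma mem_vertex_iff' {π : FreeGroup (Fin 2) →* Q} {h : FreeGroup (Fin 2)} :
    h ∈ vertex π ↔ ∃ w, π h = π (incl' w) := by
  rw [mem_vertex_iff]
  constructor
  · rintro ⟨w, hw⟩
    exact ⟨_, hw.trans (by rw [incl_eq])⟩
  · rintro ⟨w, hw⟩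
    exact ⟨_, hw.trans (by rw [incl'_eq])⟩

lemma mem_edge_true {π : FreeGroup (Fin 2) →* Q} {h : FreeGroup (Fin 2)} :
    h ∈ edge π true ↔ ∃ k : ℤ, π h = π xa ^ k := by
  simp [edge, Subgroup.mem_zpowers_iff, eq_comm]

lemma mem_edge_false {π : FreeGroup (Fin 2) →* Q} {h : FreeGroup (Fin 2)} :
    h ∈ edge π false ↔ ∃ k : ℤ, π h = π (xa * xc) ^ k := by
  simp [edge, Subgroup.mem_zpowers_iff, eq_comm]

lemma xa_mem_vertex (π : FreeGroup (Fin 2) →* Q) : xa ∈ vertex π :=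
  mem_vertex_iff.2 ⟨xa, by simp⟩

lemma xc_mem_vertex (π : FreeGroup (Fin 2) →* Q) : xc ∈ vertex π :=
  mem_vertex_iff.2 ⟨xb, by simp⟩

lemma mem_vertex_congr {π : FreeGroup (Fin 2) →* Q} {h g : FreeGroup (Fin 2)} (hg : π h = π g) :
    h ∈ vertex π ↔ g ∈ vertex π := by
  rw [mem_vertex_iff, mem_vertex_iff, hg]

variable {π : FreeGroup (Fin 2) →* Q} {v₀ : Valuation K₀ Γ₀} {v : Valuation K Γ₁}
  {f : K₀ →+* K} {s : K₀} {t : K} {A C B₀ : Matrix.SpecialLinearGroup (Fin 2) K₀}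
  {ρ : FreeGroup (Fin 2) →* Matrix.SpecialLinearGroup (Fin 2) K}

lemma val_zpow_ne {K Γ₀ : Type*} [Field K] [LinearOrderedCommGroupWithZero Γ₀]
    {v : Valuation K Γ₀} {x : K} (hx : 1 < v x) {k : ℤ} (hk : k ≠ 0) : v (x ^ k) ≠ 1 := by
  rw [map_zpow₀]
  rcases lt_or_gt_of_ne hk with h | h
  · exact (zpow_lt_one_of_neg₀ hx h).ne
  · exact (one_lt_zpow₀ hx h).ne'

lemma scal_eq_map_xc (ht : t ≠ 0) (hA : mat A = !![s, 0; 0, s⁻¹]) (hconj : B₀⁻¹ * A * B₀ = A * C)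
    (ha : ρ xa = scal f A) (hb' : mat (ρ xb) = !![t, 0; 0, t⁻¹] * mat (scal f B₀)) :
    ρ xc = scal f C := by
  have h1 : ρ xa * ρ xb = ρ xb * (scal f (B₀⁻¹ * A * B₀)) := by
    obtain ⟨D, hD⟩ : ∃ D : Matrix.SpecialLinearGroup (Fin 2) K, mat D = !![t, 0; 0, t⁻¹] :=
      ⟨⟨!![t, 0; 0, t⁻¹], by simp [det_fin_two, ht]⟩, rfl⟩
    have hb : ρ xb = D * scal f B₀ := by rw [← mat_inj, hb', map_mul, hD]
    have hc : scal f A * D = D * scal f A := by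
      rw [← mat_inj, map_mul, map_mul, hD]
      ext i j
      fin_cases i <;> fin_cases j <;>
        simp [Matrix.mul_apply, mat_scal, hA, mul_comm]
    rw [ha, hb, map_mul, map_mul, map_inv, ← mul_assoc, hc]
    group
  rw [hconj, map_mul, ← ha] at h1
  have h2 : ρ xc = (ρ xa)⁻¹ * (ρ xb)⁻¹ * (ρ xa * ρ xb) := by simp [xc, mul_assoc]
  rw [h2, h1]
  group

lemma map_incl (ha : ρ xa = scal f A) (hc : ρ xc = scal f C) (w : FreeGroup (Fin 2)) :
    ρ (incl w) = scal f (rep A C w) := by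
  have : ρ.comp incl = (scal f).comp (rep A C) := by
    ext1 i
    fin_cases i
    · simpa [incl, rep] using ha
    · simpa [incl, rep] using hc
  exact DFunLike.congr_fun this w

lemma map_incl' (hconj : B₀⁻¹ * A * B₀ = A * C) (ha : ρ xa = scal f A) (hc : ρ xc = scal f C)
    (w : FreeGroup (Fin 2)) :
    scal f B₀ * ρ (incl' w) * (scal f B₀)⁻¹ = scal f (rep A (B₀ * C * B₀⁻¹) w) := by
  have : (MulAut.conj (scal f B₀)).toMonoidHom.comp (ρ.comp incl') =
      (scal f).comp (rep A (B₀ * C * B₀⁻¹)) := by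
    ext1 i
    fin_cases i
    · have : B₀ * (A * C) * B₀⁻¹ = A := by rw [← hconj]; group
      simp only [incl', rep, MonoidHom.comp_apply, FreeGroup.lift_apply_of, map_mul, ha,
        hc, MulEquiv.coe_toMonoidHom, MulAut.conj_apply, Fin.zero_eta, cons_val_zero]
      simp only [← map_mul, ← map_inv]
      conv_rhs => rw [← this]
      congr 1
      group
    · simp [incl', rep, hc, mul_assoc]
  exact DFunLike.congr_fun this w

namespace TorusRep

lemma σ_congr (H : TorusRep π v₀ v f s t A C B₀ ρ) {x y : FreeGroup (Fin 2)} (h : π x = π y)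
    (i : Fin 2) : σ i x = σ i y := by
  have := H.exp (x * y⁻¹) (by simp [MonoidHom.mem_ker, h]) i
  rw [σ_mul, σ_inv] at this
  omega

lemma same_of_eq (H : TorusRep π v₀ v f s t A C B₀ ρ) {x y : FreeGroup (Fin 2)} (h : π x = π y) :
    Same (mat (ρ x)) (mat (ρ y)) := by
  have h1 : mat (ρ x) = mat (ρ (x * y⁻¹)) * mat (ρ y) := by
    rw [← map_mul, ← map_mul]
    simp
  rcases H.sign (x * y⁻¹) (by simp [MonoidHom.mem_ker, h]) with h2 | h2 <;> rw [h1, h2]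
  · exact Or.inl (one_mul _)
  · exact Or.inr (neg_one_mul _)

lemma letter_eq (H : TorusRep π v₀ v f s t A C B₀ ρ) : mat A = !![s, 0; 0, s⁻¹] := by
  simpa using H.pong.letter_eq

lemma t_ne_zero (H : TorusRep π v₀ v f s t A C B₀ ρ) : t ≠ 0 := by
  rintro rfl
  simpa using H.one_lt

lemma map_xc (H : TorusRep π v₀ v f s t A C B₀ ρ) : ρ xc = scal f C :=
  scal_eq_map_xc H.t_ne_zero H.letter_eq H.conj H.map_xa H.map_xb

lemma rep_incl (H : TorusRep π v₀ v f s t A C B₀ ρ) (w : FreeGroup (Fin 2)) :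
    ρ (incl w) = scal f (rep A C w) := map_incl H.map_xa H.map_xc w

lemma rep_incl' (H : TorusRep π v₀ v f s t A C B₀ ρ) (w : FreeGroup (Fin 2)) :
    scal f B₀ * ρ (incl' w) * (scal f B₀)⁻¹ = scal f (rep A (B₀ * C * B₀⁻¹) w) :=
  map_incl' H.conj H.map_xa H.map_xc w

lemma exists_same (H : TorusRep π v₀ v f s t A C B₀ ρ) {h : FreeGroup (Fin 2)}
    (hh : h ∈ vertex π) : ∃ w, π h = π (incl w) ∧
      Same (mat (ρ h)) (mat (scal f (rep A C w))) := by
  obtain ⟨w, hw⟩ := mem_vertex_iff.1 hh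
  exact ⟨w, hw, by rw [← H.rep_incl]; exact H.same_of_eq hw⟩

lemma exists_same' (H : TorusRep π v₀ v f s t A C B₀ ρ) {h : FreeGroup (Fin 2)}
    (hh : h ∈ vertex π) : ∃ w, π h = π (incl' w) ∧
      Same (mat (scal f B₀ * ρ h * (scal f B₀)⁻¹))
        (mat (scal f (rep A (B₀ * C * B₀⁻¹) w))) := by
  obtain ⟨w, hw⟩ := mem_vertex_iff'.1 hh
  refine ⟨w, hw, ?_⟩
  rw [← H.rep_incl']
  simp only [map_mul]
  rcases H.same_of_eq hw with h | h <;> rw [h]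
  · exact Or.inl rfl
  · exact Or.inr (by simp)

lemma Same.apply_eq_zero {R : Type*} [Ring R] {M N : Matrix (Fin 2) (Fin 2) R} (h : Same M N)
    {i j : Fin 2} : M i j = 0 ↔ N i j = 0 := by
  rcases h with rfl | rfl <;> simp

lemma mem_edge_true_of_apply (H : TorusRep π v₀ v f s t A C B₀ ρ) {h : FreeGroup (Fin 2)}
    (hh : h ∈ vertex π) {i j : Fin 2} (hij : i ≠ j) (h0 : mat (ρ h) i j = 0) :
    h ∈ edge π true := by
  obtain ⟨w, hw, hs⟩ := H.exists_same hh
  rw [Same.apply_eq_zero hs, mat_scal, map_eq_zero] at h0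
  obtain ⟨k, e, he, rfl⟩ := H.pong.eq_of_apply_eq_zero hij h0
  exact mem_edge_true.2 ⟨k, by simpa [(show π (incl e) = 1 from he)] using hw⟩

lemma mem_edge_false_of_apply (H : TorusRep π v₀ v f s t A C B₀ ρ) {h : FreeGroup (Fin 2)}
    (hh : h ∈ vertex π) {i j : Fin 2} (hij : i ≠ j)
    (h0 : mat (scal f B₀ * ρ h * (scal f B₀)⁻¹) i j = 0) : h ∈ edge π false := by
  obtain ⟨w, hw, hs⟩ := H.exists_same' hh
  rw [Same.apply_eq_zero hs, mat_scal, map_eq_zero] at h0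
  obtain ⟨k, e, he, rfl⟩ := H.pong'.eq_of_apply_eq_zero hij h0
  exact mem_edge_false.2 ⟨k, by simpa [(show π (incl' e) = 1 from he)] using hw⟩

lemma s_ne_zero (H : TorusRep π v₀ v f s t A C B₀ ρ) : s ≠ 0 := H.pong.ne_zero

lemma not_reverse (H : TorusRep π v₀ v f s t A C B₀ ρ) {w : FreeGroup (Fin 2)}
    (h0 : mat (rep A C (w * (xa * xb) * w⁻¹)) 1 0 = 0)
    (h1 : mat (rep A C (w * (xa * xb) * w⁻¹)) 0 0 = s⁻¹) : False := by
  obtain ⟨k, e, he, hk⟩ := H.pong.eq_of_apply_eq_zero (by decide) h0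
  have hσ : σ 0 (incl (w * (xa * xb) * w⁻¹)) = σ 0 (incl (xa ^ k * e)) := by rw [hk]
  simp only [map_mul, map_inv, map_zpow, incl_xa, incl_xb, σ_mul, σ_inv, σ_zpow, σ_xa, σ_xc,
    H.exp (incl e) he] at hσ
  have hk1 : k = 1 := by simp at hσ; omega
  subst hk1
  have hs := H.s_ne_zero
  rw [hk, zpow_one, map_mul, map_mul, rep_xa, H.letter_eq] at h1
  have h2 : v₀ s = v₀ s⁻¹ := by
    rcases H.pong.sign e he with h | h <;> rw [h] at h1 <;> simp at h1
    · rw [← h1]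
    · rw [← h1, v₀.map_neg]
  have h3 := H.pong.pingPong.inv_lt
  rw [← h2] at h3
  exact h3.not_gt H.pong.one_lt

/-- A conjugating matrix with a vanishing diagonal entry reverses the axis of `A`. -/
lemma reverse_left (hA : mat A = !![s, 0; 0, s⁻¹]) {M : Matrix.SpecialLinearGroup (Fin 2) K₀}
    (hM : mat M 0 0 = 0) : mat (M⁻¹ * A * M) 1 0 = 0 ∧ mat (M⁻¹ * A * M) 0 0 = s⁻¹ := by
  have hd := mat_det M
  rw [hM] at hd
  simp only [map_mul, mat_inv, hA]
  simp [Matrix.mul_apply, Fin.sum_univ_two, hM]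
  linear_combination s⁻¹ * hd

lemma reverse_right (hA : mat A = !![s, 0; 0, s⁻¹]) {M : Matrix.SpecialLinearGroup (Fin 2) K₀}
    (hM : mat M 1 1 = 0) : mat (M * A * M⁻¹) 1 0 = 0 ∧ mat (M * A * M⁻¹) 0 0 = s⁻¹ := by
  have hd := mat_det M
  rw [hM] at hd
  simp only [map_mul, mat_inv, hA]
  simp [Matrix.mul_apply, Fin.sum_univ_two, hM]
  linear_combination s⁻¹ * hd

lemma bounded_scal (H : TorusRep π v₀ v f s t A C B₀ ρ)
    (M : Matrix.SpecialLinearGroup (Fin 2) K₀) : Bounded v 1 (mat (scal f M)) := by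
  intro i j
  rw [mat_scal]
  by_cases h : mat M i j = 0
  · simp [h]
  · exact (H.val_map _ h).le

lemma pingPong (H : TorusRep π v₀ v f s t A C B₀ ρ) :
    PingPong v ρ (vertex π) (edge π) xb t (fun ε => if ε then 1 else scal f B₀)
      (fun ε => if ε then scal f B₀ else 1) where
  one_lt := H.one_lt
  edge_le ε := by
    intro h hh
    cases ε
    · obtain ⟨k, hk⟩ := mem_edge_false.1 hh
      exact mem_vertex_iff'.2 ⟨xa ^ k, by simpa using hk⟩
    · obtain ⟨k, hk⟩ := mem_edge_true.1 hh
      exact mem_vertex_iff.2 ⟨xa ^ k, by simpa using hk⟩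
  edge_conj ε e he := by
    cases ε
    · obtain ⟨k, hk⟩ := mem_edge_false.1 he
      refine mem_edge_true.2 ⟨k, ?_⟩
      simp only [letter, map_mul, hk, xa_mul_xc]
      simp only [Bool.not_false, if_true, Bool.false_eq_true, if_false, ← map_mul, ← map_zpow]
      congr 1
      have := conj_zpow (i := k) (a := xb⁻¹) (b := xa)
      rw [inv_inv] at this
      rw [this]
      group
    · obtain ⟨k, hk⟩ := mem_edge_true.1 he
      refine mem_edge_false.2 ⟨k, ?_⟩
      simp only [letter, map_mul, hk, xa_mul_xc]
      simp only [Bool.not_true, if_true, Bool.false_eq_true, if_false, ← map_mul, ← map_zpow]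
      congr 1
      have := conj_zpow (i := k) (a := xb⁻¹) (b := xa)
      rw [inv_inv] at this
      rw [this]
  closure_eq := by
    rw [eq_top_iff, ← FreeGroup.closure_range_of]
    refine (Subgroup.closure_le _).2 ?_
    rintro _ ⟨i, rfl⟩
    fin_cases i
    · exact Subgroup.subset_closure (Or.inl (xa_mem_vertex π))
    · exact Subgroup.subset_closure (Or.inr rfl)
  bounded_vertex h hh := by
    obtain ⟨w, -, hs⟩ := H.exists_same hh
    have := H.bounded_scal (rep A C w)
    rcases hs with hs | hs <;> rw [hs]
    · exact this
    · exact fun i j => by simpa using this i j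
  bounded_left ε := by
    cases ε
    · exact H.bounded_scal _
    · simpa using H.bounded_scal 1
  bounded_right ε := by
    cases ε
    · simpa using H.bounded_scal 1
    · exact H.bounded_scal _
  letter_eq ε := by
    have ht := H.t_ne_zero
    cases ε
    · have h1 : mat (scal f B₀ * (ρ xb)⁻¹) * !![t, 0; 0, t⁻¹] = 1 := by
        have h2 : mat (scal f B₀ * (ρ xb)⁻¹) * (!![t, 0; 0, t⁻¹] * mat (scal f B₀)) =
            mat (scal f B₀) := by
          rw [← H.map_xb, ← map_mul]
          simp
        rw [← mul_assoc] at h2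
        have h3 : mat (scal f B₀) * mat (scal f B₀)⁻¹ = 1 := by rw [← map_mul]; simp
        calc _ = mat (scal f B₀ * (ρ xb)⁻¹) * !![t, 0; 0, t⁻¹] * mat (scal f B₀) *
              mat (scal f B₀)⁻¹ := by rw [mul_assoc _ (mat (scal f B₀)), h3, mul_one]
          _ = 1 := by rw [h2, h3]
      have h4 : (!![t, 0; 0, t⁻¹] : Matrix (Fin 2) (Fin 2) K) * dil t false = 1 := by
        ext i j
        fin_cases i <;> fin_cases j <;> simp [dil, ht]
      have h5 := congrArg (· * dil t false) h1
      simp only [mul_assoc, h4, mul_one, one_mul] at h5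
      simpa [letter] using h5
    · simp [letter, dil, H.map_xb]
  unit ε ε' h hh hE := by
    obtain ⟨w, hw, hs⟩ := H.exists_same hh
    have key : ∀ (P P' : Matrix.SpecialLinearGroup (Fin 2) K₀) (i j : Fin 2),
        mat (P * rep A C w * P') i j ≠ 0 →
        v (mat (scal f P * ρ h * scal f P') i j) = 1 := by
      intro P P' i j hne
      have h1 := H.val_map _ hne
      rw [← mat_scal] at h1
      simp only [map_mul] at h1 ⊢
      rcases hs with hs | hs <;> rw [hs]
      · exact h1
      · simpa using h1
    cases ε <;> cases ε' <;> simp only [if_true, Bool.false_eq_true, if_false, ix]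
    · have := key 1 B₀⁻¹ 1 1 fun h0 => by
        obtain ⟨h1, h2⟩ := reverse_right H.letter_eq h0
        have e : 1 * rep A C w * B₀⁻¹ * A * (1 * rep A C w * B₀⁻¹)⁻¹ =
            rep A C (w * (xa * xb) * w⁻¹) := by
          simp only [map_mul, map_inv, rep_xa, rep_xb, ← H.conj]
          group
        rw [e] at h1 h2
        exact H.not_reverse h1 h2
      simpa using this
    · by_contra hne
      refine hE ⟨rfl, H.mem_edge_true_of_apply hh (i := 1) (j := 0) (by decide) ?_⟩
      by_contra h0
      refine hne ?_
      rw [Same.apply_eq_zero hs, mat_scal, map_eq_zero] at h0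
      simpa using key 1 1 1 0 (by simpa using h0)
    · by_contra hne
      refine hE ⟨rfl, H.mem_edge_false_of_apply hh (i := 0) (j := 1) (by decide) ?_⟩
      by_contra h0
      refine hne ?_
      have := key B₀ B₀⁻¹ 0 1 fun h1 => h0 (by
        have : mat (scal f (B₀ * rep A C w * B₀⁻¹)) 0 1 = 0 := by rw [mat_scal, h1, map_zero]
        simp only [map_mul, map_inv] at this ⊢
        rcases hs with hs | hs <;> rw [hs]
        · exact this
        · simpa using this)
      simpa using this
    · have := key B₀ 1 0 0 fun h0 => by
        obtain ⟨h1, h2⟩ := reverse_left H.letter_eq h0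
        have e : (B₀ * rep A C w * 1)⁻¹ * A * (B₀ * rep A C w * 1) =
            rep A C (w⁻¹ * (xa * xb) * w⁻¹⁻¹) := by
          simp only [map_mul, map_inv, rep_xa, rep_xb, ← H.conj]
          group
        rw [e] at h1 h2
        exact H.not_reverse h1 h2
      simpa using this

end TorusRep

end Representation

section Vertex

variable {Q K₀ K Γ₀ Γ₁ : Type*} [Group Q] [Field K₀] [Field K]
  [LinearOrderedCommGroupWithZero Γ₀] [LinearOrderedCommGroupWithZero Γ₁]
  {π : FreeGroup (Fin 2) →* Q} {v₀ : Valuation K₀ Γ₀} {v : Valuation K Γ₁}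
  {f : K₀ →+* K} {s : K₀} {t : K} {A C B₀ : Matrix.SpecialLinearGroup (Fin 2) K₀}
  {ρ : FreeGroup (Fin 2) →* Matrix.SpecialLinearGroup (Fin 2) K}

lemma Same.trace {R : Type*} [Ring R] {M N : Matrix (Fin 2) (Fin 2) R} (h : Same M N) :
    M.trace = N.trace ∨ M.trace = -N.trace := by
  rcases h with rfl | rfl
  · exact Or.inl rfl
  · exact Or.inr (by rw [trace_neg])

lemma Same.conj {R : Type*} [Field R] {X Y : Matrix.SpecialLinearGroup (Fin 2) R}
    (h : Same (mat X) (mat Y)) (P P' : Matrix.SpecialLinearGroup (Fin 2) R) :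
    Same (mat (P * X * P')) (mat (P * Y * P')) := by
  simp only [map_mul]
  rcases h with h | h <;> rw [h]
  · exact Or.inl rfl
  · exact Or.inr (by simp)

/-- A matrix which commutes up to sign with a diagonal matrix is diagonal. -/
lemma apply_eq_zero_of_commute {D M : Matrix (Fin 2) (Fin 2) K} {y : K} (hy : y ≠ 0)
    (h1 : y * y ≠ 1) (h2 : y * y ≠ -1) (hD : D = !![y, 0; 0, y⁻¹])
    (h : Same (D * M) (M * D)) : M 0 1 = 0 ∧ M 1 0 = 0 := by
  have key : ∀ x : K, y * x = x * y⁻¹ ∨ y * x = -(x * y⁻¹) → x = 0 := by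
    intro x hx
    by_contra hx0
    rcases hx with hx | hx
    · apply h1
      field_simp at hx
      rw [← sq, hx]
    · apply h2
      field_simp at hx
      rw [← sq, hx]
  have h01 := fun i j : Fin 2 => h.imp (fun h => congrFun (congrFun h i) j)
    (fun h => congrFun (congrFun h i) j)
  have e1 := h01 0 1
  have e2 := h01 1 0
  simp [hD, Matrix.mul_apply, Fin.sum_univ_two] at e1 e2
  refine ⟨key _ e1, key _ ?_⟩
  rcases e2 with h | h
  · exact Or.inl (by rw [mul_comm, ← h, mul_comm])
  · exact Or.inr (by rw [mul_comm (M 1 0), h]; ring)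

namespace TorusRep

lemma trace_le_one (H : TorusRep π v₀ v f s t A C B₀ ρ) {h : FreeGroup (Fin 2)}
    (hh : h ∈ vertex π) {x : K₀} (hx : (mat (ρ h)).trace = f x) (hv : v₀ x ≤ 1) :
    ∃ g ∈ vertex π, ∃ k : ℤ, π h = π (g * xc ^ k * g⁻¹) := by
  obtain ⟨w, hw, hs⟩ := H.exists_same hh
  have hw1 : v₀ (mat (rep A C w)).trace ≤ 1 := by
    rcases Same.trace hs with h1 | h1 <;> rw [hx, trace_scal] at h1
    · rwa [← f.injective h1]
    · rw [← map_neg] at h1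
      rwa [← v₀.map_neg, ← f.injective h1]
  obtain ⟨y, hy⟩ := H.pong.pingPong.exists_conj_mem hw1
  have hN := H.pong.normal
  obtain ⟨z, hz, e, he, hze⟩ := Subgroup.mem_sup_of_normal_right.1 hy
  obtain ⟨k, rfl⟩ := Subgroup.mem_zpowers_iff.1 hz
  refine ⟨incl y⁻¹, mem_vertex_iff.2 ⟨y⁻¹, rfl⟩, k, ?_⟩
  rw [hw]
  have he1 : π (incl e) = 1 := he
  have : w = y⁻¹ * (xb ^ k * e) * y⁻¹⁻¹ := by rw [hze]; group
  rw [this]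
  simp only [map_mul, he1, map_inv, map_zpow, incl_xb, mul_one]

lemma eq_of_trace_eq (H : TorusRep π v₀ v f s t A C B₀ ρ) {g : FreeGroup (Fin 2)}
    (hg : g ∈ vertex π) {j : ℤ} (hj : π xc ^ j ≠ 1) (δ : Bool)
    (ht : (mat (ρ (g * letter xa δ * g⁻¹ * xc ^ j))).trace = (mat (ρ xa)).trace ∨
      (mat (ρ (g * letter xa δ * g⁻¹ * xc ^ j))).trace = -(mat (ρ xa)).trace) :
    ∃ p q : ℤ, π g = π (xc ^ p * xa ^ q) := by
  obtain ⟨w, hw⟩ := mem_vertex_iff.1 hg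
  have h1 : v₀ (mat (rep A C (w * letter xa δ * w⁻¹ * xb ^ j))).trace ≤ v₀ s := by
    have h2 : v₀ (mat A).trace ≤ v₀ s := by
      have h3 := (H.pong.pingPong.inv_lt.trans H.pong.one_lt).le
      rw [H.letter_eq]
      simpa [trace_fin_two] using (v₀.map_add _ _).trans (max_le le_rfl h3)
    have h4 : incl (letter xa δ) = letter xa δ := by cases δ <;> simp [letter]
    have h5 : Same (mat (ρ (g * letter xa δ * g⁻¹ * xc ^ j)))
        (mat (scal f (rep A C (w * letter xa δ * w⁻¹ * xb ^ j)))) := by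
      rw [← H.rep_incl]
      apply H.same_of_eq
      simp only [map_mul, map_inv, hw, h4, map_zpow, incl_xb]
    have h6 : f (mat (rep A C (w * letter xa δ * w⁻¹ * xb ^ j))).trace = f (mat A).trace ∨
        f (mat (rep A C (w * letter xa δ * w⁻¹ * xb ^ j))).trace = f (-(mat A).trace) := by
      have := Same.trace h5
      rw [trace_scal] at this
      rw [H.map_xa, trace_scal] at ht
      rw [map_neg]
      rcases this with h | h <;> rcases ht with h' | h' <;> rw [h] at h'
      · exact Or.inl h'
      · exact Or.inr h'
      · exact Or.inr (by rw [← h', neg_neg])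
      · exact Or.inl (neg_injective h')
    rcases h6 with h | h <;> rw [f.injective h]
    · exact h2
    · rwa [v₀.map_neg]
  obtain ⟨h', hh', k, e, he, hk⟩ := H.pong.eq_of_trace_letter
    (Subgroup.mem_sup_left (Subgroup.zpow_mem_zpowers _ j))
    (fun hc => hj (by simpa [MonoidHom.mem_ker] using hc)) h1
  have hN := H.pong.normal
  obtain ⟨z, hz, e', he', hze⟩ := Subgroup.mem_sup_of_normal_right.1 hh'
  obtain ⟨p, rfl⟩ := Subgroup.mem_zpowers_iff.1 hz
  refine ⟨p, k, ?_⟩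
  have he1 : π (incl e) = 1 := he
  have he1' : π (incl e') = 1 := he'
  rw [hw, hk, ← hze]
  simp only [map_mul, he1, he1', map_zpow, incl_xb, incl_xa, mul_one]

lemma mat_zpow (H : TorusRep π v₀ v f s t A C B₀ ρ) (i : ℤ) :
    mat (scal f A ^ i) = !![f s ^ i, 0; 0, (f s ^ i)⁻¹] := by
  have hs : f s ≠ 0 := by simpa using H.s_ne_zero
  have h1 : mat (scal f A) = !![f s, 0; 0, (f s)⁻¹] := by
    ext i j
    rw [mat_scal, H.letter_eq]
    fin_cases i <;> fin_cases j <;> simp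
  induction i using Int.induction_on with
  | zero => ext i j; fin_cases i <;> fin_cases j <;> simp
  | succ k ih =>
    rw [_root_.zpow_add_one, map_mul, ih, h1, _root_.zpow_add_one₀ hs]
    ext i j
    fin_cases i <;> fin_cases j <;> simp [mul_comm]
  | pred k ih =>
    rw [_root_.zpow_sub_one, map_mul, ih, mat_inv, h1, _root_.zpow_sub_one₀ hs]
    ext i j
    fin_cases i <;> fin_cases j <;> simp [mul_comm]

lemma off_diag (H : TorusRep π v₀ v f s t A C B₀ ρ) {i : ℤ} (hi : i ≠ 0)
    {M : Matrix.SpecialLinearGroup (Fin 2) K}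
    (h : Same (mat (scal f A ^ i * M)) (mat (M * scal f A ^ i))) :
    mat M 0 1 = 0 ∧ mat M 1 0 = 0 := by
  have hs : f s ≠ 0 := by simpa using H.s_ne_zero
  have key : v₀ (s ^ i * s ^ i) ≠ 1 := by
    rw [← _root_.zpow_add₀ H.s_ne_zero]
    exact val_zpow_ne H.pong.one_lt (by omega)
  rw [map_mul, map_mul] at h
  refine apply_eq_zero_of_commute (zpow_ne_zero i hs) ?_ ?_ (H.mat_zpow i) h
  · intro h
    rw [← map_zpow₀, ← map_mul, ← f.map_one] at h
    exact key (by rw [f.injective h, map_one])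
  · intro h
    rw [← map_zpow₀, ← map_mul, ← f.map_one, ← map_neg] at h
    exact key (by rw [f.injective h, v₀.map_neg, map_one])

lemma map_xa_mul_xc (H : TorusRep π v₀ v f s t A C B₀ ρ) (i : ℤ) :
    ρ ((xa * xc) ^ i) = (scal f B₀)⁻¹ * scal f A ^ i * scal f B₀ := by
  have := conj_zpow (i := i) (a := (scal f B₀)⁻¹) (b := scal f A)
  rw [inv_inv] at this
  rw [← this, map_zpow, map_mul, H.map_xa, H.map_xc, ← map_mul, ← H.conj, map_mul, map_mul,
    map_inv]

lemma mem_edge_true_of_conj (H : TorusRep π v₀ v f s t A C B₀ ρ) {h : FreeGroup (Fin 2)}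
    (hh : h ∈ vertex π) {i : ℤ} (hi : i ≠ 0) (hc : h⁻¹ * xa ^ i * h ∈ edge π true) :
    h ∈ edge π true := by
  obtain ⟨k, hk⟩ := mem_edge_true.1 hc
  have hσ := H.σ_congr (hk.trans (map_zpow π xa k).symm) 0
  simp only [σ_mul, σ_inv, σ_zpow, σ_xa] at hσ
  obtain rfl : i = k := by simp at hσ; omega
  have h1 : π (xa ^ i * h) = π (h * xa ^ i) := by
    rw [map_mul π h, map_zpow, ← hk]
    simp [mul_assoc]
  have h2 := H.same_of_eq h1
  rw [map_mul ρ, map_mul ρ, map_zpow, H.map_xa] at h2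
  exact H.mem_edge_true_of_apply hh (by decide) (H.off_diag hi h2).1

lemma mem_edge_false_of_conj (H : TorusRep π v₀ v f s t A C B₀ ρ) {h : FreeGroup (Fin 2)}
    (hh : h ∈ vertex π) {i : ℤ} (hi : i ≠ 0) (hc : h⁻¹ * (xa * xc) ^ i * h ∈ edge π false) :
    h ∈ edge π false := by
  obtain ⟨k, hk⟩ := mem_edge_false.1 hc
  have hσ := H.σ_congr (hk.trans (map_zpow π _ k).symm) 0
  simp only [σ_mul, σ_inv, σ_zpow, σ_xa, σ_xc] at hσ
  obtain rfl : i = k := by simp at hσ; omega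
  have h1 : π ((xa * xc) ^ i * h) = π (h * (xa * xc) ^ i) := by
    rw [map_mul π h, map_zpow, ← hk]
    simp [mul_assoc]
  have h2 := (H.same_of_eq h1).conj (scal f B₀) (scal f B₀)⁻¹
  rw [map_mul ρ, map_mul ρ, H.map_xa_mul_xc] at h2
  refine H.mem_edge_false_of_apply hh (by decide) (H.off_diag hi ?_).1
  convert h2 using 2 <;> group

lemma not_commute (H : TorusRep π v₀ v f s t A C B₀ ρ) (p : ℤ)
    (h : π (xa⁻¹ * xc ^ p * xa) = π (xc ^ (p + 1))) : False := by
  by_cases hp : π xc ^ p = 1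
  · apply H.ne_one
    rw [map_mul, map_mul, map_zpow, hp, map_zpow, _root_.zpow_add_one, hp] at h
    simpa using h.symm
  · have h1 := H.pong.entry (xb ^ p) (Subgroup.mem_sup_left (Subgroup.zpow_mem_zpowers _ p))
      (fun hc => hp (by simpa [MonoidHom.mem_ker] using hc)) 1 0
    have h2 := H.pong.pingPong.bounded_vertex (xb ^ (p + 1))
      (Subgroup.mem_sup_left (Subgroup.zpow_mem_zpowers _ _)) 1 0
    have h3 := H.same_of_eq h
    have e1 : ρ (xa⁻¹ * xc ^ p * xa) = scal f (rep A C (xa⁻¹ * xb ^ p * xa)) := by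
      rw [← H.rep_incl]
      simp
    have e2 : ρ (xc ^ (p + 1)) = scal f (rep A C (xb ^ (p + 1))) := by
      rw [← H.rep_incl]
      simp
    rw [e1, e2] at h3
    have h4 : mat (rep A C (xa⁻¹ * xb ^ p * xa)) 1 0 = s * mat (rep A C (xb ^ p)) 1 0 * s := by
      simp only [map_mul, map_inv, rep_xa, mat_inv, H.letter_eq]
      generalize mat (rep A C (xb ^ p)) = M
      rw [mul_apply_ix true, mul_apply_ix true, mul_apply_ix true]
      simp [ix]
    have h5 : v₀ (mat (rep A C (xa⁻¹ * xb ^ p * xa)) 1 0) =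
        v₀ (mat (rep A C (xb ^ (p + 1))) 1 0) := by
      have h6 := h3.imp (fun h => congrFun (congrFun h 1) 0) (fun h => congrFun (congrFun h 1) 0)
      rw [Matrix.neg_apply, mat_scal, mat_scal, ← map_neg] at h6
      rcases h6 with h | h <;> rw [f.injective h]
      rw [v₀.map_neg]
    rw [← h5, h4, map_mul, map_mul, h1, mul_one] at h2
    exact (one_lt_mul'' H.pong.one_lt H.pong.one_lt).not_ge h2

lemma not_conj (H : TorusRep π v₀ v f s t A C B₀ ρ) {h : FreeGroup (Fin 2)}
    (hh : h ∈ vertex π) {i : ℤ} (hi : i ≠ 0) (hc : h⁻¹ * xa ^ i * h ∈ edge π false) :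
    False := by
  obtain ⟨k, hk⟩ := mem_edge_false.1 hc
  have hσ := H.σ_congr (hk.trans (map_zpow π _ k).symm) 0
  simp only [σ_mul, σ_inv, σ_zpow, σ_xa, σ_xc] at hσ
  obtain rfl : i = k := by simp at hσ; omega
  have h1 : π (xa ^ i * h) = π (h * (xa * xc) ^ i) := by
    rw [map_mul π h, map_zpow, ← hk]
    simp [mul_assoc]
  have h2 := (H.same_of_eq h1).conj 1 (scal f B₀)⁻¹
  rw [map_mul ρ, map_mul ρ, H.map_xa_mul_xc, map_zpow, H.map_xa] at h2
  have h3 := H.off_diag (M := ρ h * (scal f B₀)⁻¹) hi (by convert h2 using 2 <;> group)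
  have h4 : scal f A * (ρ h * (scal f B₀)⁻¹) = ρ h * (scal f B₀)⁻¹ * scal f A := by
    have hA : mat (scal f A) = !![f s, 0; 0, (f s)⁻¹] := by simpa using H.mat_zpow 1
    rw [← mat_inj, map_mul mat, map_mul mat _ (scal f A), hA]
    generalize mat (ρ h * (scal f B₀)⁻¹) = M at h3 ⊢
    have e01 := h3.1
    have e10 := h3.2
    ext i j
    rw [mul_apply_ix true, mul_apply_ix true]
    fin_cases i <;> fin_cases j <;> simp [ix, e01, e10]
    all_goals ring
  have h5 : ρ (h * (xa * xc) * h⁻¹) = scal f A := by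
    have := H.map_xa_mul_xc 1
    rw [zpow_one, zpow_one] at this
    rw [map_mul, map_mul, this, map_inv, mul_inv_eq_iff_eq_mul]
    have h6 := congrArg (· * scal f B₀) h4
    simp only [mul_assoc, inv_mul_cancel, mul_one] at h6
    rw [h6]
    group
  have h6 : h * (xa * xc) * h⁻¹ ∈ edge π true := by
    refine H.mem_edge_true_of_apply (mul_mem (mul_mem hh (mul_mem (xa_mem_vertex π)
      (xc_mem_vertex π))) (inv_mem hh)) (i := 0) (j := 1) (by decide) ?_
    rw [h5, mat_scal, H.letter_eq]
    simp
  obtain ⟨k, hk⟩ := mem_edge_true.1 h6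
  have hσ := H.σ_congr (hk.trans (map_zpow π xa k).symm) 0
  simp only [σ_mul, σ_inv, σ_zpow, σ_xa, σ_xc] at hσ
  obtain rfl : k = 1 := by simp at hσ; omega
  have hk' : (π h)⁻¹ * π xa * π h = π xa * π xc := by
    rw [zpow_one] at hk
    nth_rw 1 [← hk]
    simp [mul_assoc]
  have h7 : π (h⁻¹ * letter xa true * h⁻¹⁻¹ * xc ^ (-1 : ℤ)) = π xa := by
    simp only [letter, if_true, inv_inv, map_mul, map_inv, hk', map_zpow]
    group
  obtain ⟨p, q, hpq⟩ := H.eq_of_trace_eq (inv_mem hh) (j := -1)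
    (by simpa using H.ne_one) true (Same.trace (H.same_of_eq h7))
  apply H.not_commute p
  have h9 : π h = (π (xc ^ p * xa ^ q))⁻¹ := by rw [← hpq, map_inv, inv_inv]
  rw [h9] at hk'
  simp only [map_mul, map_inv, map_zpow] at hk' ⊢
  have h10 : π xc ^ p * π xa = π xa * π xc * π xc ^ p := by
    rw [← hk']
    group
  rw [mul_assoc, h10]
  group

end TorusRep

end Vertex

section Tame

lemma monoidHom_ext {M : Type*} [Monoid M] {f g : FreeGroup (Fin 2) →* M} (ha : f xa = g xa)
    (hb : f xb = g xb) : f = g := by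
  ext1 i
  fin_cases i
  · exact ha
  · exact hb

/-- The endomorphism of the free group with given values on the generators. -/
def endo (X Y : FreeGroup (Fin 2)) : FreeGroup (Fin 2) →* FreeGroup (Fin 2) :=
  FreeGroup.lift ![X, Y]

@[simp] lemma endo_xa (X Y : FreeGroup (Fin 2)) : endo X Y xa = X := by simp [endo]
@[simp] lemma endo_xb (X Y : FreeGroup (Fin 2)) : endo X Y xb = Y := by simp [endo]

/-- The automorphism exchanging the generators. -/
def swapAut : MulAut (FreeGroup (Fin 2)) :=
  MonoidHom.toMulEquiv (endo xb xa) (endo xb xa) (monoidHom_ext (by simp) (by simp))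
    (monoidHom_ext (by simp) (by simp))

/-- The automorphism inverting the first generator. -/
def invAut : MulAut (FreeGroup (Fin 2)) :=
  MonoidHom.toMulEquiv (endo xa⁻¹ xb) (endo xa⁻¹ xb) (monoidHom_ext (by simp) (by simp))
    (monoidHom_ext (by simp) (by simp))

/-- The automorphism multiplying the first generator by the second one. -/
def transvAut : MulAut (FreeGroup (Fin 2)) :=
  MonoidHom.toMulEquiv (endo (xa * xb) xb) (endo (xa * xb⁻¹) xb)
    (monoidHom_ext (by simp) (by simp)) (monoidHom_ext (by simp) (by simp))

@[simp] lemma swapAut_xa : swapAut xa = xb := endo_xa xb xa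
@[simp] lemma swapAut_xb : swapAut xb = xa := endo_xb xb xa
@[simp] lemma invAut_xa : invAut xa = xa⁻¹ := endo_xa xa⁻¹ xb
@[simp] lemma invAut_xb : invAut xb = xb := endo_xb xa⁻¹ xb
@[simp] lemma transvAut_xa : transvAut xa = xa * xb := endo_xa (xa * xb) xb
@[simp] lemma transvAut_xb : transvAut xb = xb := endo_xb (xa * xb) xb

/-- The group generated by inner automorphisms and elementary Nielsen transformations. -/
def tame : Subgroup (MulAut (FreeGroup (Fin 2))) :=
  innAut (FreeGroup (Fin 2)) ⊔ Subgroup.closure {swapAut, invAut, transvAut}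

lemma conj_mem_tame (g : FreeGroup (Fin 2)) : MulAut.conj g ∈ tame :=
  Subgroup.mem_sup_left ⟨g, rfl⟩

lemma swapAut_mem_tame : swapAut ∈ tame :=
  Subgroup.mem_sup_right (Subgroup.subset_closure (by simp))

lemma invAut_mem_tame : invAut ∈ tame :=
  Subgroup.mem_sup_right (Subgroup.subset_closure (by simp))

lemma transvAut_mem_tame : transvAut ∈ tame :=
  Subgroup.mem_sup_right (Subgroup.subset_closure (by simp))

variable {Q : Type*} [Group Q] {π : FreeGroup (Fin 2) →* Q} {X Y X' Y' : FreeGroup (Fin 2)}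

/-- The pair `(X, Y)` is, modulo the kernel of `π`, the image of the generators under an
automorphism in `tame`. -/
def TamePair (π : FreeGroup (Fin 2) →* Q) (X Y : FreeGroup (Fin 2)) : Prop :=
  ∃ θ ∈ tame, π (θ xa) = π X ∧ π (θ xb) = π Y

lemma TamePair.congr (h : TamePair π X Y) (hX : π X = π X') (hY : π Y = π Y') :
    TamePair π X' Y' := by
  obtain ⟨θ, hθ, h1, h2⟩ := h
  exact ⟨θ, hθ, h1.trans hX, h2.trans hY⟩

lemma TamePair.conj (g : FreeGroup (Fin 2)) (h : TamePair π (g * X * g⁻¹) (g * Y * g⁻¹)) :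
    TamePair π X Y := by
  obtain ⟨θ, hθ, h1, h2⟩ := h
  refine ⟨MulAut.conj g⁻¹ * θ, mul_mem (conj_mem_tame _) hθ, ?_, ?_⟩ <;>
    simp only [MulAut.mul_apply, MulAut.conj_apply, map_mul, h1, h2] <;>
    simp only [map_inv] <;> group

lemma TamePair.swap (h : TamePair π X Y) : TamePair π Y X := by
  obtain ⟨θ, hθ, h1, h2⟩ := h
  exact ⟨θ * swapAut, mul_mem hθ swapAut_mem_tame, by simpa using h2, by simpa using h1⟩

lemma TamePair.inv (h : TamePair π X Y) : TamePair π X⁻¹ Y := by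
  obtain ⟨θ, hθ, h1, h2⟩ := h
  exact ⟨θ * invAut, mul_mem hθ invAut_mem_tame, by simpa using h1, by simpa using h2⟩

lemma TamePair.mul (h : TamePair π X Y) : TamePair π (X * Y) Y := by
  obtain ⟨θ, hθ, h1, h2⟩ := h
  exact ⟨θ * transvAut, mul_mem hθ transvAut_mem_tame, by simp [h1, h2], by simpa using h2⟩

lemma TamePair.inv_right (h : TamePair π X Y) : TamePair π X Y⁻¹ := h.swap.inv.swap

lemma TamePair.mul_zpow (h : TamePair π X Y) (k : ℤ) : TamePair π (X * Y ^ k) Y := by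
  induction k using Int.induction_on with
  | zero => simpa using h
  | succ n ih =>
    have := ih.mul
    rwa [mul_assoc, ← _root_.zpow_add_one] at this
  | pred n ih =>
    have := ih.inv_right.mul.inv_right
    rwa [inv_inv, mul_assoc, ← _root_.zpow_sub_one] at this

lemma TamePair.zpow_mul (h : TamePair π X Y) (k : ℤ) : TamePair π (Y ^ k * X) Y := by
  have := (h.inv.mul_zpow (-k)).inv
  rwa [_root_.mul_inv_rev, inv_inv, _root_.zpow_neg, inv_inv] at this

lemma tamePair_refl (π : FreeGroup (Fin 2) →* Q) : TamePair π xa xb := ⟨1, one_mem _, rfl, rfl⟩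

/-- The determinant of the exponent sums of `X` and `Y`. -/
noncomputable def expDet (X Y : FreeGroup (Fin 2)) : ℤ := σ 0 X * σ 1 Y - σ 0 Y * σ 1 X

/-- The pair `(X, Y)` has unimodular exponent sums, and the commutator of `X` and `Y` is conjugate
to a nontrivial power of `xc`, modulo the kernel of `π`. -/
structure CommPair (π : FreeGroup (Fin 2) →* Q) (X Y : FreeGroup (Fin 2)) : Prop where
  det : IsUnit (expDet X Y)
  comm : ∃ g, ∃ j : ℤ, π (X⁻¹ * Y⁻¹ * X * Y) = π (g * xc ^ j * g⁻¹) ∧ π xc ^ j ≠ 1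

lemma CommPair.conj (h : CommPair π X Y) (g : FreeGroup (Fin 2)) :
    CommPair π (g * X * g⁻¹) (g * Y * g⁻¹) := by
  obtain ⟨hd, p, j, h1, h2⟩ := h
  refine ⟨?_, g * p, j, ?_, h2⟩
  · convert hd using 1
    simp only [expDet, σ_mul, σ_inv]
    ring
  · rw [show (g * X * g⁻¹)⁻¹ * (g * Y * g⁻¹)⁻¹ * (g * X * g⁻¹) * (g * Y * g⁻¹) =
      g * (X⁻¹ * Y⁻¹ * X * Y) * g⁻¹ by group, map_mul, map_mul, h1, ← map_mul, ← map_mul]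
    congr 1
    group

lemma CommPair.swap (h : CommPair π X Y) : CommPair π Y X := by
  obtain ⟨hd, p, j, h1, h2⟩ := h
  refine ⟨?_, p, -j, ?_, by rwa [_root_.zpow_neg, inv_ne_one]⟩
  · rw [← IsUnit.neg_iff]
    convert hd using 1
    simp only [expDet]
    ring
  · rw [show Y⁻¹ * X⁻¹ * Y * X = (X⁻¹ * Y⁻¹ * X * Y)⁻¹ by group, map_inv, h1, ← map_inv]
    congr 1
    group

lemma CommPair.inv (h : CommPair π X Y) : CommPair π X⁻¹ Y := by
  obtain ⟨hd, p, j, h1, h2⟩ := h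
  refine ⟨?_, X * p, -j, ?_, by rwa [_root_.zpow_neg, inv_ne_one]⟩
  · rw [← IsUnit.neg_iff]
    convert hd using 1
    simp only [expDet, σ_inv]
    ring
  · rw [show X⁻¹⁻¹ * Y⁻¹ * X⁻¹ * Y = X * (X⁻¹ * Y⁻¹ * X * Y)⁻¹ * X⁻¹ by group, map_mul, map_mul,
      map_inv π (X⁻¹ * Y⁻¹ * X * Y), h1, ← map_inv, ← map_mul, ← map_mul]
    congr 1
    group

lemma CommPair.mul (h : CommPair π X Y) : CommPair π (X * Y) Y := by
  obtain ⟨hd, p, j, h1, h2⟩ := h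
  refine ⟨?_, Y⁻¹ * p, j, ?_, h2⟩
  · convert hd using 1
    simp only [expDet, σ_mul]
    ring
  · rw [show (X * Y)⁻¹ * Y⁻¹ * (X * Y) * Y = Y⁻¹ * (X⁻¹ * Y⁻¹ * X * Y) * Y by group, map_mul,
      map_mul, h1, ← map_mul, ← map_mul]
    congr 1
    group

lemma CommPair.inv_right (h : CommPair π X Y) : CommPair π X Y⁻¹ := h.swap.inv.swap

end Tame

section Reduction

variable {Q K₀ K Γ₀ Γ₁ : Type*} [Group Q] [Field K₀] [Field K]
  [LinearOrderedCommGroupWithZero Γ₀] [LinearOrderedCommGroupWithZero Γ₁]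
  {π : FreeGroup (Fin 2) →* Q} {v₀ : Valuation K₀ Γ₀} {v : Valuation K Γ₁}
  {f : K₀ →+* K} {s : K₀} {t : K} {A C B₀ : Matrix.SpecialLinearGroup (Fin 2) K₀}
  {ρ : FreeGroup (Fin 2) →* Matrix.SpecialLinearGroup (Fin 2) K}

lemma trace_mul_inv (X Y : Matrix.SpecialLinearGroup (Fin 2) K) :
    (mat (X * Y)).trace + (mat (X * Y⁻¹)).trace = (mat X).trace * (mat Y).trace := by
  simp only [map_mul, mat_inv, trace_fin_two, mul_apply_ix true]
  simp [ix]
  ring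

/-- Fricke's formula for the trace of a commutator. -/
lemma trace_commutator (X Y : Matrix.SpecialLinearGroup (Fin 2) K) :
    (mat (X⁻¹ * Y⁻¹ * X * Y)).trace = (mat X).trace ^ 2 + (mat Y).trace ^ 2 +
      (mat (X * Y)).trace ^ 2 - (mat X).trace * (mat Y).trace * (mat (X * Y)).trace - 2 := by
  have hX := mat_det X
  have hY := mat_det Y
  have key : (mat (X⁻¹ * Y⁻¹ * X * Y)).trace =
      (mat X).trace ^ 2 * (mat Y 0 0 * mat Y 1 1 - mat Y 0 1 * mat Y 1 0) +
      (mat Y).trace ^ 2 * (mat X 0 0 * mat X 1 1 - mat X 0 1 * mat X 1 0) +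
      (mat (X * Y)).trace ^ 2 - (mat X).trace * (mat Y).trace * (mat (X * Y)).trace -
      2 * (mat X 0 0 * mat X 1 1 - mat X 0 1 * mat X 1 0) *
        (mat Y 0 0 * mat Y 1 1 - mat Y 0 1 * mat Y 1 0) := by
    simp only [map_mul, mat_inv, trace_fin_two, mul_apply_ix true]
    simp [ix]
    ring
  rw [key, hX, hY]
  ring

namespace TorusRep

lemma σ_one_of_mem_vertex (H : TorusRep π v₀ v f s t A C B₀ ρ) {h : FreeGroup (Fin 2)}
    (hh : h ∈ vertex π) : σ 1 h = 0 := by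
  obtain ⟨w, hw⟩ := mem_vertex_iff.1 hh
  rw [H.σ_congr hw]
  have : (expSum 1).comp incl = 1 := monoidHom_ext
    (by simpa [σ] using σ_xa 1) (by simpa [σ] using σ_xc 1)
  simpa [σ] using congrArg Multiplicative.toAdd (DFunLike.congr_fun this w)

lemma tamePair_xa (H : TorusRep π v₀ v f s t A C B₀ ρ) {k g : FreeGroup (Fin 2)}
    (hk : k ∈ vertex π) (hg : g ∈ vertex π) {j : ℤ} (hj : π xc ^ j ≠ 1)
    (h : π (xa⁻¹ * (xb * k)⁻¹ * xa * (xb * k)) = π (g * xc ^ j * g⁻¹)) :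
    TamePair π xa (xb * k) := by
  have h1 : π (k⁻¹ * (xa * xc) * k) = π (xa * (g * xc ^ j * g⁻¹)) := by
    rw [map_mul π xa, ← h, ← map_mul, xa_mul_xc]
    congr 1
    group
  have htr : ∀ x, (mat (ρ (x * (xa * xc) * x⁻¹))).trace = (mat (ρ xa)).trace := by
    intro x
    have := PingPong.trace_conj ρ (x * xb⁻¹) xa
    rw [← this, xa_mul_xc]
    congr 3
    group
  have h2 : π (g⁻¹ * letter xa true * g⁻¹⁻¹ * xc ^ j) =
      π ((g⁻¹ * k⁻¹) * (xa * xc) * (g⁻¹ * k⁻¹)⁻¹) := by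
    rw [show (g⁻¹ * k⁻¹) * (xa * xc) * (g⁻¹ * k⁻¹)⁻¹ = g⁻¹ * (k⁻¹ * (xa * xc) * k) * g by group,
      map_mul π (g⁻¹ * _) g, map_mul π g⁻¹ (k⁻¹ * _ * _), h1, ← map_mul, ← map_mul]
    congr 1
    simp only [letter, if_true]
    group
  have h3 := Same.trace (H.same_of_eq h2)
  rw [htr] at h3
  obtain ⟨p, q, hpq⟩ := H.eq_of_trace_eq (inv_mem hg) hj true h3
  have h4 : π g = (π (xc ^ p * xa ^ q))⁻¹ := by rw [← hpq, map_inv, inv_inv]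
  have h5 : π (k⁻¹ * (xa * xc) * k) = π (xa ^ (-q) * (xa * xc ^ j) * xa ^ q) := by
    rw [h1]
    simp only [map_mul, map_inv, h4, map_zpow]
    group
  have h6 : π (xa * xc ^ j) = π ((xa ^ q * k⁻¹) * (xa * xc) * (xa ^ q * k⁻¹)⁻¹) := by
    rw [show (xa ^ q * k⁻¹) * (xa * xc) * (xa ^ q * k⁻¹)⁻¹ =
      xa ^ q * (k⁻¹ * (xa * xc) * k) * xa ^ (-q) by group,
      map_mul π (xa ^ q * _) (xa ^ (-q)), map_mul π (xa ^ q) (k⁻¹ * _ * _), h5, ← map_mul,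
      ← map_mul]
    congr 1
    group
  have h7 := Same.trace (H.same_of_eq h6)
  rw [htr, map_mul, H.map_xa, map_zpow, H.map_xc, ← map_zpow, ← map_mul, trace_scal, trace_scal,
    ← map_neg] at h7
  have h8 : π xc ^ j = π xc := (H.trace_eq j (h7.imp (fun h => f.injective h)
    (fun h => f.injective h))).resolve_left hj
  have h9 : (k * xa ^ (-q))⁻¹ * (xa * xc) ^ (1 : ℤ) * (k * xa ^ (-q)) ∈ edge π false := by
    refine mem_edge_false.2 ⟨1, ?_⟩
    rw [show (k * xa ^ (-q))⁻¹ * (xa * xc) ^ (1 : ℤ) * (k * xa ^ (-q)) =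
      xa ^ q * (k⁻¹ * (xa * xc) * k) * xa ^ (-q) by group, map_mul, map_mul, h5]
    simp only [map_mul, map_zpow, h8]
    group
  obtain ⟨r, hr⟩ := mem_edge_false.1 (H.mem_edge_false_of_conj (mul_mem hk
    (zpow_mem (xa_mem_vertex π) _)) one_ne_zero h9)
  have h10 : π (xa ^ r * (xb * xa ^ q)) = π (xb * k) := by
    have h11 : π k = π ((xa * xc) ^ r * xa ^ q) := by
      rw [map_mul, map_zpow, ← hr, ← map_mul]
      congr 1
      group
    rw [map_mul π xb k, h11, ← map_mul]
    congr 1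
    have := conj_zpow (i := r) (a := xb⁻¹) (b := xa)
    rw [inv_inv] at this
    rw [xa_mul_xc, this]
    group
  exact ((((tamePair_refl π).swap.mul_zpow q).zpow_mul r).swap).congr rfl h10

lemma tamePair_zpow (H : TorusRep π v₀ v f s t A C B₀ ρ) {k g : FreeGroup (Fin 2)}
    (hk : k ∈ vertex π) (hg : g ∈ vertex π) {j : ℤ} (hj : π xc ^ j ≠ 1) {i : ℤ} (hi : IsUnit i)
    (h : π ((xa ^ i)⁻¹ * (xb * k)⁻¹ * xa ^ i * (xb * k)) = π (g * xc ^ j * g⁻¹)) :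
    TamePair π (xa ^ i) (xb * k) := by
  rcases Int.isUnit_iff.1 hi with rfl | rfl
  · rw [zpow_one] at h ⊢
    exact H.tamePair_xa hk hg hj h
  · have h1 : π (xa⁻¹ * (xb * k)⁻¹ * xa * (xb * k)) =
        π ((xa⁻¹ * g) * xc ^ (-j) * (xa⁻¹ * g)⁻¹) := by
      have e1 : xa⁻¹ * (xb * k)⁻¹ * xa * (xb * k) =
          xa⁻¹ * ((xa ^ (-1 : ℤ))⁻¹ * (xb * k)⁻¹ * xa ^ (-1 : ℤ) * (xb * k))⁻¹ * xa := by group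
      rw [e1, map_mul, map_mul, map_inv π (_ * _), h, ← map_inv, ← map_mul, ← map_mul]
      congr 1
      group
    have := (H.tamePair_xa hk (mul_mem (inv_mem (xa_mem_vertex π)) hg)
      (by rwa [_root_.zpow_neg, inv_ne_one]) h1).inv
    rwa [_root_.zpow_neg_one]

end TorusRep

end Reduction

section Terminal

variable {Q K₀ K Γ₀ Γ₁ : Type*} [Group Q] [Field K₀] [Field K]
  [LinearOrderedCommGroupWithZero Γ₀] [LinearOrderedCommGroupWithZero Γ₁]
  {π : FreeGroup (Fin 2) →* Q} {v₀ : Valuation K₀ Γ₀} {v : Valuation K Γ₁}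
  {f : K₀ →+* K} {s : K₀} {t : K} {A C B₀ : Matrix.SpecialLinearGroup (Fin 2) K₀}
  {ρ : FreeGroup (Fin 2) →* Matrix.SpecialLinearGroup (Fin 2) K}

namespace TorusRep

lemma eq_true_zpow (H : TorusRep π v₀ v f s t A C B₀ ρ) {h : FreeGroup (Fin 2)}
    (hh : h ∈ edge π true) : π h = π (xa ^ σ 0 h) := by
  obtain ⟨k, hk⟩ := mem_edge_true.1 hh
  have := H.σ_congr (hk.trans (map_zpow π xa k).symm) 0
  rw [σ_zpow, σ_xa] at this
  rw [this, hk, map_zpow]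
  simp

lemma eq_false_zpow (H : TorusRep π v₀ v f s t A C B₀ ρ) {h : FreeGroup (Fin 2)}
    (hh : h ∈ edge π false) : π h = π ((xa * xc) ^ σ 0 h) := by
  obtain ⟨k, hk⟩ := mem_edge_false.1 hh
  have := H.σ_congr (hk.trans (map_zpow π (xa * xc) k).symm) 0
  rw [σ_zpow, σ_mul, σ_xa, σ_xc] at this
  rw [this, hk, map_zpow]
  simp

lemma eq_one_of_mem_edge (H : TorusRep π v₀ v f s t A C B₀ ρ) {h : FreeGroup (Fin 2)} {ε : Bool}
    (hh : h ∈ edge π ε) (h0 : σ 0 h = 0) : π h = 1 := by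
  cases ε
  · rw [H.eq_false_zpow hh, h0, zpow_zero, map_one]
  · rw [H.eq_true_zpow hh, h0, zpow_zero, map_one]

lemma mem_edge_congr {h g : FreeGroup (Fin 2)} (hg : π h = π g) {ε : Bool} :
    h ∈ edge π ε ↔ g ∈ edge π ε := by
  simp only [edge, Subgroup.mem_comap, hg]

lemma mem_edge_of_conj (H : TorusRep π v₀ v f s t A C B₀ ρ) {h z : FreeGroup (Fin 2)}
    {ε ε' : Bool} (hh : h ∈ vertex π) (hz : z ∈ edge π ε) (h0 : σ 0 z ≠ 0)
    (hc : h⁻¹ * z * h ∈ edge π ε') : ε' = ε ∧ h ∈ edge π ε' := by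
  cases ε
  · have hz' := H.eq_false_zpow hz
    have hc' : h⁻¹ * (xa * xc) ^ σ 0 z * h ∈ edge π ε' :=
      (mem_edge_congr (by simp only [map_mul π (h⁻¹ * _), map_mul π h⁻¹, hz'])).1 hc
    cases ε'
    · exact ⟨rfl, H.mem_edge_false_of_conj hh h0 hc'⟩
    · refine (H.not_conj (inv_mem hh) (i := σ 0 z) h0 ?_).elim
      have h1 := H.eq_true_zpow hc
      rw [show σ 0 (h⁻¹ * z * h) = σ 0 z by simp only [σ_mul, σ_inv]; ring] at h1
      refine (mem_edge_congr ?_).1 hz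
      rw [map_mul, map_mul π h⁻¹⁻¹, ← h1, ← map_mul, ← map_mul]
      congr 1
      group
  · have hz' := H.eq_true_zpow hz
    have hc' : h⁻¹ * xa ^ σ 0 z * h ∈ edge π ε' :=
      (mem_edge_congr (by simp only [map_mul π (h⁻¹ * _), map_mul π h⁻¹, hz'])).1 hc
    cases ε'
    · exact (H.not_conj hh h0 hc').elim
    · exact ⟨rfl, H.mem_edge_true_of_conj hh h0 hc'⟩

lemma tamePair_of_comm (H : TorusRep π v₀ v f s t A C B₀ ρ) {X Y : FreeGroup (Fin 2)} {j : ℤ}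
    (hd : IsUnit (expDet X Y)) (hj : π xc ^ j ≠ 1) (hc : π (X⁻¹ * Y⁻¹ * X * Y) = π (xc ^ j))
    (hX : v (mat (ρ X)).trace ≤ 1) : TamePair π X Y := by
  have P := H.pingPong
  have hcV : X⁻¹ * Y⁻¹ * X * Y ∈ vertex π :=
    (mem_vertex_congr hc).2 (zpow_mem (xc_mem_vertex π) j)
  have hXV : X ∈ vertex π := by
    refine P.mem_vertex hcV (fun k hk ε he => hj ?_) hX ?_
    · have := H.eq_one_of_mem_edge he (by simp only [σ_mul, σ_inv]; ring)
      rw [map_mul, map_mul, hc, map_inv, map_zpow] at this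
      rwa [mul_assoc, inv_mul_eq_one, eq_comm, mul_eq_right] at this
    · rw [show X * (X⁻¹ * Y⁻¹ * X * Y) = Y⁻¹ * X * Y⁻¹⁻¹ by group, PingPong.trace_conj]
      exact hX
  have hσX := H.σ_one_of_mem_vertex hXV
  have hdet : expDet X Y = σ 0 X * σ 1 Y := by rw [expDet, hσX, mul_zero, sub_zero]
  rw [hdet] at hd
  have hσ := isUnit_of_mul_isUnit_left hd
  have hYX : Y⁻¹ * X * Y ∈ vertex π := by
    rw [show Y⁻¹ * X * Y = X * (X⁻¹ * Y⁻¹ * X * Y) by group]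
    exact mul_mem hXV hcV
  obtain ⟨h₀, hh₀, ε, g, δ, m, hr, rfl⟩ := P.exists_red Y
  cases hr with
  | nil =>
    rw [mul_one, H.σ_one_of_mem_vertex hh₀, mul_zero] at hd
    exact absurd hd (by decide)
  | @cons _ ε₁ _ h₁ g m hh₁ hE hg =>
    have hX' : h₀⁻¹ * X * h₀ ∈ edge π ε := by
      refine P.mem_edge (mul_mem (mul_mem (inv_mem hh₀) hXV) hh₀) (Red.cons hh₁ hE hg) ?_
      convert hYX using 1
      group
    cases hg with
    | @cons _ ε₂ _ h₂ g m hh₂ hE₂ hg =>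
      refine (hE ?_).elim
      have hz := P.edge_conj ε _ hX'
      refine H.mem_edge_of_conj hh₁ hz ?_ (P.mem_edge ?_ (Red.cons hh₂ hE₂ hg) ?_)
      · rw [letter_not]
        simp only [σ_mul, σ_inv]
        convert hσ.ne_zero using 1
        ring
      · exact mul_mem (mul_mem (inv_mem hh₁) (P.edge_le _ hz)) hh₁
      · convert hYX using 1
        rw [letter_not]
        group
    | nil =>
      have hcomm : ∀ p : FreeGroup (Fin 2), (p⁻¹ * X * p)⁻¹ *
          (p⁻¹ * (h₀ * (letter xb ε * h₁ * 1)) * p)⁻¹ * (p⁻¹ * X * p) *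
          (p⁻¹ * (h₀ * (letter xb ε * h₁ * 1)) * p) =
          p⁻¹ * (X⁻¹ * (h₀ * (letter xb ε * h₁ * 1))⁻¹ * X * (h₀ * (letter xb ε * h₁ * 1))) *
            p := by
        intro p
        group
      cases ε
      · have hX₁ := H.eq_true_zpow (P.edge_conj false _ hX')
        have hp : letter xb (!false) * (h₀⁻¹ * X * h₀) * letter xb false =
            (h₀ * xb⁻¹)⁻¹ * X * (h₀ * xb⁻¹) := by
          simp only [letter, Bool.not_false, if_true, Bool.false_eq_true, if_false]
          group
        rw [hp, show σ 0 ((h₀ * xb⁻¹)⁻¹ * X * (h₀ * xb⁻¹)) = σ 0 X by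
          simp only [σ_mul, σ_inv]; ring] at hX₁
        have hY₁ : (h₀ * xb⁻¹)⁻¹ * (h₀ * (letter xb false * h₁ * 1)) * (h₀ * xb⁻¹) =
            (xb * (h₁ * h₀)⁻¹)⁻¹ := by
          simp only [letter, Bool.false_eq_true, if_false]
          group
        have h2 := hcomm (h₀ * xb⁻¹)
        rw [hY₁] at h2
        refine TamePair.conj (h₀ * xb⁻¹)⁻¹ ?_
        rw [inv_inv, hY₁]
        refine (TamePair.congr (H.tamePair_zpow (inv_mem (mul_mem hh₁ hh₀)) hh₁ (j := -j)
          (by rwa [_root_.zpow_neg, inv_ne_one]) hσ ?_) hX₁.symm rfl).inv_right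
        have h3 : π ((xa ^ σ 0 X)⁻¹ * (xb * (h₁ * h₀)⁻¹)⁻¹ * xa ^ σ 0 X * (xb * (h₁ * h₀)⁻¹)) =
            π (((h₀ * xb⁻¹)⁻¹ * X * (h₀ * xb⁻¹))⁻¹ * (xb * (h₁ * h₀)⁻¹)⁻¹ *
              ((h₀ * xb⁻¹)⁻¹ * X * (h₀ * xb⁻¹)) * (xb * (h₁ * h₀)⁻¹)) := by
          simp only [map_mul π _ (xb * (h₁ * h₀)⁻¹), map_mul π (_ * _) (xa ^ σ 0 X),
            map_mul π _ ((h₀ * xb⁻¹)⁻¹ * X * (h₀ * xb⁻¹)),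
            map_mul π _ (xb * (h₁ * h₀)⁻¹)⁻¹, map_inv π (xa ^ σ 0 X), ← hX₁, map_inv]
        rw [h3]
        generalize hU : (h₀ * xb⁻¹)⁻¹ * X * (h₀ * xb⁻¹) = U at h2 ⊢
        rw [show U⁻¹ * (xb * (h₁ * h₀)⁻¹)⁻¹ * U * (xb * (h₁ * h₀)⁻¹) =
          (xb * (h₁ * h₀)⁻¹)⁻¹ * (U⁻¹ * (xb * (h₁ * h₀)⁻¹)⁻¹⁻¹ * U * (xb * (h₁ * h₀)⁻¹)⁻¹)⁻¹ *
            (xb * (h₁ * h₀)⁻¹) by group, h2]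
        simp only [map_mul π _ (xb * (h₁ * h₀)⁻¹), map_mul π (xb * (h₁ * h₀)⁻¹)⁻¹,
          map_inv π (_ * _ * _), map_mul π _ (h₀ * xb⁻¹), map_mul π (h₀ * xb⁻¹)⁻¹, hc]
        simp only [map_mul, map_inv, map_zpow]
        group
      · have hX₁ := H.eq_true_zpow hX'
        rw [show σ 0 (h₀⁻¹ * X * h₀) = σ 0 X by simp only [σ_mul, σ_inv]; ring] at hX₁
        have hY₁ : h₀⁻¹ * (h₀ * (letter xb true * h₁ * 1)) * h₀ = xb * (h₁ * h₀) := by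
          simp only [letter, if_true]
          group
        have h2 := hcomm h₀
        rw [hY₁] at h2
        refine TamePair.conj h₀⁻¹ ?_
        rw [inv_inv, hY₁]
        refine TamePair.congr (H.tamePair_zpow (mul_mem hh₁ hh₀) (inv_mem hh₀) hj hσ ?_)
          hX₁.symm rfl
        have h3 : π ((xa ^ σ 0 X)⁻¹ * (xb * (h₁ * h₀))⁻¹ * xa ^ σ 0 X * (xb * (h₁ * h₀))) =
            π ((h₀⁻¹ * X * h₀)⁻¹ * (xb * (h₁ * h₀))⁻¹ * (h₀⁻¹ * X * h₀) * (xb * (h₁ * h₀))) := by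
          simp only [map_mul π _ (xb * (h₁ * h₀)), map_mul π (_ * _) (xa ^ σ 0 X),
            map_mul π _ (h₀⁻¹ * X * h₀),
            map_mul π _ (xb * (h₁ * h₀))⁻¹, map_inv π (xa ^ σ 0 X), ← hX₁, map_inv]
        rw [h3, h2, map_mul π _ h₀, map_mul π h₀⁻¹, hc, inv_inv, ← map_mul, ← map_mul]

lemma tamePair_of_trace_le (H : TorusRep π v₀ v f s t A C B₀ ρ) {X Y : FreeGroup (Fin 2)}
    (h : CommPair π X Y) (hX : v (mat (ρ X)).trace ≤ 1) : TamePair π X Y := by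
  obtain ⟨g, j, hg, hj⟩ := h.comm
  refine TamePair.conj g⁻¹ (H.tamePair_of_comm (h.conj g⁻¹).det hj ?_ ?_)
  · rw [show (g⁻¹ * X * g⁻¹⁻¹)⁻¹ * (g⁻¹ * Y * g⁻¹⁻¹)⁻¹ * (g⁻¹ * X * g⁻¹⁻¹) *
      (g⁻¹ * Y * g⁻¹⁻¹) = g⁻¹ * (X⁻¹ * Y⁻¹ * X * Y) * g by group, map_mul π _ g,
      map_mul π g⁻¹, hg, ← map_mul, ← map_mul]
    congr 1
    group
  · rwa [PingPong.trace_conj]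

lemma comm_trace_le (H : TorusRep π v₀ v f s t A C B₀ ρ) {X Y : FreeGroup (Fin 2)}
    (h : CommPair π X Y) : v (mat (ρ (X⁻¹ * Y⁻¹ * X * Y))).trace ≤ 1 := by
  obtain ⟨g, j, hg, hj⟩ := h.comm
  have h1 : v (mat (ρ (g * xc ^ j * g⁻¹))).trace ≤ 1 := by
    rw [PingPong.trace_conj]
    exact PingPong.Bounded.trace (H.pingPong.bounded_vertex _ (zpow_mem (xc_mem_vertex π) j))
  rcases Same.trace (H.same_of_eq hg) with h2 | h2 <;> rw [h2]
  · exact h1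
  · rwa [Valuation.map_neg]

/-- Every pair of elements with the exponent sums and the commutator of a basis comes from a
tame automorphism. -/
theorem tamePair (H : TorusRep π v₀ v f s t A C B₀ ρ) {X Y : FreeGroup (Fin 2)}
    (h : CommPair π X Y) : TamePair π X Y := by
  have P := H.pingPong
  have ht : v t ≠ 0 := (zero_lt_one.trans H.one_lt).ne'
  have key : ∀ N : ℕ, ∀ X Y : FreeGroup (Fin 2), ∀ k l : ℕ, CommPair π X Y → k + l ≤ N → l ≤ k →
      (k = 0 → v (mat (ρ X)).trace ≤ 1) → (0 < k → v (mat (ρ X)).trace = v t ^ k) →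
      (l = 0 → v (mat (ρ Y)).trace ≤ 1) → (0 < l → v (mat (ρ Y)).trace = v t ^ l) →
      TamePair π X Y := by
    intro N
    induction N with
    | zero =>
      intro X Y k l h hN hkl hX _ _ _
      exact H.tamePair_of_trace_le h (hX (by omega))
    | succ N ih =>
      intro X Y k l h hN hkl hX hX' hY hY'
      rcases Nat.eq_zero_or_pos l with rfl | hl
      · exact (H.tamePair_of_trace_le h.swap (hY rfl)).swap
      have hk := hl.trans_le hkl
      specialize hX' hk
      specialize hY' hl
      have step : ∀ Z, CommPair π Z Y → v (mat (ρ Z)).trace < v t ^ k → TamePair π Z Y := by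
        intro Z hZ hlt
        obtain ⟨m, hm, hm'⟩ := P.exists_trace_eq Z
        have hmk : m < k := by
          rcases Nat.eq_zero_or_pos m with rfl | hm0
          · exact hk
          · rw [hm' hm0] at hlt
            exact (pow_lt_pow_iff_right₀ H.one_lt).1 hlt
        rcases le_total l m with hlm | hlm
        · exact ih Z Y m l hZ (by omega) hlm hm hm' hY (fun _ => hY')
        · exact (ih Y Z l m hZ.swap (by omega) hlm hY (fun _ => hY') hm hm').swap
      have hsum := trace_mul_inv (ρ X) (ρ Y)
      have hcomm := trace_commutator (ρ X) (ρ Y)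
      have hc := H.comm_trace_le h
      simp only [map_mul ρ, map_inv ρ] at hc
      by_cases h1 : v (mat (ρ (X * Y))).trace < v t ^ k
      · have := (step _ h.mul h1).inv_right.mul.inv_right
        rwa [mul_inv_cancel_right, inv_inv] at this
      by_cases h2 : v (mat (ρ (X * Y⁻¹))).trace < v t ^ k
      · have := (step _ (by simpa using h.inv_right.mul.inv_right) h2).mul
        rwa [inv_mul_cancel_right] at this
      exfalso
      simp only [map_mul ρ, map_inv ρ, not_lt] at h1 h2
      have hprod : (mat (ρ X * ρ Y)).trace * (mat (ρ X * (ρ Y)⁻¹)).trace =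
          (mat (ρ X)).trace ^ 2 + ((mat (ρ Y)).trace ^ 2 +
            (-(mat ((ρ X)⁻¹ * (ρ Y)⁻¹ * ρ X * ρ Y)).trace - 2)) := by
        linear_combination (mat (ρ X * ρ Y)).trace * hsum + hcomm
      have hx2 : v ((mat (ρ X)).trace ^ 2) ≤ v t ^ k * v t ^ k := by rw [map_pow, hX', pow_two]
      have hy2 : v ((mat (ρ Y)).trace ^ 2) ≤ v t ^ k * v t ^ k := by
        rw [map_pow, hY', pow_two]
        have := pow_le_pow_right₀ H.one_lt.le hkl
        gcongr
      have h1k : 1 ≤ v t ^ k * v t ^ k :=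
        one_le_mul (one_le_pow₀ H.one_lt.le) (one_le_pow₀ H.one_lt.le)
      have htwo : v (2 : K) ≤ 1 := by
        rw [← one_add_one_eq_two]
        exact v.map_add_le (by simp) (by simp)
      have hle : v (mat (ρ X * ρ Y)).trace * v (mat (ρ X * (ρ Y)⁻¹)).trace ≤
          v t ^ k * v t ^ k := by
        rw [← map_mul, hprod]
        refine v.map_add_le hx2 (v.map_add_le hy2 (v.map_sub_le ?_ (htwo.trans h1k)))
        rw [Valuation.map_neg]
        exact hc.trans h1k
      have hpos : 0 < v t ^ k := pow_pos (zero_lt_one.trans H.one_lt) k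
      have hz : v (mat (ρ X * ρ Y)).trace ≤ v t ^ k := by
        by_contra! hlt
        rw [mul_comm] at hle
        exact (hle.trans_lt (mul_lt_mul_of_le_of_lt_of_nonneg_of_pos h2 hlt zero_le
          (hpos.trans_le h2))).false
      have hz' : v (mat (ρ X * (ρ Y)⁻¹)).trace ≤ v t ^ k := by
        by_contra! hlt
        exact (hle.trans_lt (mul_lt_mul_of_le_of_lt_of_nonneg_of_pos h1 hlt zero_le
          (hpos.trans_le h1))).false
      have hlt := v.map_add_le hz hz'
      rw [hsum, map_mul, hX', hY', ← pow_add] at hlt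
      have := (pow_le_pow_iff_right₀ H.one_lt).1 hlt
      omega
  obtain ⟨k, hk, hk'⟩ := P.exists_trace_eq X
  obtain ⟨l, hl, hl'⟩ := P.exists_trace_eq Y
  rcases le_total l k with hlk | hlk
  · exact key _ X Y k l h le_rfl hlk hk hk' hl hl'
  · exact (key _ Y X l k h.swap le_rfl hlk hl hl' hk hk').swap

end TorusRep

end Terminal

section Fricke

/-- The ring of polynomials in the three trace coordinates. -/
abbrev TracePoly := Polynomial (MvPolynomial (Fin 2) ℂ)

namespace TracePoly

variable {L : Type} [Field L]

/-- Evaluation of a trace polynomial. -/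
noncomputable def evalAt (i : ℂ →+* L) (x y z : L) : TracePoly →+* L :=
  Polynomial.eval₂RingHom (MvPolynomial.eval₂Hom i ![x, y]) z

/-- The three trace coordinates. -/
noncomputable def coord : Fin 3 → TracePoly :=
  ![Polynomial.C (MvPolynomial.X 0), Polynomial.C (MvPolynomial.X 1), Polynomial.X]

@[simp] lemma evalAt_coord_zero (i : ℂ →+* L) (x y z : L) : evalAt i x y z (coord 0) = x := by
  simp [evalAt, coord]

@[simp] lemma evalAt_coord_one (i : ℂ →+* L) (x y z : L) : evalAt i x y z (coord 1) = y := by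
  simp [evalAt, coord]

@[simp] lemma evalAt_coord_two (i : ℂ →+* L) (x y z : L) : evalAt i x y z (coord 2) = z := by
  simp [evalAt, coord]

/-- Evaluation of a trace polynomial at a representation of the free group. -/
noncomputable def evalRep (i : ℂ →+* L)
    (ρ : FreeGroup (Fin 2) →* Matrix.SpecialLinearGroup (Fin 2) L) : TracePoly →+* L :=
  evalAt i (mat (ρ xa)).trace (mat (ρ xb)).trace (mat (ρ (xa * xb))).trace

lemma ringHom_ext {T : Type*} [CommRing T] {g h : TracePoly →+* T}
    (hC : ∀ c : ℂ, g (Polynomial.C (MvPolynomial.C c)) = h (Polynomial.C (MvPolynomial.C c)))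
    (hX : ∀ k, g (coord k) = h (coord k)) : g = h := by
  refine Polynomial.ringHom_ext' (MvPolynomial.ringHom_ext hC ?_) (hX 2)
  intro k
  fin_cases k
  · exact hX 0
  · exact hX 1

lemma eq_zero_of_evalAt {p : TracePoly} (h : ∀ x y z : ℂ, evalAt (RingHom.id ℂ) x y z p = 0) :
    p = 0 := by
  ext1 n
  refine MvPolynomial.funext fun u => ?_
  have h1 : p.map (MvPolynomial.eval u) = 0 := by
    refine Polynomial.funext fun z => ?_
    have := h (u 0) (u 1) z
    have hu : ![u 0, u 1] = u := by
      ext k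
      fin_cases k <;> rfl
    rw [Polynomial.eval_map, Polynomial.eval_zero]
    rw [evalAt, hu] at this
    exact this
  have h2 := congrArg (fun q => Polynomial.coeff q n) h1
  simpa using h2

/-- The linear combination of `1`, `A`, `B` and `A * B` with coefficients in trace polynomials. -/
noncomputable def combo (i : ℂ →+* L)
    (ρ : FreeGroup (Fin 2) →* Matrix.SpecialLinearGroup (Fin 2) L) (q : Fin 4 → TracePoly) :
    Matrix (Fin 2) (Fin 2) L :=
  evalRep i ρ (q 0) • 1 + evalRep i ρ (q 1) • mat (ρ xa) + evalRep i ρ (q 2) • mat (ρ xb) +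
    evalRep i ρ (q 3) • mat (ρ (xa * xb))

lemma cayley (M : Matrix.SpecialLinearGroup (Fin 2) L) :
    mat M * mat M = (mat M).trace • mat M - 1 := by
  have := mat_det M
  ext i j
  fin_cases i <;> fin_cases j <;>
    simp [Matrix.mul_apply, Fin.sum_univ_two, trace_fin_two] <;>
    first | linear_combination this | linear_combination -this | linear_combination 0 * this

lemma cayley_mul (M N : Matrix (Fin 2) (Fin 2) L) :
    N * M = M.trace • N + N.trace • M + ((M * N).trace - M.trace * N.trace) • 1 - M * N := by
  ext i j
  fin_cases i <;> fin_cases j <;>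
    simp [Matrix.mul_apply, Fin.sum_univ_two, trace_fin_two] <;> ring

lemma inv_eq (M : Matrix.SpecialLinearGroup (Fin 2) L) :
    mat M⁻¹ = (mat M).trace • 1 - mat M := by
  rw [mat_inv]
  ext i j
  fin_cases i <;> fin_cases j <;> simp [trace_fin_two]

lemma exists_combo (w : FreeGroup (Fin 2)) : ∀ q : Fin 4 → TracePoly, ∃ q' : Fin 4 → TracePoly,
    ∀ (L : Type) [Field L] (i : ℂ →+* L)
      (ρ : FreeGroup (Fin 2) →* Matrix.SpecialLinearGroup (Fin 2) L),
      mat (ρ w) * combo i ρ q = combo i ρ q' := by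
  have ha : ∀ q : Fin 4 → TracePoly, ∃ q' : Fin 4 → TracePoly, ∀ (L : Type) [Field L] (i : ℂ →+* L)
      (ρ : FreeGroup (Fin 2) →* Matrix.SpecialLinearGroup (Fin 2) L),
      mat (ρ xa) * combo i ρ q = combo i ρ q' := by
    intro q
    refine ⟨![-q 1, q 0 + coord 0 * q 1, -q 3, q 2 + coord 0 * q 3], ?_⟩
    intro L _ i ρ
    have h := cayley (ρ xa)
    have h' : mat (ρ xa) * (mat (ρ xa) * mat (ρ xb)) =
        (mat (ρ xa)).trace • (mat (ρ xa) * mat (ρ xb)) - mat (ρ xb) := by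
      rw [← mul_assoc, h, sub_mul, smul_mul_assoc, one_mul]
    simp only [combo, map_mul ρ, map_mul mat, mul_add, mul_smul_comm, h, h', mul_one]
    simp only [evalRep, map_add, map_neg, map_mul, evalAt_coord_zero, Matrix.cons_val]
    module
  have hb : ∀ q : Fin 4 → TracePoly, ∃ q' : Fin 4 → TracePoly, ∀ (L : Type) [Field L] (i : ℂ →+* L)
      (ρ : FreeGroup (Fin 2) →* Matrix.SpecialLinearGroup (Fin 2) L),
      mat (ρ xb) * combo i ρ q = combo i ρ q' := by
    intro q
    refine ⟨![(coord 2 - coord 0 * coord 1) * q 1 - q 2 - coord 0 * q 3, coord 1 * q 1 + q 3,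
      q 0 + coord 0 * q 1 + coord 1 * q 2 + coord 2 * q 3, -q 1], ?_⟩
    intro L _ i ρ
    have h := cayley (ρ xb)
    have hc := cayley_mul (mat (ρ xa)) (mat (ρ xb))
    have h' : mat (ρ xb) * (mat (ρ xa) * mat (ρ xb)) =
        (mat (ρ xa * ρ xb)).trace • mat (ρ xb) + mat (ρ xa) - (mat (ρ xa)).trace • 1 := by
      rw [← mul_assoc, hc]
      simp only [sub_mul, add_mul, smul_mul_assoc, one_mul, mul_assoc, h, mul_sub, mul_smul_comm,
        mul_one, map_mul]
      module
    simp only [combo, map_mul ρ, map_mul mat, mul_add, mul_smul_comm, h, h', hc, mul_one]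
    simp only [evalRep, map_add, map_neg, map_sub, map_mul, evalAt_coord_zero, evalAt_coord_one,
      evalAt_coord_two, Matrix.cons_val]
    module
  have hinv : ∀ (j : Fin 2) (r : TracePoly), (∀ (L : Type) [Field L] (i : ℂ →+* L)
      (ρ : FreeGroup (Fin 2) →* Matrix.SpecialLinearGroup (Fin 2) L),
        evalRep i ρ r = (mat (ρ (FreeGroup.of j))).trace) → (∀ q : Fin 4 → TracePoly,
      ∃ q' : Fin 4 → TracePoly, ∀ (L : Type) [Field L] (i : ℂ →+* L)
      (ρ : FreeGroup (Fin 2) →* Matrix.SpecialLinearGroup (Fin 2) L),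
      mat (ρ (FreeGroup.of j)) * combo i ρ q = combo i ρ q') → ∀ q : Fin 4 → TracePoly,
      ∃ q' : Fin 4 → TracePoly, ∀ (L : Type) [Field L] (i : ℂ →+* L)
      (ρ : FreeGroup (Fin 2) →* Matrix.SpecialLinearGroup (Fin 2) L),
      mat (ρ (FreeGroup.of j)⁻¹) * combo i ρ q = combo i ρ q' := by
    intro j r hr h q
    obtain ⟨q', hq'⟩ := h q
    refine ⟨r • q - q', ?_⟩
    intro L _ i ρ
    rw [map_inv, inv_eq, sub_mul, hq', smul_mul_assoc, one_mul, ← hr L i ρ]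
    simp only [combo, Pi.sub_apply, Pi.smul_apply, smul_eq_mul, map_sub, map_mul]
    module
  induction w using FreeGroup.induction_on with
  | C1 => exact fun q => ⟨q, fun L _ i ρ => by rw [map_one, map_one, one_mul]⟩
  | of j =>
    fin_cases j
    · exact ha
    · exact hb
  | inv_of j _ =>
    fin_cases j
    · exact hinv 0 (coord 0) (fun L _ i ρ => by simp [evalRep]) ha
    · exact hinv 1 (coord 1) (fun L _ i ρ => by simp [evalRep]) hb
  | mul x y hx hy =>
    intro q
    obtain ⟨q₁, h₁⟩ := hy q
    obtain ⟨q₂, h₂⟩ := hx q₁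
    exact ⟨q₂, fun L _ i ρ => by rw [map_mul, map_mul, mul_assoc, h₁, h₂]⟩

/-- Traces of words are polynomials in the three trace coordinates. -/
lemma exists_trace (w : FreeGroup (Fin 2)) : ∃ p : TracePoly,
    ∀ (L : Type) [Field L] (i : ℂ →+* L)
      (ρ : FreeGroup (Fin 2) →* Matrix.SpecialLinearGroup (Fin 2) L),
      (mat (ρ w)).trace = evalRep i ρ p := by
  obtain ⟨q, hq⟩ := exists_combo w ![1, 0, 0, 0]
  refine ⟨q 0 + q 0 + q 1 * coord 0 + q 2 * coord 1 + q 3 * coord 2, ?_⟩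
  intro L _ i ρ
  have h := hq L i ρ
  have h1 : combo i ρ ![1, 0, 0, 0] = 1 := by simp [combo]
  rw [h1, mul_one] at h
  rw [h, combo]
  simp [evalRep, trace_add, trace_smul]
  ring

/-- The trace polynomial of a word. -/
noncomputable def tracePoly (w : FreeGroup (Fin 2)) : TracePoly := (exists_trace w).choose

lemma evalRep_tracePoly (w : FreeGroup (Fin 2)) (i : ℂ →+* L)
    (ρ : FreeGroup (Fin 2) →* Matrix.SpecialLinearGroup (Fin 2) L) :
    evalRep i ρ (tracePoly w) = (mat (ρ w)).trace := ((exists_trace w).choose_spec L i ρ).symm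

/-- The action of an endomorphism of the free group on trace polynomials. -/
noncomputable def pull (φ : FreeGroup (Fin 2) →* FreeGroup (Fin 2)) : TracePoly →+* TracePoly :=
  Polynomial.eval₂RingHom (MvPolynomial.eval₂Hom (Polynomial.C.comp MvPolynomial.C)
    ![tracePoly (φ xa), tracePoly (φ xb)]) (tracePoly (φ (xa * xb)))

lemma pull_coord_zero (φ : FreeGroup (Fin 2) →* FreeGroup (Fin 2)) :
    pull φ (coord 0) = tracePoly (φ xa) := by simp [pull, coord]

lemma pull_coord_one (φ : FreeGroup (Fin 2) →* FreeGroup (Fin 2)) :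
    pull φ (coord 1) = tracePoly (φ xb) := by simp [pull, coord]

lemma pull_coord_two (φ : FreeGroup (Fin 2) →* FreeGroup (Fin 2)) :
    pull φ (coord 2) = tracePoly (φ (xa * xb)) := by simp [pull, coord]

lemma evalRep_pull (φ : FreeGroup (Fin 2) →* FreeGroup (Fin 2)) (i : ℂ →+* L)
    (ρ : FreeGroup (Fin 2) →* Matrix.SpecialLinearGroup (Fin 2) L) (p : TracePoly) :
    evalRep i ρ (pull φ p) = evalRep i (ρ.comp φ) p := by
  suffices h : (evalRep i ρ).comp (pull φ) = evalRep i (ρ.comp φ) from RingHom.congr_fun h p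
  refine ringHom_ext (fun c => by simp [pull, evalRep, evalAt]) fun k => ?_
  rw [RingHom.comp_apply]
  fin_cases k
  · exact (congrArg _ (pull_coord_zero φ)).trans
      ((evalRep_tracePoly _ i ρ).trans (evalAt_coord_zero _ _ _ _).symm)
  · exact (congrArg _ (pull_coord_one φ)).trans
      ((evalRep_tracePoly _ i ρ).trans (evalAt_coord_one _ _ _ _).symm)
  · exact (congrArg _ (pull_coord_two φ)).trans
      ((evalRep_tracePoly _ i ρ).trans (evalAt_coord_two _ _ _ _).symm)

/-- The polynomial expressing the trace of the commutator of the generators, minus two. -/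
noncomputable def fricke : TracePoly :=
  Polynomial.X ^ 2 - Polynomial.C (MvPolynomial.X 0 * MvPolynomial.X 1) * Polynomial.X +
    Polynomial.C (MvPolynomial.X 0 ^ 2 + MvPolynomial.X 1 ^ 2 - 4)

lemma fricke_natDegree : fricke.natDegree = 2 := by
  unfold fricke
  compute_degree!

lemma fricke_monic : fricke.Monic := by
  unfold fricke
  monicity!

lemma evalAt_fricke (i : ℂ →+* L) (x y z : L) :
    evalAt i x y z fricke = z ^ 2 - x * y * z + (x ^ 2 + y ^ 2 - 4) := by
  simp [evalAt, fricke, Polynomial.eval₂_pow]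

lemma evalRep_fricke (i : ℂ →+* L)
    (ρ : FreeGroup (Fin 2) →* Matrix.SpecialLinearGroup (Fin 2) L) :
    evalRep i ρ fricke = (mat (ρ xc)).trace - 2 := by
  have := trace_commutator (ρ xa) (ρ xb)
  rw [xc, evalRep, evalAt_fricke]
  simp only [map_mul ρ, map_inv ρ] at this ⊢
  rw [this]
  ring

/-- The embedding of the diagonal torus. -/
noncomputable def diagSL : ℂˣ →* Matrix.SpecialLinearGroup (Fin 2) ℂ where
  toFun x := ⟨!![(x : ℂ), 0; 0, (x : ℂ)⁻¹], by simp [det_fin_two]⟩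
  map_one' := by
    apply Subtype.ext
    simp [one_fin_two]
  map_mul' x y := by
    apply mat_inj.1
    refine Eq.trans ?_ (map_mul mat _ _).symm
    change !![((x * y : ℂˣ) : ℂ), 0; 0, ((x * y : ℂˣ) : ℂ)⁻¹] =
      !![(x : ℂ), 0; 0, (x : ℂ)⁻¹] * !![(y : ℂ), 0; 0, (y : ℂ)⁻¹]
    simp [mul_comm]

lemma trace_diagSL (x : ℂˣ) : (mat (diagSL x)).trace = x + (x : ℂ)⁻¹ := by
  change (!![(x : ℂ), 0; 0, (x : ℂ)⁻¹]).trace = _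
  simp [trace_fin_two]

lemma exists_add_inv (z : ℂ) : ∃ x : ℂˣ, (x : ℂ) + (x : ℂ)⁻¹ = z := by
  obtain ⟨r, hr⟩ := IsAlgClosed.exists_pow_nat_eq (z ^ 2 - 4) (n := 2) two_pos
  have h : (z + r) / 2 * ((z - r) / 2) = 1 := by linear_combination -hr / 4
  refine ⟨Units.mkOfMulEqOne _ _ h, ?_⟩
  rw [Units.val_mkOfMulEqOne, inv_eq_of_mul_eq_one_right h]
  ring

/-- Pullback along an endomorphism multiplies the Fricke polynomial. -/
lemma fricke_dvd_pull (φ : FreeGroup (Fin 2) →* FreeGroup (Fin 2)) : fricke ∣ pull φ fricke := by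
  set F := pull φ fricke with hF
  have hev : ∀ x y : ℂˣ, evalAt (RingHom.id ℂ) (x + (x : ℂ)⁻¹) (y + (y : ℂ)⁻¹)
      ((x * y : ℂˣ) + ((x * y : ℂˣ) : ℂ)⁻¹) (F %ₘ fricke) = 0 := by
    intro x y
    set ρ := diagSL.comp (FreeGroup.lift ![x, y]) with hρ
    have hcomm : ∀ g h : FreeGroup (Fin 2), ρ g * ρ h = ρ h * ρ g := by
      intro g h
      simp only [hρ, MonoidHom.comp_apply, ← map_mul diagSL, mul_comm]
    have h1 : ∀ p, evalAt (RingHom.id ℂ) (x + (x : ℂ)⁻¹) (y + (y : ℂ)⁻¹)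
      ((x * y : ℂˣ) + ((x * y : ℂˣ) : ℂ)⁻¹) p = evalRep (RingHom.id ℂ) ρ p := by
      intro p
      have ha : ρ xa = diagSL x := by simp [hρ]
      have hb : ρ xb = diagSL y := by simp [hρ]
      rw [evalRep, map_mul ρ, ha, hb, ← map_mul diagSL, trace_diagSL, trace_diagSL, trace_diagSL]
    have hred : ∀ ψ : FreeGroup (Fin 2) →* FreeGroup (Fin 2),
        evalRep (RingHom.id ℂ) (ρ.comp ψ) fricke = 0 := by
      intro ψ
      rw [evalRep_fricke]
      have : (ρ.comp ψ) xc = 1 := by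
        simp only [xc, map_mul, map_inv, MonoidHom.comp_apply]
        rw [mul_assoc, hcomm (ψ xa) (ψ xb)]
        group
      rw [this, map_one, trace_one]
      simp
    rw [h1, Polynomial.modByMonic_eq_sub_mul_div, map_sub, map_mul, hF,
      evalRep_pull, hred]
    have := hred (MonoidHom.id _)
    rw [MonoidHom.comp_id] at this
    rw [this]
    ring
  rw [← Polynomial.modByMonic_eq_zero_iff_dvd fricke_monic]
  set r := F %ₘ fricke with hr
  have hdeg : r.natDegree ≤ 1 := by
    have := Polynomial.natDegree_modByMonic_lt F fricke_monic (by
      intro h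
      have := fricke_natDegree
      simp [h] at this)
    rw [fricke_natDegree, ← hr] at this
    omega
  obtain ⟨g₁, g₀, hg⟩ := Polynomial.exists_eq_X_add_C_of_natDegree_le_one hdeg
  have hev' : ∀ x y : ℂˣ, ∀ u : Fin 2 → ℂ, (x : ℂ) + (x : ℂ)⁻¹ = u 0 → (y : ℂ) + (y : ℂ)⁻¹ = u 1 →
      MvPolynomial.eval u g₁ * ((x * y : ℂˣ) + ((x * y : ℂˣ) : ℂ)⁻¹) +
        MvPolynomial.eval u g₀ = 0 := by
    intro x y u hx hy
    have h := hev x y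
    have hu : ![u 0, u 1] = u := by
      ext k
      fin_cases k <;> rfl
    rw [hg, hx, hy] at h
    simp only [evalAt, hu, Polynomial.coe_eval₂RingHom, Polynomial.eval₂_add, Polynomial.eval₂_mul,
      Polynomial.eval₂_C, Polynomial.eval₂_X] at h
    exact h
  have e1 : g₁ * (MvPolynomial.X 0 ^ 2 - 4) * (MvPolynomial.X 1 ^ 2 - 4) = 0 := by
    refine MvPolynomial.funext fun u => ?_
    obtain ⟨x, hx⟩ := exists_add_inv (u 0)
    obtain ⟨y, hy⟩ := exists_add_inv (u 1)
    have h1 := hev' x y u hx hy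
    have h2 := hev' x y⁻¹ u hx (by rw [← hy]; simp [add_comm])
    have hx0 : (x : ℂ) * (x : ℂ)⁻¹ = 1 := mul_inv_cancel₀ x.ne_zero
    have hy0 : (y : ℂ) * (y : ℂ)⁻¹ = 1 := mul_inv_cancel₀ y.ne_zero
    simp only [Units.val_mul, Units.val_inv_eq_inv_val, _root_.mul_inv_rev, inv_inv] at h1 h2
    simp only [map_mul, map_sub, map_pow, MvPolynomial.eval_X, map_zero, map_ofNat, ← hx, ← hy]
    have hx2 : ((x : ℂ) + (x : ℂ)⁻¹) ^ 2 - 4 = ((x : ℂ) - (x : ℂ)⁻¹) ^ 2 := by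
      linear_combination 4 * hx0
    have hy2 : ((y : ℂ) + (y : ℂ)⁻¹) ^ 2 - 4 = ((y : ℂ) - (y : ℂ)⁻¹) ^ 2 := by
      linear_combination 4 * hy0
    rw [hx2, hy2]
    linear_combination ((x : ℂ) - (x : ℂ)⁻¹) * ((y : ℂ) - (y : ℂ)⁻¹) * (h1 - h2)
  have hX : ∀ k : Fin 2, (MvPolynomial.X k ^ 2 - 4 : MvPolynomial (Fin 2) ℂ) ≠ 0 := by
    intro k h
    have := congrArg (MvPolynomial.eval 0) h
    rw [map_sub, map_pow, MvPolynomial.eval_X, map_ofNat] at this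
    norm_num at this
  have e2 : g₁ = 0 := by simpa [hX] using e1
  have e3 : g₀ = 0 := by
    refine MvPolynomial.funext fun u => ?_
    obtain ⟨x, hx⟩ := exists_add_inv (u 0)
    obtain ⟨y, hy⟩ := exists_add_inv (u 1)
    have h1 := hev' x y u hx hy
    rw [e2, map_zero, zero_mul, zero_add] at h1
    rw [h1, map_zero]
  rw [hg, e2, e3]
  simp

lemma exists_rep (x y z : ℂ) : ∃ ρ : FreeGroup (Fin 2) →* Matrix.SpecialLinearGroup (Fin 2) ℂ,
    evalRep (RingHom.id ℂ) ρ = evalAt (RingHom.id ℂ) x y z := by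
  obtain ⟨w, hw⟩ := exists_add_inv z
  set A : Matrix.SpecialLinearGroup (Fin 2) ℂ := ⟨!![x, -1; 1, 0], by simp [det_fin_two]⟩
  set B : Matrix.SpecialLinearGroup (Fin 2) ℂ :=
    ⟨!![0, (w : ℂ); -(w : ℂ)⁻¹, y], by simp [det_fin_two]⟩
  refine ⟨rep A B, ?_⟩
  have ha : (mat A).trace = x := by simp [mat, A, trace_fin_two]
  have hb : (mat B).trace = y := by simp [mat, B, trace_fin_two]
  have hab : (mat (A * B)).trace = z := by
    rw [map_mul, ← hw]
    simp [mat, A, B, trace_fin_two, add_comm]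
  rw [evalRep, map_mul (rep A B), rep_xa, rep_xb, ha, hb, hab]

lemma pull_pull {φ ψ : FreeGroup (Fin 2) →* FreeGroup (Fin 2)} (h : φ.comp ψ = MonoidHom.id _)
    (p : TracePoly) : pull φ (pull ψ p) = p := by
  rw [← sub_eq_zero]
  refine eq_zero_of_evalAt fun x y z => ?_
  obtain ⟨ρ, hρ⟩ := exists_rep x y z
  rw [← hρ, map_sub, evalRep_pull, evalRep_pull, MonoidHom.comp_assoc, h, MonoidHom.comp_id,
    sub_self]

/-- The trace of the image of a commutator of a basis is determined by a complex constant. -/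
theorem exists_trace_commutator (φ : MulAut (FreeGroup (Fin 2))) : ∃ γ : ℂ,
    ∀ (L : Type) [Field L] (i : ℂ →+* L)
      (ρ : FreeGroup (Fin 2) →* Matrix.SpecialLinearGroup (Fin 2) L),
      (mat (ρ (φ xc))).trace = i γ * ((mat (ρ xc)).trace - 2) + 2 := by
  obtain ⟨g, hg⟩ := fricke_dvd_pull φ.toMonoidHom
  obtain ⟨g', hg'⟩ := fricke_dvd_pull (φ⁻¹).toMonoidHom
  have h1 : fricke * (g * pull φ.toMonoidHom g') = fricke * 1 := by
    rw [← mul_assoc, ← hg, ← map_mul, ← hg', mul_one]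
    refine pull_pull ?_ _
    ext w
    simp
  have hu : IsUnit g :=
    IsUnit.of_mul_eq_one _ (mul_left_cancel₀ fricke_monic.ne_zero h1)
  obtain ⟨r, hr, rfl⟩ := Polynomial.isUnit_iff.1 hu
  obtain ⟨γ, hγ, rfl⟩ := MvPolynomial.isUnit_iff_eq_C_of_isReduced.1 hr
  refine ⟨γ, fun L _ i ρ => ?_⟩
  have h2 := congrArg (evalRep i ρ) hg
  rw [evalRep_pull, evalRep_fricke, map_mul, evalRep_fricke] at h2
  have h3 : evalRep i ρ (Polynomial.C (MvPolynomial.C γ)) = i γ := by simp [evalRep, evalAt]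
  rw [h3] at h2
  change (mat (ρ (φ xc))).trace - 2 = _ at h2
  linear_combination h2

end TracePoly

end Fricke

section Automorphism

variable {Q K₀ K Γ₀ Γ₁ : Type*} [Group Q] [Field K₀] [Field K]
  [LinearOrderedCommGroupWithZero Γ₀] [LinearOrderedCommGroupWithZero Γ₁]
  {π : FreeGroup (Fin 2) →* Q} {v₀ : Valuation K₀ Γ₀} {v : Valuation K Γ₁}
  {f : K₀ →+* K} {s : K₀} {t : K} {A C B₀ : Matrix.SpecialLinearGroup (Fin 2) K₀}
  {ρ : FreeGroup (Fin 2) →* Matrix.SpecialLinearGroup (Fin 2) K}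

lemma Red.pow {Γ : Type*} [Group Γ] {V : Subgroup Γ} {E : Bool → Subgroup Γ} {β : Γ} {ε : Bool}
    {g : Γ} {m : ℕ} (hg : Red V E β ε g ε m) (n : ℕ) : Red V E β ε (g ^ n) ε (n * m) := by
  induction n with
  | zero =>
    rw [pow_zero, zero_mul]
    exact Red.nil ε
  | succ n ih =>
    rw [pow_succ, Nat.succ_mul]
    exact ih.mul hg

lemma PingPong.trace_le_of_pow {Γ : Type*} [Group Γ] {V : Subgroup Γ} {E : Bool → Subgroup Γ}
    {β : Γ} {ρ : Γ →* Matrix.SpecialLinearGroup (Fin 2) K} {P P'}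
    (H : PingPong v ρ V E β t P P') {g : Γ} {n : ℕ} (hn : 0 < n)
    (h : v (mat (ρ (g ^ n))).trace ≤ 1) : v (mat (ρ g)).trace ≤ 1 := by
  rcases H.conj_or_cyclic g with ⟨x, hx⟩ | ⟨x, δ, k, hr, hk⟩
  · rw [← PingPong.trace_conj ρ x]
    exact PingPong.Bounded.trace (H.bounded_vertex _ hx)
  · exfalso
    have h1 := H.trace_eq (hr.pow n) (Nat.mul_pos hn hk)
    rw [conj_pow, PingPong.trace_conj] at h1
    rw [h1] at h
    exact (one_lt_pow₀ H.one_lt (Nat.mul_pos hn hk).ne').not_ge h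

lemma trace_le_of_sign {M : Matrix (Fin 2) (Fin 2) K} (h : M = 1 ∨ M = -1) : v M.trace ≤ 1 := by
  have htwo : v (2 : K) ≤ 1 := by
    rw [← one_add_one_eq_two]
    exact v.map_add_le (by simp) (by simp)
  rcases h with rfl | rfl
  · rw [trace_one]
    simpa using htwo
  · rw [Matrix.trace_neg, Valuation.map_neg, trace_one]
    simpa using htwo

lemma σ_endo (i : Fin 2) (X Y w : FreeGroup (Fin 2)) :
    σ i (endo X Y w) = σ 0 w * σ i X + σ 1 w * σ i Y := by
  have h : ∀ x : FreeGroup (Fin 2), σ i (endo X Y x) = σ 0 x * σ i X + σ 1 x * σ i Y := by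
    intro x
    induction x using FreeGroup.induction_on with
    | C1 => simp [σ_one]
    | of j =>
      fin_cases j
      · have := σ_xa 0
        have := σ_xa 1
        simp_all [xa]
      · have := σ_xb 0
        have := σ_xb 1
        simp_all [xb]
    | inv_of j h =>
      rw [map_inv, σ_inv, h, σ_inv, σ_inv]
      ring
    | mul x y hx hy =>
      rw [map_mul, σ_mul, hx, hy, σ_mul, σ_mul]
      ring
  exact h w

lemma expDet_endo (X Y U W : FreeGroup (Fin 2)) :
    expDet (endo X Y U) (endo X Y W) = expDet U W * expDet X Y := by
  simp only [expDet, σ_endo]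
  ring

lemma expDet_one : expDet xa xb = 1 := by
  rw [expDet, σ_xa, σ_xb, σ_xa, σ_xb]
  simp

/-- The trace of the image of `xc` under every automorphism is integral and comes from the ground
field. -/
def IntegralTrace (π : FreeGroup (Fin 2) →* Q) (v₀ : Valuation K₀ Γ₀) (f : K₀ →+* K)
    (ρ : FreeGroup (Fin 2) →* Matrix.SpecialLinearGroup (Fin 2) K) : Prop :=
  ∀ (φ : MulAut Q) (w : FreeGroup (Fin 2)), π w = φ (π xc) →
    ∃ x, v₀ x ≤ 1 ∧ (mat (ρ w)).trace = f x

namespace TorusRep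

lemma integralTrace_of_pow (H : TorusRep π v₀ v f s t A C B₀ ρ) {n : ℕ} (hn : 0 < n)
    (hc : π xc ^ n = 1) : IntegralTrace π v₀ f ρ := by
  intro φ w hw
  have hwn : π (w ^ n) = 1 := by rw [map_pow, hw, ← map_pow, hc, map_one]
  obtain ⟨y, hy⟩ := H.pingPong.exists_conj_mem
    (H.pingPong.trace_le_of_pow hn (trace_le_of_sign (H.sign _ hwn)))
  obtain ⟨u, hu, hs⟩ := H.exists_same hy
  have hun : π (incl (u ^ n)) = 1 := by
    rw [map_pow, map_pow, ← hu, ← map_pow, conj_pow, map_mul, map_mul, hwn, mul_one, ← map_mul,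
      mul_inv_cancel, map_one]
  have hle := H.pong.pingPong.trace_le_of_pow hn (trace_le_of_sign (H.pong.sign _ hun))
  have := Same.trace hs
  rw [PingPong.trace_conj, trace_scal, ← map_neg] at this
  rcases this with h | h
  · exact ⟨_, hle, h⟩
  · exact ⟨_, by rwa [Valuation.map_neg], h⟩

lemma exists_conj (H : TorusRep π v₀ v f s t A C B₀ ρ) {w : FreeGroup (Fin 2)} {x : K₀}
    (hx : v₀ x ≤ 1) (hw : (mat (ρ w)).trace = f x) : ∃ g, ∃ j : ℤ, π w = π (g * xc ^ j * g⁻¹) := by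
  have hv : v (mat (ρ w)).trace ≤ 1 := by
    rw [hw]
    by_cases h0 : x = 0
    · simp [h0]
    · exact (H.val_map x h0).le
  obtain ⟨y, hy⟩ := H.pingPong.exists_conj_mem hv
  obtain ⟨g, -, j, hg⟩ := H.trace_le_one hy ((PingPong.trace_conj ρ y w).trans hw) hx
  refine ⟨y⁻¹ * g, j, ?_⟩
  rw [show w = y⁻¹ * (y * w * y⁻¹) * y by group, map_mul π _ y, map_mul π y⁻¹ (y * w * y⁻¹), hg,
    ← map_mul, ← map_mul]
  congr 1
  group

lemma comp_endo {X Y : FreeGroup (Fin 2)} {φ : MulAut Q} (hX : π X = φ (π xa))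
    (hY : π Y = φ (π xb)) (w : FreeGroup (Fin 2)) : π (endo X Y w) = φ (π w) :=
  DFunLike.congr_fun (monoidHom_ext (f := π.comp (endo X Y)) (g := φ.toMonoidHom.comp π)
    (by simpa using hX) (by simpa using hY)) w

lemma commPair (H : TorusRep π v₀ v f s t A C B₀ ρ) (hI : IntegralTrace π v₀ f ρ) (φ : MulAut Q)
    {X Y : FreeGroup (Fin 2)} (hX : π X = φ (π xa)) (hY : π Y = φ (π xb)) : CommPair π X Y := by
  obtain ⟨X', hX'⟩ := H.surj (φ⁻¹ (π xa))
  obtain ⟨Y', hY'⟩ := H.surj (φ⁻¹ (π xb))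
  have hdet : expDet X' Y' * expDet X Y = 1 := by
    rw [← expDet_endo, ← expDet_one]
    have h1 : π (endo X Y X') = π xa := by rw [comp_endo hX hY, hX', MulAut.apply_inv_self]
    have h2 : π (endo X Y Y') = π xb := by rw [comp_endo hX hY, hY', MulAut.apply_inv_self]
    simp only [expDet, H.σ_congr h1, H.σ_congr h2]
  have hc : π (X⁻¹ * Y⁻¹ * X * Y) = φ (π xc) := by
    rw [← comp_endo hX hY]
    simp [xc]
  refine ⟨IsUnit.of_mul_eq_one_right _ hdet, ?_⟩
  obtain ⟨x, hx, hx'⟩ := hI φ _ hc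
  obtain ⟨g, j, hg⟩ := H.exists_conj hx hx'
  refine ⟨g, j, hg, fun h1 => H.ne_one ?_⟩
  rw [hc, map_mul π _ g⁻¹, map_mul π g, map_zpow, h1, mul_one, ← map_mul, mul_inv_cancel,
    map_one] at hg
  simpa using hg

/-- Every automorphism is induced by a tame automorphism of the free group. -/
theorem exists_tame (H : TorusRep π v₀ v f s t A C B₀ ρ) (hI : IntegralTrace π v₀ f ρ)
    (φ : MulAut Q) : ∃ θ ∈ tame, ∀ w, φ (π w) = π (θ w) := by
  obtain ⟨X, hX⟩ := H.surj (φ (π xa))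
  obtain ⟨Y, hY⟩ := H.surj (φ (π xb))
  obtain ⟨θ, hθ, h1, h2⟩ := H.tamePair (H.commPair hI φ hX hY)
  refine ⟨θ, hθ, fun w => ?_⟩
  exact DFunLike.congr_fun (monoidHom_ext (f := φ.toMonoidHom.comp π) (g := π.comp θ.toMonoidHom)
    (by simpa using (h1.trans hX).symm) (by simpa using (h2.trans hY).symm)) w

end TorusRep

/-- In the free group itself, the trace of the image of `xc` is a constant. -/
lemma integralTrace_id {K₀ K : Type} [Field K₀] [Field K] {v₀ : Valuation K₀ Γ₀}
    {f : K₀ →+* K} {ρ : FreeGroup (Fin 2) →* Matrix.SpecialLinearGroup (Fin 2) K} (i : ℂ →+* K₀)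
    (hi : ∀ c, v₀ (i c) ≤ 1) {κ : ℂ} (hκ : (mat (ρ xc)).trace = f (i κ)) :
    IntegralTrace (MonoidHom.id _) v₀ f ρ := by
  rintro φ w (rfl : w = φ xc)
  obtain ⟨γ, hγ⟩ := TracePoly.exists_trace_commutator φ
  refine ⟨i (γ * (κ - 2) + 2), hi _, ?_⟩
  rw [hγ K (f.comp i) ρ, hκ]
  simp only [RingHom.comp_apply, map_add, map_mul, map_sub, map_ofNat]

end Automorphism

section NormalForm

variable {Γ : Type*} [Group Γ] {d i L : Γ}

/-- The elements `L`, `d * L * d` and their inverses are permuted by conjugation. -/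
lemma conj_mem_letters (hd : d * d = 1) (hi : i * i = 1) (hiL : i * L * i = L⁻¹)
    (hdL : d * i * d * L * (d * i * d) = L⁻¹) {x : Γ} (hx : x ∈ Subgroup.closure {d, i}) {y : Γ}
    (hy : y ∈ ({L, d * L * d, L⁻¹, (d * L * d)⁻¹} : Set Γ)) :
    x⁻¹ * y * x ∈ ({L, d * L * d, L⁻¹, (d * L * d)⁻¹} : Set Γ) := by
  have hd' : d⁻¹ = d := inv_eq_of_mul_eq_one_left hd
  have hi' : i⁻¹ = i := inv_eq_of_mul_eq_one_left hi
  have hiL' : i * L⁻¹ * i = L := by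
    rw [← hiL]
    simp only [mul_assoc, hi, mul_one]
    rw [← mul_assoc, hi, one_mul]
  have hR : i * (d * L * d) * i = d * L⁻¹ * d := by
    rw [← hdL]
    simp only [mul_assoc, hd, mul_one]
    rw [← mul_assoc d d, hd, one_mul]
  have hR' : i * (d * L⁻¹ * d) * i = d * L * d := by
    rw [← hR]
    simp only [mul_assoc, hi, mul_one]
    rw [← mul_assoc, hi, one_mul]
  have hinv : (d * L * d)⁻¹ = d * L⁻¹ * d := by
    simp only [_root_.mul_inv_rev, hd', mul_assoc]
  have hdd : ∀ z : Γ, d * (d * z * d) * d = z := fun z => by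
    simp only [mul_assoc, hd, mul_one]
    rw [← mul_assoc, hd, one_mul]
  rw [hinv] at hy ⊢
  have hstep : ∀ y ∈ ({L, d * L * d, L⁻¹, d * L⁻¹ * d} : Set Γ),
      d * y * d ∈ ({L, d * L * d, L⁻¹, d * L⁻¹ * d} : Set Γ) ∧
        i * y * i ∈ ({L, d * L * d, L⁻¹, d * L⁻¹ * d} : Set Γ) := by
    rintro y (rfl | rfl | rfl | rfl)
    · rw [hiL]; simp
    · rw [hdd, hR]; simp
    · rw [hiL']; simp
    · rw [hdd, hR']; simp
  induction hx using Subgroup.closure_induction_left generalizing y with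
  | one => simpa using hy
  | mul_left x hx z _ ih =>
    rw [show (x * z)⁻¹ * y * (x * z) = z⁻¹ * (x⁻¹ * y * x) * z by group]
    rcases hx with rfl | rfl
    · rw [hd']; exact ih (hstep y hy).1
    · rw [hi']; exact ih (hstep y hy).2
  | inv_mul_cancel x hx z _ ih =>
    rw [show (x⁻¹ * z)⁻¹ * y * (x⁻¹ * z) = z⁻¹ * (x * y * x⁻¹) * z by group]
    rcases hx with rfl | rfl
    · rw [hd']; exact ih (hstep y hy).1
    · rw [hi']; exact ih (hstep y hy).2

/-- In a group generated by `d`, `i` and `L` satisfying relations of `GL(2, ℤ)`, every element is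
a positive word in `L` and `d * L * d` up to elements generated by `d` and `i`. -/
lemma exists_normalForm (hd : d * d = 1) (hi : i * i = 1) (hiL : i * L * i = L⁻¹)
    (hdL : d * i * d * L * (d * i * d) = L⁻¹) (hLR : L⁻¹ * (d * L * d) = d * i * L) {g : Γ}
    (hg : g ∈ Subgroup.closure {d, i, L}) :
    ∃ x ∈ Subgroup.closure {d, i}, ∃ p ∈ Submonoid.closure {L, d * L * d},
      ∃ y ∈ Subgroup.closure {d, i}, g = x * p * y := by
  have hd' : d⁻¹ = d := inv_eq_of_mul_eq_one_left hd
  have hdm : d ∈ Subgroup.closure {d, i} := Subgroup.subset_closure (by simp)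
  have him : i ∈ Subgroup.closure {d, i} := Subgroup.subset_closure (by simp)
  have hLm : L ∈ Submonoid.closure {L, d * L * d} := Submonoid.subset_closure (by simp)
  have hRm : d * L * d ∈ Submonoid.closure {L, d * L * d} := Submonoid.subset_closure (by simp)
  have hconj : ∀ p ∈ Submonoid.closure {L, d * L * d},
      d * p * d ∈ Submonoid.closure {L, d * L * d} := by
    intro p hp
    induction hp using Submonoid.closure_induction_left with
    | one => rw [mul_one, hd]; exact one_mem _
    | mul_left x hx p _ ih =>
      rw [show d * (x * p) * d = d * x * d * (d⁻¹ * d⁻¹) * (d * p * d) by group, hd', hd, mul_one]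
      refine mul_mem ?_ ih
      rcases hx with rfl | rfl
      · exact hRm
      · rw [show d * (d * L * d) * d = d * d * L * (d * d) by group, hd, one_mul, mul_one]
        exact hLm
  have hLinv : ∀ p ∈ Submonoid.closure {L, d * L * d}, ∃ x ∈ Subgroup.closure {d, i},
      ∃ p' ∈ Submonoid.closure {L, d * L * d}, ∃ y ∈ Subgroup.closure {d, i},
        L⁻¹ * p = x * p' * y := by
    intro p hp
    induction hp using Submonoid.closure_induction_left with
    | one => exact ⟨i, him, L, hLm, i, him, by rw [mul_one, hiL]⟩
    | mul_left x hx p hp _ =>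
      rcases hx with rfl | rfl
      · exact ⟨1, one_mem _, p, hp, 1, one_mem _, by simp⟩
      · exact ⟨d * i, mul_mem hdm him, L * p, mul_mem hLm hp, 1, one_mem _, by
          rw [← mul_assoc, hLR]; group⟩
  have hletter : ∀ z ∈ ({L, d * L * d, L⁻¹, (d * L * d)⁻¹} : Set Γ),
      ∀ p ∈ Submonoid.closure {L, d * L * d}, ∃ x ∈ Subgroup.closure {d, i},
      ∃ p' ∈ Submonoid.closure {L, d * L * d}, ∃ y ∈ Subgroup.closure {d, i},
        z * p = x * p' * y := by
    rintro z (rfl | rfl | rfl | rfl) p hp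
    · exact ⟨1, one_mem _, _, mul_mem hLm hp, 1, one_mem _, by simp⟩
    · exact ⟨1, one_mem _, _, mul_mem hRm hp, 1, one_mem _, by simp⟩
    · exact hLinv p hp
    · obtain ⟨x, hx, p', hp', y, hy, h⟩ := hLinv _ (hconj p hp)
      refine ⟨d * x, mul_mem hdm hx, p', hp', y * d, mul_mem hy hdm, ?_⟩
      rw [show d * x * p' * (y * d) = d * (x * p' * y) * d by group, ← h,
        show d * (L⁻¹ * (d * p * d)) * d = d * L⁻¹ * d * p * (d * d) by group, hd, mul_one,
        _root_.mul_inv_rev, _root_.mul_inv_rev, hd']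
      simp only [mul_assoc]
  have hstep : ∀ z ∈ ({L, d * L * d, L⁻¹, (d * L * d)⁻¹} : Set Γ), ∀ g : Γ,
      (∃ x ∈ Subgroup.closure {d, i}, ∃ p ∈ Submonoid.closure {L, d * L * d},
        ∃ y ∈ Subgroup.closure {d, i}, g = x * p * y) →
      ∃ x ∈ Subgroup.closure {d, i}, ∃ p ∈ Submonoid.closure {L, d * L * d},
        ∃ y ∈ Subgroup.closure {d, i}, z * g = x * p * y := by
    rintro z hz g ⟨x, hx, p, hp, y, hy, rfl⟩
    obtain ⟨x', hx', p', hp', y', hy', h⟩ :=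
      hletter _ (conj_mem_letters hd hi hiL hdL hx hz) p hp
    refine ⟨x * x', mul_mem hx hx', p', hp', y' * y, mul_mem hy' hy, ?_⟩
    rw [show x * x' * p' * (y' * y) = x * (x' * p' * y') * y by group, ← h]
    group
  have hD : ∀ z ∈ Subgroup.closure {d, i}, ∀ g : Γ,
      (∃ x ∈ Subgroup.closure {d, i}, ∃ p ∈ Submonoid.closure {L, d * L * d},
        ∃ y ∈ Subgroup.closure {d, i}, g = x * p * y) →
      ∃ x ∈ Subgroup.closure {d, i}, ∃ p ∈ Submonoid.closure {L, d * L * d},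
        ∃ y ∈ Subgroup.closure {d, i}, z * g = x * p * y := by
    rintro z hz g ⟨x, hx, p, hp, y, hy, rfl⟩
    exact ⟨z * x, mul_mem hz hx, p, hp, y, hy, by simp only [mul_assoc]⟩
  induction hg using Subgroup.closure_induction_left with
  | one => exact ⟨1, one_mem _, 1, one_mem _, 1, one_mem _, by simp⟩
  | mul_left x hx g _ ih =>
    rcases hx with rfl | rfl | rfl
    · exact hD _ hdm g ih
    · exact hD _ him g ih
    · exact hstep _ (by simp) g ih
  | inv_mul_cancel x hx g _ ih =>
    rcases hx with rfl | rfl | rfl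
    · exact hD _ (inv_mem hdm) g ih
    · exact hD _ (inv_mem him) g ih
    · exact hstep _ (by simp) g ih

end NormalForm

section ExpMat

variable {Q : Type*} [Group Q] {π : FreeGroup (Fin 2) →* Q}

lemma map_endo_eq {X Y : FreeGroup (Fin 2)} {φ : MulAut Q} (hX : π X = φ (π xa))
    (hY : π Y = φ (π xb)) (w : FreeGroup (Fin 2)) : π (endo X Y w) = φ (π w) :=
  TorusRep.comp_endo hX hY w

/-- The action of automorphisms on exponent sums. -/
noncomputable def expHom (hπ : Function.Surjective π)
    (hσ : ∀ x y, π x = π y → ∀ i, σ i x = σ i y) : MulAut Q →* Matrix (Fin 2) (Fin 2) ℤ where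
  toFun φ := Matrix.of fun i j => σ i (Function.surjInv hπ (φ (π (FreeGroup.of j))))
  map_one' := by
    ext i j
    refine (hσ _ _ (Function.surjInv_eq hπ (π (FreeGroup.of j))) i).trans ?_
    fin_cases i <;> fin_cases j <;> simp [σ_xa, σ_xb]
  map_mul' φ ψ := by
    ext i j
    simp only [of_apply, mul_apply, Fin.sum_univ_two]
    set X := Function.surjInv hπ (φ (π (FreeGroup.of 0)))
    set Y := Function.surjInv hπ (φ (π (FreeGroup.of 1)))
    set w := Function.surjInv hπ (ψ (π (FreeGroup.of j))) with hw
    have h : π (endo X Y w) = φ (ψ (π (FreeGroup.of j))) := by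
      rw [map_endo_eq (Function.surjInv_eq hπ _) (Function.surjInv_eq hπ _), hw,
        Function.surjInv_eq hπ]
    rw [hσ _ (endo X Y w) (by rw [Function.surjInv_eq hπ, h]; rfl), σ_endo]
    ring

lemma expHom_apply {hπ : Function.Surjective π} {hσ : ∀ x y, π x = π y → ∀ i, σ i x = σ i y}
    {φ : MulAut Q} {w : FreeGroup (Fin 2)} {j : Fin 2} (h : φ (π (FreeGroup.of j)) = π w)
    (i : Fin 2) : expHom hπ hσ φ i j = σ i w :=
  hσ _ _ ((Function.surjInv_eq hπ _).trans h) i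

/-- The action of automorphisms of the free group on exponent sums. -/
noncomputable def expMat : MulAut (FreeGroup (Fin 2)) →* Matrix (Fin 2) (Fin 2) ℤ :=
  expHom (π := MonoidHom.id _) Function.surjective_id (fun _ _ h i => congrArg (σ i) h)

lemma expMat_apply (θ : MulAut (FreeGroup (Fin 2))) (i j : Fin 2) :
    expMat θ i j = σ i (θ (FreeGroup.of j)) :=
  expHom_apply (by rfl) i

lemma expMat_eq (θ : MulAut (FreeGroup (Fin 2))) :
    expMat θ = !![σ 0 (θ xa), σ 0 (θ xb); σ 1 (θ xa), σ 1 (θ xb)] := by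
  ext i j
  rw [expMat_apply]
  fin_cases i <;> fin_cases j <;> rfl

lemma expHom_eq_expMat {hπ : Function.Surjective π}
    {hσ : ∀ x y, π x = π y → ∀ i, σ i x = σ i y} {φ : MulAut Q} {θ : MulAut (FreeGroup (Fin 2))}
    (h : ∀ w, φ (π w) = π (θ w)) : expHom hπ hσ φ = expMat θ := by
  ext i j
  rw [expMat_apply, expHom_apply (h _)]

lemma expHom_conj (hπ : Function.Surjective π) (hσ : ∀ x y, π x = π y → ∀ i, σ i x = σ i y)
    (q : Q) : expHom hπ hσ (MulAut.conj q) = 1 := by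
  obtain ⟨g, rfl⟩ := hπ q
  rw [expHom_eq_expMat (θ := MulAut.conj g) (fun w => by simp), expMat_eq, one_fin_two]
  simp [σ_mul, σ_inv, σ_xa, σ_xb]

lemma expMat_conj (g : FreeGroup (Fin 2)) : expMat (MulAut.conj g) = 1 := expHom_conj _ _ g

lemma expMat_swapAut : expMat swapAut = !![0, 1; 1, 0] := by
  rw [expMat_eq]
  simp [σ_xa, σ_xb]

lemma expMat_invAut : expMat invAut = !![-1, 0; 0, 1] := by
  rw [expMat_eq]
  simp [σ_inv, σ_xa, σ_xb]

lemma expMat_transvAut : expMat transvAut = !![1, 0; 1, 1] := by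
  rw [expMat_eq]
  simp [σ_mul, σ_xa, σ_xb]

lemma mulAut_ext {θ η : MulAut (FreeGroup (Fin 2))} (ha : θ xa = η xa) (hb : θ xb = η xb) :
    θ = η :=
  MulEquiv.toMonoidHom_injective (monoidHom_ext ha hb)

lemma signedPerm {θ : MulAut (FreeGroup (Fin 2))} (hθ : θ ∈ Subgroup.closure {swapAut, invAut}) :
    ∃ k l : ℤ, (k = 1 ∨ k = -1) ∧ (l = 1 ∨ l = -1) ∧
      (θ xa = xa ^ k ∧ θ xb = xb ^ l ∨ θ xa = xb ^ k ∧ θ xb = xa ^ l) := by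
  have hsw : swapAut⁻¹ = swapAut := rfl
  have hinv : invAut⁻¹ = invAut := rfl
  have key : ∀ η ∈ ({swapAut, invAut} : Set (MulAut (FreeGroup (Fin 2)))), ∀ θ,
      (∃ k l : ℤ, (k = 1 ∨ k = -1) ∧ (l = 1 ∨ l = -1) ∧
        (θ xa = xa ^ k ∧ θ xb = xb ^ l ∨ θ xa = xb ^ k ∧ θ xb = xa ^ l)) →
      ∃ k l : ℤ, (k = 1 ∨ k = -1) ∧ (l = 1 ∨ l = -1) ∧
        ((η * θ) xa = xa ^ k ∧ (η * θ) xb = xb ^ l ∨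
          (η * θ) xa = xb ^ k ∧ (η * θ) xb = xa ^ l) := by
    rintro η (rfl | rfl) θ ⟨k, l, hk, hl, ⟨h1, h2⟩ | ⟨h1, h2⟩⟩
    · exact ⟨k, l, hk, hl, Or.inr (by simp [h1, h2])⟩
    · exact ⟨k, l, hk, hl, Or.inl (by simp [h1, h2])⟩
    · exact ⟨-k, l, by omega, hl, Or.inl (by simp [h1, h2])⟩
    · exact ⟨k, -l, hk, by omega, Or.inr (by simp [h1, h2])⟩
  induction hθ using Subgroup.closure_induction_left with
  | one => exact ⟨1, 1, by simp⟩
  | mul_left η hη θ _ ih => exact key η hη θ ih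
  | inv_mul_cancel η hη θ _ ih =>
    have : η⁻¹ = η := by
      rcases hη with rfl | rfl
      · exact hsw
      · exact hinv
    rw [this]
    exact key η hη θ ih

lemma signedPerm_sum_le {θ : MulAut (FreeGroup (Fin 2))}
    (hθ : θ ∈ Subgroup.closure {swapAut, invAut}) :
    expMat θ 0 0 + expMat θ 0 1 + (expMat θ 1 0 + expMat θ 1 1) ≤ 2 := by
  obtain ⟨k, l, hk, hl, ⟨h1, h2⟩ | ⟨h1, h2⟩⟩ := signedPerm hθ <;>
  · rw [expMat_eq, h1, h2]
    simp [σ_zpow, σ_xa, σ_xb]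
    omega

lemma signedPerm_eq_one {θ : MulAut (FreeGroup (Fin 2))}
    (hθ : θ ∈ Subgroup.closure {swapAut, invAut}) (h : expMat θ = 1) : θ = 1 := by
  obtain ⟨k, l, -, -, ⟨h1, h2⟩ | ⟨h1, h2⟩⟩ := signedPerm hθ
  · rw [expMat_eq, h1, h2, one_fin_two] at h
    have h00 := congrFun (congrFun h 0) 0
    have h11 := congrFun (congrFun h 1) 1
    simp [σ_zpow, σ_xa, σ_xb] at h00 h11
    exact mulAut_ext (by simp [h1, h00]) (by simp [h2, h11])
  · rw [expMat_eq, h1, h2, one_fin_two] at h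
    have h00 := congrFun (congrFun h 0) 0
    simp [σ_zpow, σ_xa, σ_xb] at h00

/-- The homomorphism induced by `expMat` on outer automorphisms. -/
noncomputable def outExpMat : Out (FreeGroup (Fin 2)) →* Matrix (Fin 2) (Fin 2) ℤ :=
  QuotientGroup.lift (innAut _) expMat (by
    rintro _ ⟨g, rfl⟩
    exact expMat_conj g)

lemma outExpMat_mk (θ : MulAut (FreeGroup (Fin 2))) :
    outExpMat (QuotientGroup.mk' (innAut _) θ) = expMat θ := rfl

lemma positive_sum {p : Out (FreeGroup (Fin 2))}
    (hp : p ∈ Submonoid.closure {QuotientGroup.mk' (innAut _) transvAut,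
      QuotientGroup.mk' (innAut _) swapAut * QuotientGroup.mk' (innAut _) transvAut *
        QuotientGroup.mk' (innAut _) swapAut}) :
    p = 1 ∨ 3 ≤ outExpMat p 0 0 + outExpMat p 0 1 + (outExpMat p 1 0 + outExpMat p 1 1) := by
  have key : (1 ≤ outExpMat p 0 0 + outExpMat p 0 1 ∧ 1 ≤ outExpMat p 1 0 + outExpMat p 1 1) ∧
      (p = 1 ∨ 3 ≤ outExpMat p 0 0 + outExpMat p 0 1 + (outExpMat p 1 0 + outExpMat p 1 1)) := by
    induction hp using Submonoid.closure_induction_left with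
    | one => simp
    | mul_left x hx p _ ih =>
      obtain ⟨⟨h0, h1⟩, -⟩ := ih
      rcases hx with rfl | rfl
      · simp only [map_mul, outExpMat_mk, expMat_transvAut, mul_apply, Fin.sum_univ_two]
        simp
        omega
      · simp only [map_mul, outExpMat_mk, expMat_transvAut, expMat_swapAut, mul_apply,
          Fin.sum_univ_two]
        simp
        omega
  exact key.2

/-- Tame automorphisms acting trivially on exponent sums are inner. -/
theorem mem_innAut_of_expMat {θ : MulAut (FreeGroup (Fin 2))} (hθ : θ ∈ tame)
    (h : expMat θ = 1) : θ ∈ innAut (FreeGroup (Fin 2)) := by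
  set q := QuotientGroup.mk' (innAut (FreeGroup (Fin 2))) with hq
  have hconj : ∀ g, q (MulAut.conj g) = 1 := fun g => (QuotientGroup.eq_one_iff _).2 ⟨g, rfl⟩
  have hmem : q θ ∈ Subgroup.closure {q swapAut, q invAut, q transvAut} := by
    have h1 : q θ ∈ Subgroup.map q tame := Subgroup.mem_map_of_mem _ hθ
    rw [tame, Subgroup.map_sup, MonoidHom.map_closure, hq, QuotientGroup.map_mk'_self, ← hq,
      bot_sup_eq] at h1
    simpa [Set.image_insert_eq] using h1
  obtain ⟨x, hx, p, hp, y, hy, hxy⟩ := exists_normalForm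
    (by rw [← map_mul, show swapAut * swapAut = 1 from mulAut_ext (by simp) (by simp), map_one])
    (by rw [← map_mul, show invAut * invAut = 1 from mulAut_ext (by simp) (by simp), map_one])
    (by
      rw [← map_mul, ← map_mul, ← map_inv]
      have : invAut * transvAut * invAut = MulAut.conj xb⁻¹ * transvAut⁻¹ := by
        rw [eq_mul_inv_iff_mul_eq]
        exact mulAut_ext (by simp) (by simp)
      rw [this, map_mul, hconj, one_mul])
    (by
      simp only [← map_mul, ← map_inv]
      congr 1
      rw [eq_inv_iff_mul_eq_one]
      exact mulAut_ext (by simp) (by simp))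
    (by
      simp only [← map_mul, ← map_inv]
      have : transvAut⁻¹ * (swapAut * transvAut * swapAut) =
          MulAut.conj xb * (swapAut * invAut * transvAut) := by
        rw [inv_mul_eq_iff_eq_mul]
        exact mulAut_ext (by simp) (by simp [mul_assoc])
      rw [this, map_mul, hconj, one_mul]) hmem
  have hD : ∀ z ∈ Subgroup.closure {q swapAut, q invAut},
      ∃ η ∈ Subgroup.closure {swapAut, invAut}, q η = z := by
    intro z hz
    rw [show ({q swapAut, q invAut} : Set _) = q '' {swapAut, invAut} by
      rw [Set.image_insert_eq, Set.image_singleton], ← MonoidHom.map_closure] at hz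
    exact hz
  obtain ⟨ξ, hξ, rfl⟩ := hD x hx
  obtain ⟨η, hη, rfl⟩ := hD y hy
  have hone : outExpMat (q θ) = 1 := h
  have hp' : outExpMat p = expMat (ξ⁻¹ * η⁻¹) := by
    rw [← outExpMat_mk, ← hq, show p = q ξ⁻¹ * q θ * q η⁻¹ by
      rw [hxy, map_inv, map_inv]; group, map_mul, map_mul, hone, mul_one, ← map_mul, ← map_mul]
  have hp1 : p = 1 := by
    refine (positive_sum (hp)).resolve_right fun h3 => ?_
    have := signedPerm_sum_le (mul_mem (inv_mem hξ) (inv_mem hη))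
    rw [← hp'] at this
    omega
  rw [hp1, mul_one, ← map_mul] at hxy
  have h1 : ξ * η = 1 := signedPerm_eq_one (mul_mem hξ hη) (by
    rw [← outExpMat_mk, ← hq, ← hxy, hone])
  rw [h1, map_one] at hxy
  exact (QuotientGroup.eq_one_iff _).1 hxy

end ExpMat

section Outer

/-- Tame automorphisms send `xc` to a conjugate of `xc` or of its inverse. -/
lemma tame_xc {θ : MulAut (FreeGroup (Fin 2))} (hθ : θ ∈ tame) :
    ∃ g, θ xc = g * xc * g⁻¹ ∨ θ xc = g * xc⁻¹ * g⁻¹ := by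
  let S : Subgroup (MulAut (FreeGroup (Fin 2))) :=
    { carrier := {θ | ∃ g, θ xc = g * xc * g⁻¹ ∨ θ xc = g * xc⁻¹ * g⁻¹}
      one_mem' := ⟨1, Or.inl (by simp)⟩
      mul_mem' := by
        rintro θ η ⟨g, hg⟩ ⟨h, hh⟩
        refine ⟨θ h * g, ?_⟩
        rcases hg with hg | hg <;> rcases hh with hh | hh <;>
          simp [MulAut.mul_apply, hg, hh, mul_assoc]
      inv_mem' := by
        rintro θ ⟨g, hg⟩
        refine ⟨θ⁻¹ g⁻¹, ?_⟩
        rcases hg with hg | hg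
        · left
          apply θ.injective
          simp only [map_mul, map_inv, MulAut.apply_inv_self, hg]
          group
        · right
          apply θ.injective
          simp only [map_mul, map_inv, MulAut.apply_inv_self, hg]
          group }
  have hle : tame ≤ S := by
    refine sup_le ?_ ((Subgroup.closure_le _).2 ?_)
    · rintro _ ⟨g, rfl⟩
      exact ⟨g, Or.inl rfl⟩
    · rintro η (rfl | rfl | rfl)
      · exact ⟨1, Or.inr (by simp [xc, mul_assoc])⟩
      · exact ⟨xa, Or.inr (by simp [xc, mul_assoc])⟩
      · exact ⟨xb⁻¹, Or.inl (by simp [xc, mul_assoc])⟩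
  exact hle hθ

lemma exists_tame_of_det_eq_one (g : Matrix.SpecialLinearGroup (Fin 2) ℤ) :
    ∃ θ ∈ tame, expMat θ = g.1 := by
  have hg : g ∈ Subgroup.closure {ModularGroup.S, ModularGroup.T} := by
    rw [SpecialLinearGroup.SL2Z_generators]
    trivial
  induction hg using Subgroup.closure_induction with
  | mem x hx =>
    rcases hx with rfl | rfl
    · refine ⟨invAut * swapAut, mul_mem invAut_mem_tame swapAut_mem_tame, ?_⟩
      rw [map_mul, expMat_invAut, expMat_swapAut, mul_fin_two]
      simp [ModularGroup.S]
    · refine ⟨swapAut * transvAut * swapAut,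
        mul_mem (mul_mem swapAut_mem_tame transvAut_mem_tame) swapAut_mem_tame, ?_⟩
      rw [map_mul, map_mul, expMat_transvAut, expMat_swapAut, mul_fin_two, mul_fin_two]
      simp [ModularGroup.T]
  | one => exact ⟨1, one_mem _, map_one _⟩
  | mul x y _ _ hx hy =>
    obtain ⟨θ, hθ, h1⟩ := hx
    obtain ⟨η, hη, h2⟩ := hy
    exact ⟨θ * η, mul_mem hθ hη, by rw [map_mul, h1, h2]; rfl⟩
  | inv x _ hx =>
    obtain ⟨θ, hθ, h1⟩ := hx
    refine ⟨θ⁻¹, inv_mem hθ, ?_⟩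
    refine left_inv_eq_right_inv (a := expMat θ) ?_ ?_
    · rw [← map_mul, inv_mul_cancel, map_one]
    · rw [h1]
      exact congrArg Subtype.val (mul_inv_cancel x)

lemma exists_tame_of_isUnit_det {M : Matrix (Fin 2) (Fin 2) ℤ} (h : IsUnit M.det) :
    ∃ θ ∈ tame, expMat θ = M := by
  rcases Int.isUnit_iff.1 h with h | h
  · exact exists_tame_of_det_eq_one ⟨M, h⟩
  · obtain ⟨θ, hθ, h1⟩ := exists_tame_of_det_eq_one ⟨M * !![-1, 0; 0, 1], by
      rw [det_mul, h, det_fin_two_of]; norm_num⟩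
    refine ⟨θ * invAut, mul_mem hθ invAut_mem_tame, ?_⟩
    rw [map_mul, h1, expMat_invAut]
    change M * _ * _ = M
    rw [mul_assoc, mul_fin_two]
    simp [← one_fin_two]

variable {Q : Type*} [Group Q] {π : FreeGroup (Fin 2) →* Q} {n : ℕ}

lemma tame_map_ker (hker : π.ker = Subgroup.normalClosure {xc ^ n})
    {θ : MulAut (FreeGroup (Fin 2))} (hθ : θ ∈ tame) : π.ker ≤ (π.comp θ.toMonoidHom).ker := by
  have hn : π xc ^ n = 1 := by
    rw [← map_pow, ← MonoidHom.mem_ker, hker]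
    exact Subgroup.subset_normalClosure rfl
  conv_lhs => rw [hker]
  refine Subgroup.normalClosure_le_normal ?_
  rintro _ rfl
  change π (θ (xc ^ n)) = 1
  obtain ⟨g, h | h⟩ := tame_xc hθ
  · rw [map_pow, h, conj_pow, map_mul, map_mul π, map_pow, hn, mul_one, ← map_mul, mul_inv_cancel,
      map_one]
  · rw [map_pow, h, conj_pow, map_mul, map_mul π, map_pow, map_inv, inv_pow, hn, inv_one, mul_one,
      ← map_mul, mul_inv_cancel, map_one]

/-- Tame automorphisms of the free group descend to the quotient by a power of `xc`. -/
lemma exists_induced (hπ : Function.Surjective π)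
    (hker : π.ker = Subgroup.normalClosure {xc ^ n}) {θ : MulAut (FreeGroup (Fin 2))}
    (hθ : θ ∈ tame) : ∃ φ : MulAut Q, ∀ w, φ (π w) = π (θ w) := by
  have hF : ∀ θ ∈ tame, ∃ F : Q →* Q, ∀ w, F (π w) = π (θ w) := fun θ hθ =>
    ⟨π.liftOfSurjective hπ ⟨π.comp θ.toMonoidHom, tame_map_ker hker hθ⟩,
      MonoidHom.liftOfRightInverse_comp_apply _ _ _ _⟩
  obtain ⟨F, h1⟩ := hF θ hθ
  obtain ⟨F', h2⟩ := hF θ⁻¹ (inv_mem hθ)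
  refine ⟨MonoidHom.toMulEquiv F F' ?_ ?_, h1⟩
  · ext q
    obtain ⟨w, rfl⟩ := hπ q
    simp [h1, h2]
  · ext q
    obtain ⟨w, rfl⟩ := hπ q
    simp [h1, h2]

/-- If every automorphism of the quotient `Q` of the free group by a power of `xc` is tame, the
outer automorphism group of `Q` is `GL(2, ℤ)`. -/
theorem nonempty_out_equiv (hπ : Function.Surjective π)
    (hσ : ∀ x y, π x = π y → ∀ i, σ i x = σ i y)
    (hker : π.ker = Subgroup.normalClosure {xc ^ n})
    (htame : ∀ φ : MulAut Q, ∃ θ ∈ tame, ∀ w, φ (π w) = π (θ w)) :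
    Nonempty (Out Q ≃* Matrix.GeneralLinearGroup (Fin 2) ℤ) := by
  let E : MulAut Q →* Matrix.GeneralLinearGroup (Fin 2) ℤ := (expHom hπ hσ).toHomUnits
  have hE : ∀ φ, (E φ : Matrix (Fin 2) (Fin 2) ℤ) = expHom hπ hσ φ := fun _ => rfl
  have hsurj : Function.Surjective E := by
    intro M
    obtain ⟨θ, hθ, h⟩ := exists_tame_of_isUnit_det ((isUnit_iff_isUnit_det _).1 M.isUnit)
    obtain ⟨φ, hφ⟩ := exists_induced hπ hker hθ
    exact ⟨φ, Units.ext (by rw [hE, expHom_eq_expMat hφ, h])⟩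
  have hE_ker : E.ker = innAut Q := by
    ext φ
    rw [MonoidHom.mem_ker, Units.ext_iff, hE, Units.val_one]
    constructor
    · intro h
      obtain ⟨θ, hθ, hφ⟩ := htame φ
      rw [expHom_eq_expMat hφ] at h
      obtain ⟨g, rfl⟩ := mem_innAut_of_expMat hθ h
      refine ⟨π g, ?_⟩
      ext q
      obtain ⟨w, rfl⟩ := hπ q
      simp [hφ]
    · rintro ⟨q, rfl⟩
      exact expHom_conj hπ hσ q
  exact ⟨(QuotientGroup.quotientMulEquivOfEq hE_ker.symm).trans
    (QuotientGroup.quotientKerEquivOfSurjective E hsurj)⟩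

end Outer

section RootOfUnity

/-- A complex number whose order modulo signs is `n` (infinite for `n = 0`). -/
lemma exists_order (n : ℕ) : ∃ ζ : ℂ, ζ ≠ 0 ∧ (∀ j : ℤ, ζ ^ (2 * j) = 1 → (n : ℤ) ∣ j) ∧
    (∀ j : ℤ, ζ ^ (2 * j + 1) ≠ -1) ∧ ζ ^ (2 * (n : ℤ)) = 1 := by
  rcases Nat.eq_zero_or_pos n with rfl | hn
  · refine ⟨2, two_ne_zero, fun j hj => ?_, fun j hj => ?_, by simp⟩
    · have h : (2 : ℝ) ^ (2 * j) = 1 := by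
        apply Complex.ofReal_injective
        push_cast
        exact hj
      rw [zpow_eq_one_iff_right₀ (by norm_num) (by norm_num)] at h
      simpa using h
    · have h : (2 : ℝ) ^ (2 * j + 1) = -1 := by
        apply Complex.ofReal_injective
        push_cast
        exact hj
      have : (0 : ℝ) < 2 ^ (2 * j + 1) := by positivity
      linarith
  rcases Nat.even_or_odd n with he | ho
  · have h := Complex.isPrimitiveRoot_exp (2 * n) (by omega)
    refine ⟨_, h.ne_zero (by omega), fun j hj => ?_, fun j hj => ?_, ?_⟩
    · have := (h.zpow_eq_one_iff_dvd _).1 hj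
      push_cast at this
      exact (mul_dvd_mul_iff_left two_ne_zero).1 this
    · have h2 : Complex.exp (2 * Real.pi * Complex.I / (2 * n : ℕ)) ^ (2 * (2 * j + 1)) = 1 := by
        rw [mul_comm (2 : ℤ) (2 * j + 1), _root_.zpow_mul, hj]
        norm_num
      have := (h.zpow_eq_one_iff_dvd _).1 h2
      push_cast at this
      have h3 := (mul_dvd_mul_iff_left two_ne_zero).1 this
      obtain ⟨k, rfl⟩ := he
      push_cast at h3
      obtain ⟨l, hl⟩ := h3
      have : 2 * j + 1 = 2 * (k * l) := by rw [hl]; ring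
      omega
    · exact (h.zpow_eq_one_iff_dvd _).2 (by push_cast; rfl)
  · have h := Complex.isPrimitiveRoot_exp n (by omega)
    refine ⟨_, h.ne_zero (by omega), fun j hj => ?_, fun j hj => ?_, ?_⟩
    · have := (h.zpow_eq_one_iff_dvd _).1 hj
      refine IsCoprime.dvd_of_dvd_mul_left ?_ this
      exact_mod_cast Nat.isCoprime_iff_coprime.2 (Nat.coprime_two_right.2 ho)
    · have h1 : ((-1 : ℂ)) ^ n = 1 := by
        rw [← hj, ← zpow_natCast, ← _root_.zpow_mul]
        exact (h.zpow_eq_one_iff_dvd _).2 (dvd_mul_left _ _)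
      rw [ho.neg_one_pow] at h1
      norm_num at h1
    · exact (h.zpow_eq_one_iff_dvd _).2 (dvd_mul_left _ _)

end RootOfUnity

section Chebyshev

variable {k : Type*} [Field k] {ζ : k}

/-- The coefficients of the powers of a matrix with eigenvalues `ζ` and `ζ⁻¹`. -/
def cheb (ζ : k) (j : ℤ) : k := (ζ ^ j - ζ ^ (-j)) / (ζ - ζ⁻¹)

lemma sub_inv_ne_zero (h0 : ζ ≠ 0) (h1 : ζ ^ 2 ≠ 1) : ζ - ζ⁻¹ ≠ 0 := by
  intro h
  apply h1
  field_simp at h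
  linear_combination h

lemma cheb_zero : cheb ζ 0 = 0 := by simp [cheb]

lemma cheb_one (h0 : ζ ≠ 0) (h1 : ζ ^ 2 ≠ 1) : cheb ζ 1 = 1 := by
  simp [cheb, div_self (sub_inv_ne_zero h0 h1)]

lemma cheb_neg (j : ℤ) : cheb ζ (-j) = -cheb ζ j := by
  simp only [cheb, neg_neg]
  ring

lemma cheb_add_one (h0 : ζ ≠ 0) (j : ℤ) :
    cheb ζ (j + 1) = (ζ + ζ⁻¹) * cheb ζ j - cheb ζ (j - 1) := by
  simp only [cheb, _root_.zpow_neg, zpow_add_one₀ h0, zpow_sub_one₀ h0]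
  have := zpow_ne_zero j h0
  rw [← mul_div_assoc, ← sub_div]
  congr 1
  field_simp
  ring

lemma zpow_of_cheb (h0 : ζ ≠ 0) (h1 : ζ ^ 2 ≠ 1) {j : ℤ} (h : cheb ζ j = 0) :
    ζ ^ (2 * j) = 1 := by
  rw [cheb, div_eq_zero_iff, or_iff_left (sub_inv_ne_zero h0 h1), sub_eq_zero] at h
  rw [two_mul, zpow_add₀ h0]
  nth_rw 1 [h]
  rw [← zpow_add₀ h0, neg_add_cancel, zpow_zero]

lemma cheb_of_zpow (h0 : ζ ≠ 0) {j : ℤ} (h : ζ ^ (2 * j) = 1) : cheb ζ j = 0 := by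
  have : ζ ^ j = ζ ^ (-j) := by
    rw [← mul_one (ζ ^ (-j)), ← h, ← zpow_add₀ h0]
    congr 1
    ring
  rw [cheb, this, sub_self, zero_div]

lemma cheb_sub (h0 : ζ ≠ 0) (h1 : ζ ^ 2 ≠ 1) (j : ℤ) :
    (cheb ζ j - cheb ζ (j - 1)) * (1 + ζ) = ζ ^ j + ζ ^ (1 - j) := by
  have h2 := sub_inv_ne_zero h0 h1
  rw [show (1 : ℤ) - j = -(j - 1) by ring]
  simp only [cheb, _root_.zpow_neg, zpow_sub_one₀ h0]
  have := zpow_ne_zero j h0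
  rw [← sub_div, div_mul_eq_mul_div, div_eq_iff h2]
  field_simp
  ring

lemma cheb_sub_one_of_zpow (h0 : ζ ≠ 0) (h1 : ζ ^ 2 ≠ 1) {j : ℤ} (h : ζ ^ (2 * j) = 1) :
    cheb ζ (j - 1) = 1 ∨ cheb ζ (j - 1) = -1 := by
  have h2 := cheb_sub h0 h1 j
  rw [cheb_of_zpow h0 h, zero_sub] at h2
  have hs : ζ ^ j * ζ ^ j = 1 := by rw [← zpow_add₀ h0, ← two_mul, h]
  have h3 : 1 + ζ ≠ 0 := fun h4 => h1 (by linear_combination (ζ - 1) * h4)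
  have h5 : ζ ^ (1 - j) = ζ * ζ ^ j := by
    rw [zpow_sub₀ h0, zpow_one, div_eq_iff (zpow_ne_zero j h0), mul_assoc, hs, mul_one]
  rw [h5] at h2
  have h6 : cheb ζ (j - 1) = -ζ ^ j := mul_right_cancel₀ h3 (by linear_combination -h2)
  rcases mul_self_eq_one_iff.1 hs with h7 | h7 <;> rw [h6, h7] <;> simp

/-- Powers of a matrix in terms of its trace. -/
lemma mat_zpow {K : Type*} [Field K] (i : k →+* K) (h0 : ζ ≠ 0) (h1 : ζ ^ 2 ≠ 1)
    {M : Matrix.SpecialLinearGroup (Fin 2) K} (hM : (mat M).trace = i (ζ + ζ⁻¹)) (j : ℤ) :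
    mat (M ^ j) = i (cheb ζ j) • mat M - i (cheb ζ (j - 1)) • (1 : Matrix (Fin 2) (Fin 2) K) := by
  have hdet := mat_det M
  rw [trace_fin_two] at hM
  have hsq : mat M * mat M = i (ζ + ζ⁻¹) • mat M - 1 := by
    rw [← hM]
    ext a b
    fin_cases a <;> fin_cases b <;> simp [Matrix.mul_apply, Fin.sum_univ_two] <;>
      first | ring1 | linear_combination -hdet
  have hinv : mat M⁻¹ = i (ζ + ζ⁻¹) • 1 - mat M := by
    rw [← hM, mat_inv]
    ext a b
    fin_cases a <;> fin_cases b <;> simp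
  induction j using Int.induction_on with
  | zero =>
    rw [zpow_zero, map_one, cheb_zero, zero_sub, cheb_neg, cheb_one h0 h1]
    simp
  | succ n ih =>
    rw [_root_.zpow_add_one, map_mul, ih, sub_mul, smul_mul_assoc, hsq, cheb_add_one h0,
      add_sub_cancel_right]
    simp only [map_sub, map_mul, smul_mul_assoc, one_mul]
    module
  | pred n ih =>
    have hrec := cheb_add_one h0 (-(n : ℤ) - 1)
    rw [sub_add_cancel] at hrec
    have hMM : mat M * mat M⁻¹ = 1 := by rw [← map_mul, mul_inv_cancel, map_one]
    rw [_root_.zpow_sub_one, map_mul, ih, sub_mul, smul_mul_assoc, smul_mul_assoc, one_mul, hMM,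
      hinv, show cheb ζ (-(n : ℤ) - 1 - 1) = (ζ + ζ⁻¹) * cheb ζ (-(n : ℤ) - 1) - cheb ζ (-n) by
        rw [hrec]; ring]
    simp only [map_sub, map_mul]
    module

end Chebyshev

section Matrices

variable {K₀ : Type*} [Field K₀] {q g : K₀}

/-- The image of the commutator of the generators. -/
def commMat (q g : K₀) : Matrix.SpecialLinearGroup (Fin 2) K₀ :=
  ⟨!![1 + g * q, 1; -g * (1 + g * q * (1 + q)), 1 - g - g * q], by rw [det_fin_two_of]; ring⟩

/-- The image of the second generator, up to a diagonal matrix. -/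
def letterMat (q g : K₀) : Matrix.SpecialLinearGroup (Fin 2) K₀ :=
  ⟨!![1 + g * q * (1 + q), 1 + q; g * q, 1], by rw [det_fin_two_of]; ring⟩

/-- Diagonal matrices of determinant one. -/
def diagMat {K : Type*} [Field K] {s : K} (hs : s ≠ 0) : Matrix.SpecialLinearGroup (Fin 2) K :=
  ⟨!![s, 0; 0, s⁻¹], by simp [hs]⟩

lemma mat_commMat : mat (commMat q g) =
    !![1 + g * q, 1; -g * (1 + g * q * (1 + q)), 1 - g - g * q] := rfl

lemma mat_letterMat : mat (letterMat q g) = !![1 + g * q * (1 + q), 1 + q; g * q, 1] := rfl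

lemma mat_diagMat {K : Type*} [Field K] {s : K} (hs : s ≠ 0) :
    mat (diagMat hs) = !![s, 0; 0, s⁻¹] := rfl

lemma trace_commMat : (mat (commMat q g)).trace = 2 - g := by
  rw [mat_commMat, trace_fin_two_of]
  ring

lemma mat_conj_commMat : mat (letterMat q g * commMat q g * (letterMat q g)⁻¹) =
    !![1 - g - g * q, 1 + g * q * (1 + q); -g, 1 + g * q] := by
  rw [map_mul, map_mul, mat_inv, mat_letterMat, mat_commMat]
  ext i j
  fin_cases i <;> fin_cases j <;> simp [Matrix.mul_apply, Fin.sum_univ_two] <;> ring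

lemma conj_diagMat {s : K₀} (hs : s ≠ 0) (hq : q * (s ^ 2 - 1) = 1) :
    (letterMat q g)⁻¹ * diagMat hs * letterMat q g = diagMat hs * commMat q g := by
  rw [mul_assoc, inv_mul_eq_iff_eq_mul, ← mat_inj]
  simp only [map_mul, mat_letterMat, mat_commMat, mat_diagMat]
  ext i j
  fin_cases i <;> fin_cases j <;> simp [Matrix.mul_apply, Fin.sum_univ_two] <;> field_simp
  · linear_combination (-g * (1 + g * q * (1 + q))) * hq
  · linear_combination (1 - g * (1 + q)) * hq
  · linear_combination (-g * (1 + g * q)) * hq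
  · linear_combination -g * hq

end Matrices

section Construction

variable {Q K₀ K Γ₀ Γ₁ : Type*} [Group Q] [Field K₀] [Field K]
  [LinearOrderedCommGroupWithZero Γ₀] [LinearOrderedCommGroupWithZero Γ₁]
  {π : FreeGroup (Fin 2) →* Q} {v₀ : Valuation K₀ Γ₀} {v : Valuation K Γ₁}
  {f : K₀ →+* K} {s : K₀} {t : K} {n : ℕ} {ζ : ℂ} {i : ℂ →+* K₀}

lemma val_one_add {x : K₀} (hx : v₀ x < 1) : v₀ (1 + x) = 1 := by
  rw [v₀.map_add_eq_of_lt_left (by simpa using hx), map_one]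

lemma val_inv_sq_sub_one (hs : 1 < v₀ s) : v₀ (s ^ 2 - 1)⁻¹ < 1 := by
  have h : 1 < v₀ (s ^ 2) := by
    rw [map_pow]
    exact one_lt_pow₀ hs two_ne_zero
  rw [map_inv₀, v₀.map_sub_eq_of_lt_left (by rwa [map_one])]
  exact inv_lt_one_of_one_lt₀ h

lemma closure_zpowers_sup (E : Subgroup (FreeGroup (Fin 2))) :
    Subgroup.closure (((Subgroup.zpowers xb ⊔ E : Subgroup _) : Set (FreeGroup (Fin 2))) ∪ {xa}) =
      ⊤ := by
  rw [eq_top_iff, ← FreeGroup.closure_range_of, Subgroup.closure_le]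
  rintro _ ⟨j, rfl⟩
  refine Subgroup.subset_closure ?_
  fin_cases j
  · exact Or.inr rfl
  · exact Or.inl (Subgroup.mem_sup_left (Subgroup.mem_zpowers xb))

/-- Ping-pong for the representation sending `xa` to a diagonal matrix of large entry and `xb` to a
matrix of eigenvalues `ζ` and `ζ⁻¹` with residually generic entries. -/
lemma diagPong_rep {ψ : FreeGroup (Fin 2) →* FreeGroup (Fin 2)}
    {A M : Matrix.SpecialLinearGroup (Fin 2) K₀} (h0 : ζ ≠ 0) (h1 : ζ ^ 2 ≠ 1)
    (hval : ∀ c ≠ 0, v₀ (i c) = 1) (hs : 1 < v₀ s) (hA : mat A = !![s, 0; 0, s⁻¹])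
    (hsign : ∀ e ∈ (π.comp ψ).ker, mat (rep A M e) = 1 ∨ mat (rep A M e) = -1)
    (hdvd : ∀ j : ℤ, ζ ^ (2 * j) = 1 → π xc ^ j = 1) (hneg : ∀ j : ℤ, ζ ^ (2 * j + 1) ≠ -1)
    (hψ : ψ xb = xc) (htr : (mat M).trace = i (ζ + ζ⁻¹))
    (hdiag : v₀ (mat M 0 0 - 1) < 1 ∨ v₀ (mat M 1 1 - 1) < 1)
    (h01 : v₀ (mat M 0 1) = 1) (h10 : v₀ (mat M 1 0) = 1) :
    DiagPong v₀ (rep A M) (Subgroup.zpowers xb ⊔ (π.comp ψ).ker) (π.comp ψ).ker xa s := by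
  have hmem : ∀ h ∈ Subgroup.zpowers xb ⊔ (π.comp ψ).ker, ∃ j : ℤ,
      (h ∉ (π.comp ψ).ker → ζ ^ (2 * j) ≠ 1) ∧ Same (mat (rep A M h)) (mat (M ^ j)) := by
    intro h hh
    obtain ⟨_, ⟨j, rfl⟩, e, he, rfl⟩ := Subgroup.mem_sup_of_normal_right.1 hh
    refine ⟨j, fun hj hz => hj (mul_mem ?_ he), ?_⟩
    · rw [MonoidHom.mem_ker]
      simpa [hψ] using hdvd j hz
    · simp only [map_mul, map_zpow, rep_xb]
      rcases hsign e he with h | h <;> rw [h]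
      · exact Or.inl (mul_one _)
      · exact Or.inr (mul_neg_one _)
  have hle : ∀ c, v₀ (i c) ≤ 1 := by
    intro c
    rcases eq_or_ne c 0 with rfl | hc
    · simp
    · exact (hval c hc).le
  have hne : ∀ j, cheb ζ j - cheb ζ (j - 1) ≠ 0 := by
    intro j h
    have h2 := cheb_sub h0 h1 j
    rw [h, zero_mul] at h2
    apply hneg (j - 1)
    rw [show 2 * (j - 1) + 1 = j - (1 - j) by ring, zpow_sub₀ h0,
      div_eq_iff (zpow_ne_zero _ h0)]
    linear_combination -h2
  have hunit : ∀ x, v₀ (x - 1) < 1 → ∀ j, v₀ (i (cheb ζ j) * x - i (cheb ζ (j - 1))) = 1 ∧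
      v₀ (i (cheb ζ j) * (i (ζ + ζ⁻¹) - x) - i (cheb ζ (j - 1))) = 1 := by
    intro x hx j
    have h2 : v₀ (i (cheb ζ j) * (x - 1)) < 1 := by
      rw [map_mul]
      exact mul_lt_one_of_nonneg_of_lt_one_right (hle _) zero_le hx
    constructor
    · rw [show i (cheb ζ j) * x - i (cheb ζ (j - 1)) =
        i (cheb ζ j - cheb ζ (j - 1)) + i (cheb ζ j) * (x - 1) by rw [map_sub]; ring,
        v₀.map_add_eq_of_lt_left (by rwa [hval _ (hne j)]), hval _ (hne j)]
    · have hne' := hne (j + 1)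
      rw [add_sub_cancel_right] at hne'
      have hrec := cheb_add_one h0 j
      rw [show i (cheb ζ j) * (i (ζ + ζ⁻¹) - x) - i (cheb ζ (j - 1)) =
        i (cheb ζ (j + 1) - cheb ζ j) - i (cheb ζ j) * (x - 1) by
          rw [hrec]; simp only [map_sub, map_mul]; ring,
        v₀.map_sub_eq_of_lt_left (by rwa [hval _ hne']), hval _ hne']
  have hsame : ∀ {M N : Matrix (Fin 2) (Fin 2) K₀}, Same M N → ∀ a b, v₀ (M a b) = v₀ (N a b) := by
    rintro M N (rfl | rfl) a b
    · rfl
    · rw [Matrix.neg_apply, Valuation.map_neg]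
  have hdiag' : ∀ h ∈ Subgroup.zpowers xb ⊔ (π.comp ψ).ker, ∀ a, v₀ (mat (rep A M h) a a) = 1 := by
    intro h hh a
    obtain ⟨j, -, hj⟩ := hmem h hh
    rw [hsame hj, mat_zpow i h0 h1 htr]
    rw [trace_fin_two] at htr
    rcases hdiag with hd | hd
    · obtain ⟨e1, e2⟩ := hunit _ hd j
      rw [← htr, add_sub_cancel_left] at e2
      fin_cases a
      · simpa using e1
      · simpa using e2
    · obtain ⟨e1, e2⟩ := hunit _ hd j
      rw [← htr, add_sub_cancel_right] at e2
      fin_cases a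
      · simpa using e2
      · simpa using e1
  refine ⟨hs, inferInstance, le_sup_right, closure_zpowers_sup _, hsign, hdiag', ?_, ?_⟩
  · intro h hh hE a b
    obtain ⟨j, hj1, hj⟩ := hmem h hh
    have hc : v₀ (i (cheb ζ j)) = 1 := hval _ fun h => hj1 hE (zpow_of_cheb h0 h1 h)
    rcases eq_or_ne a b with rfl | hab
    · exact hdiag' h hh a
    · rw [hsame hj, mat_zpow i h0 h1 htr]
      fin_cases a <;> fin_cases b <;> simp_all
  · rw [rep_xa, hA]

/-- The representation used to study the quotient `Q` of the free group by the `n`-th power of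
`xc`. -/
theorem exists_torusRep (hπ : Function.Surjective π)
    (hker : π.ker = Subgroup.normalClosure {xc ^ n}) (hn : n ≠ 1)
    (h0 : ζ ≠ 0) (hdvd : ∀ j : ℤ, ζ ^ (2 * j) = 1 → (n : ℤ) ∣ j)
    (hneg : ∀ j : ℤ, ζ ^ (2 * j + 1) ≠ -1) (hpow : ζ ^ (2 * (n : ℤ)) = 1)
    (hval : ∀ c ≠ 0, v₀ (i c) = 1) (hs : 1 < v₀ s) (hf : ∀ x ≠ 0, v (f x) = 1) (ht : 1 < v t) :
    ∃ A C B₀ : Matrix.SpecialLinearGroup (Fin 2) K₀,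
      ∃ ρ : FreeGroup (Fin 2) →* Matrix.SpecialLinearGroup (Fin 2) K,
        TorusRep π v₀ v f s t A C B₀ ρ ∧ (mat (ρ xc)).trace = f (i (ζ + ζ⁻¹)) := by
  have h1 : ζ ^ 2 ≠ 1 := by
    intro h
    have h2 : (n : ℤ) ∣ 1 := hdvd 1 (by rw [mul_one]; exact_mod_cast h)
    exact hn (by exact_mod_cast Int.eq_one_of_dvd_one (by positivity) h2)
  have hs0 : s ≠ 0 := fun h => by simp [h] at hs
  have ht0 : t ≠ 0 := fun h => by simp [h] at ht
  obtain ⟨q, hq⟩ : ∃ q, q = (s ^ 2 - 1)⁻¹ := ⟨_, rfl⟩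
  have hvq : v₀ q < 1 := hq ▸ val_inv_sq_sub_one hs
  have hs1 : s ^ 2 - 1 ≠ 0 := by
    intro h
    have h2 : s ^ 2 = 1 := sub_eq_zero.1 h
    have h3 : 1 < v₀ s ^ 2 := one_lt_pow₀ hs two_ne_zero
    rw [← map_pow, h2, map_one] at h3
    exact lt_irrefl _ h3
  have hqs : q * (s ^ 2 - 1) = 1 := by rw [hq, inv_mul_cancel₀ hs1]
  have hκ : 2 - (ζ + ζ⁻¹) ≠ 0 := by
    intro h
    apply h1
    field_simp at h
    have h2 : (ζ - 1) ^ 2 = 0 := by linear_combination -h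
    have h3 := pow_eq_zero_iff two_ne_zero |>.1 h2
    linear_combination (ζ + 1) * h3
  obtain ⟨g, hg⟩ : ∃ g, g = i (2 - (ζ + ζ⁻¹)) := ⟨_, rfl⟩
  have hvg : v₀ g = 1 := hg ▸ hval _ hκ
  have hgt : 2 - g = i (ζ + ζ⁻¹) := by rw [hg, map_sub, map_ofNat]; ring
  have hvgq : v₀ (g * q) < 1 := by rwa [map_mul, hvg, one_mul]
  have hvδ : v₀ (1 + g * q * (1 + q)) = 1 := by
    refine val_one_add ?_
    rwa [map_mul, val_one_add hvq, mul_one]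
  set A := diagMat hs0 with hA
  set C := commMat q g with hC
  set B₀ := letterMat q g with hB
  have hconj : B₀⁻¹ * A * B₀ = A * C := conj_diagMat hs0 hqs
  let ρ : FreeGroup (Fin 2) →* Matrix.SpecialLinearGroup (Fin 2) K :=
    rep (scal f A) (diagMat ht0 * scal f B₀)
  have ha : ρ xa = scal f A := rep_xa _ _
  have hb : mat (ρ xb) = !![t, 0; 0, t⁻¹] * mat (scal f B₀) := by
    rw [← mat_diagMat ht0, ← map_mul]
    exact congrArg mat (rep_xb _ _)
  have hc : ρ xc = scal f C := scal_eq_map_xc ht0 (mat_diagMat hs0) hconj ha hb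
  have htrC : (mat C).trace = i (ζ + ζ⁻¹) := trace_commMat.trans hgt
  have hπn : π xc ^ n = 1 := by
    rw [← map_pow, ← MonoidHom.mem_ker, hker]
    exact Subgroup.subset_normalClosure rfl
  have hπj : ∀ j : ℤ, ζ ^ (2 * j) = 1 → π xc ^ j = 1 := by
    intro j hj
    obtain ⟨l, rfl⟩ := hdvd j hj
    rw [_root_.zpow_mul, zpow_natCast, hπn, _root_.one_zpow]
  have hCn : mat (C ^ n) = 1 ∨ mat (C ^ n) = -1 := by
    have := mat_zpow i h0 h1 htrC n
    rw [zpow_natCast, cheb_of_zpow h0 hpow, map_zero, zero_smul, zero_sub] at this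
    rw [this]
    rcases cheb_sub_one_of_zpow h0 h1 hpow with h | h <;> rw [h] <;> simp
  have hsign : ∀ e ∈ π.ker, mat (ρ e) = 1 ∨ mat (ρ e) = -1 := by
    let N : Subgroup (FreeGroup (Fin 2)) :=
      { carrier := {e | mat (ρ e) = 1 ∨ mat (ρ e) = -1}
        one_mem' := Or.inl (by simp)
        mul_mem' := by
          rintro x y (hx | hx) (hy | hy) <;> simp [hx, hy]
        inv_mem' := by
          rintro x (hx | hx) <;> simp only [Set.mem_ofPred_eq, map_inv, mat_inv, hx]
          · left; simp [Matrix.one_fin_two]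
          · right; simp [Matrix.one_fin_two] }
    have hN : N.Normal := ⟨by
      rintro x hx y
      have hy : mat (ρ y) * mat (ρ y⁻¹) = 1 := by rw [← map_mul, ← map_mul]; simp
      rcases hx with hx | hx
      · left; rw [map_mul, map_mul, map_mul, map_mul, hx, mul_one, hy]
      · right; rw [map_mul, map_mul, map_mul, map_mul, hx, mul_neg_one, neg_mul, hy]⟩
    have hle : π.ker ≤ N := by
      rw [hker]
      refine Subgroup.normalClosure_le_normal (Set.singleton_subset_iff.2 ?_)
      change mat (ρ (xc ^ n)) = 1 ∨ mat (ρ (xc ^ n)) = -1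
      rw [map_pow, hc, ← map_pow]
      refine hCn.imp (fun h => ?_) (fun h => ?_) <;> ext a b <;> rw [mat_scal, h] <;>
        fin_cases a <;> fin_cases b <;> simp
    exact fun e he => hle he
  have hscal : ∀ M : Matrix.SpecialLinearGroup (Fin 2) K₀,
      mat (scal f M) = 1 ∨ mat (scal f M) = -1 → mat M = 1 ∨ mat M = -1 := by
    intro M hM
    refine hM.imp (fun h => ?_) (fun h => ?_) <;> ext a b <;> apply f.injective <;>
      rw [← mat_scal, h] <;> fin_cases a <;> fin_cases b <;> simp
  refine ⟨A, C, B₀, ρ, ⟨?_, ?_, hconj, ha, hb, hsign, hf, ht, hπ, ?_, ?_, ?_⟩, ?_⟩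
  · refine diagPong_rep h0 h1 hval hs (mat_diagMat hs0) (fun e he => hscal _ ?_) hπj hneg incl_xb
      htrC (Or.inl ?_) ?_ ?_
    · rw [← map_incl ha hc]
      exact hsign _ he
    · rw [hC, mat_commMat]
      simpa using hvgq
    · rw [hC, mat_commMat]
      simp
    · rw [hC, mat_commMat]
      simpa [hvg] using hvδ
  · refine diagPong_rep h0 h1 hval hs (mat_diagMat hs0) (fun e he => hscal _ ?_) hπj hneg incl'_xb
      ?_ (Or.inr ?_) ?_ ?_
    · rw [← map_incl' hconj ha hc]
      have hy : mat (scal f B₀) * mat (scal f B₀)⁻¹ = 1 := by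
        rw [← map_mul, mul_inv_cancel, map_one]
      rcases hsign _ he with h | h
      · left; rw [map_mul, map_mul, h, mul_one, hy]
      · right; rw [map_mul, map_mul, h, mul_neg_one, neg_mul, hy]
    · rw [mat_conj_commMat, trace_fin_two_of, ← hgt]
      ring
    · rw [mat_conj_commMat]
      simpa using hvgq
    · rw [mat_conj_commMat]
      simpa using hvδ
    · rw [mat_conj_commMat]
      simpa using hvg
  · intro e he k
    have hle : π.ker ≤ (expSum k).ker := by
      rw [hker]
      refine Subgroup.normalClosure_le_normal (Set.singleton_subset_iff.2 ?_)
      change σ k (xc ^ n) = 0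
      rw [σ_pow, σ_xc, mul_zero]
    exact hle he
  · intro h
    have h2 := hscal C (hc ▸ hsign _ h)
    rcases h2 with h2 | h2 <;> simpa [hC, mat_commMat] using congrFun (congrFun h2 0) 1
  · intro j hj
    have htrA : (mat A).trace ≠ 0 := by
      rw [hA, mat_diagMat, trace_fin_two_of]
      intro h
      have h2 : v₀ s = v₀ s⁻¹ := by
        rw [← v₀.map_neg s⁻¹, ← eq_neg_of_add_eq_zero_left h]
      rw [map_inv₀] at h2
      exact lt_asymm hs (h2 ▸ inv_lt_one_of_one_lt₀ hs)
    have htrAC : (mat A * mat C).trace = (mat A).trace := by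
      rw [← map_mul, ← hconj, map_mul, trace_mul_comm, ← map_mul, mul_inv_cancel_left]
    have htr : (mat (A * C ^ j)).trace = i (cheb ζ j - cheb ζ (j - 1)) * (mat A).trace := by
      rw [map_mul, mat_zpow i h0 h1 htrC, mul_sub, trace_sub, Matrix.mul_smul, Matrix.mul_smul,
        mul_one, trace_smul, trace_smul, htrAC, smul_eq_mul, smul_eq_mul, map_sub, sub_mul]
    have hd : cheb ζ j - cheb ζ (j - 1) = 1 ∨ cheb ζ j - cheb ζ (j - 1) = -1 := by
      rw [htr] at hj
      refine hj.imp (fun h => ?_) (fun h => ?_) <;> apply i.injective <;>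
        refine mul_right_cancel₀ htrA (h.trans ?_) <;> simp
    have hx := zpow_ne_zero j h0
    have h2 := cheb_sub h0 h1 j
    rw [zpow_sub₀ h0, zpow_one] at h2
    have key : (ζ ^ (2 * j) - 1) * (ζ ^ (2 * j) - ζ ^ 2) = 0 := by
      rw [two_mul, zpow_add₀ h0]
      rcases hd with h | h <;> rw [h] at h2 <;> field_simp at h2
      · linear_combination (-(ζ ^ j + 1) * (ζ ^ j + ζ)) * h2
      · linear_combination (-(ζ ^ j - 1) * (ζ ^ j - ζ)) * h2
    rcases mul_eq_zero.1 key with h | h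
    · exact Or.inl (hπj j (sub_eq_zero.1 h))
    · right
      have h3 : ζ ^ (2 * (j - 1)) = 1 := by
        rw [mul_sub, mul_one, zpow_sub₀ h0, sub_eq_zero.1 h]
        exact div_self (pow_ne_zero 2 h0)
      rw [← sub_add_cancel j 1, _root_.zpow_add_one, hπj _ h3, one_mul]
  · rw [hc, trace_scal, htrC]

end Construction

section RationalFunctions

variable (F : Type*) [Field F]

open Classical in
/-- The valuation at infinity of the field of rational functions. -/
noncomputable def degVal : Valuation (RatFunc F) (WithZero (Multiplicative ℤ)) :=
  RatFunc.inftyValuation F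

open Classical in
lemma degVal_C {k : F} (hk : k ≠ 0) : degVal F (RatFunc.C k) = 1 :=
  RatFunc.inftyValuation.C F hk

lemma one_lt_degVal_X : 1 < degVal F RatFunc.X := by
  rw [degVal, RatFunc.inftyValuation.X]
  decide

end RationalFunctions

/-- Automorphisms of the quotient of the free group by a power of the commutator lift to the free
group. -/
theorem exists_tame_lift {Q : Type*} [Group Q] {π : FreeGroup (Fin 2) →* Q} {n : ℕ}
    (hπ : Function.Surjective π) (hker : π.ker = Subgroup.normalClosure {xc ^ n}) (hn : 1 < n) :
    (∀ x y, π x = π y → ∀ i, σ i x = σ i y) ∧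
      ∀ φ : MulAut Q, ∃ θ ∈ tame, ∀ w, φ (π w) = π (θ w) := by
  obtain ⟨ζ, h0, hdvd, hneg, hpow⟩ := exists_order n
  obtain ⟨A, C, B₀, ρ, H, -⟩ := exists_torusRep (v₀ := degVal ℂ) (v := degVal (RatFunc ℂ))
    (f := RatFunc.C) (i := RatFunc.C) hπ hker hn.ne' h0 hdvd hneg hpow (fun _ => degVal_C ℂ)
    (one_lt_degVal_X ℂ) (fun _ => degVal_C _) (one_lt_degVal_X _)
  refine ⟨fun x y h => H.σ_congr h, H.exists_tame (H.integralTrace_of_pow (n := n) (by omega) ?_)⟩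
  rw [← map_pow, ← MonoidHom.mem_ker, hker]
  exact Subgroup.subset_normalClosure rfl

lemma ker_id : (MonoidHom.id (FreeGroup (Fin 2))).ker = Subgroup.normalClosure {xc ^ 0} := by
  rw [pow_zero, eq_comm, eq_bot_iff.2 (Subgroup.normalClosure_le_normal (N := ⊥) (by simp)),
    MonoidHom.ker_id]

/-- Automorphisms of the free group of rank two are tame. -/
theorem mem_tame (φ : MulAut (FreeGroup (Fin 2))) : φ ∈ tame := by
  obtain ⟨ζ, h0, hdvd, hneg, hpow⟩ := exists_order 0
  obtain ⟨A, C, B₀, ρ, H, htr⟩ := exists_torusRep (π := MonoidHom.id _) (v₀ := degVal ℂ)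
    (v := degVal (RatFunc ℂ)) (f := RatFunc.C) (i := RatFunc.C) Function.surjective_id
    ker_id zero_ne_one h0 hdvd hneg hpow
    (fun _ => degVal_C ℂ) (one_lt_degVal_X ℂ) (fun _ => degVal_C _) (one_lt_degVal_X _)
  have hle : ∀ c : ℂ, degVal ℂ (RatFunc.C c) ≤ 1 := by
    intro c
    rcases eq_or_ne c 0 with rfl | hc
    · simp
    · exact (degVal_C ℂ hc).le
  obtain ⟨θ, hθ, h⟩ := H.exists_tame (integralTrace_id RatFunc.C hle htr) φ
  rwa [show φ = θ from MulEquiv.ext h]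

end TorusGroup

theorem statement_18 (n : ℕ) (hn : 1 < n) :
    (∀ φ : MulAut (FreeGroup (Fin 2)),
      ∃ ψ : MulAut (PresentedGroup
        ({((FreeGroup.of (0 : Fin 2))⁻¹ * (FreeGroup.of (1 : Fin 2))⁻¹ *
            FreeGroup.of (0 : Fin 2) * FreeGroup.of (1 : Fin 2)) ^ n} : Set (FreeGroup (Fin 2)))),
        ∀ w : FreeGroup (Fin 2),
          ψ (PresentedGroup.mk _ w) = PresentedGroup.mk _ (φ w)) ∧
    Nonempty (Out (PresentedGroup
        ({((FreeGroup.of (0 : Fin 2))⁻¹ * (FreeGroup.of (1 : Fin 2))⁻¹ *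
            FreeGroup.of (0 : Fin 2) * FreeGroup.of (1 : Fin 2)) ^ n} : Set (FreeGroup (Fin 2)))) ≃*
      Out (FreeGroup (Fin 2))) ∧
    Nonempty (Out (FreeGroup (Fin 2)) ≃* Matrix.GeneralLinearGroup (Fin 2) ℤ) := by
  have hker : (PresentedGroup.mk ({TorusGroup.xc ^ n} : Set (FreeGroup (Fin 2)))).ker =
      Subgroup.normalClosure {TorusGroup.xc ^ n} := QuotientGroup.ker_mk' _
  have hsurj := PresentedGroup.mk_surjective ({TorusGroup.xc ^ n} : Set (FreeGroup (Fin 2)))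
  obtain ⟨hσ, htame⟩ := TorusGroup.exists_tame_lift hsurj hker hn
  obtain ⟨eP⟩ := TorusGroup.nonempty_out_equiv hsurj hσ hker htame
  obtain ⟨eF⟩ := TorusGroup.nonempty_out_equiv (π := MonoidHom.id _) (n := 0)
    Function.surjective_id (fun x y h i => congrArg (σ i) h) TorusGroup.ker_id
    (fun φ => ⟨φ, TorusGroup.mem_tame φ, fun w => rfl⟩)
  exact ⟨fun φ => TorusGroup.exists_induced hsurj hker (TorusGroup.mem_tame φ),
    ⟨eP.trans eF.symm⟩, ⟨eF⟩⟩
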